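/- arXiv:2403.14319 — 6 statements merged into one kernel-verified Lean document; each statement's English description precedes it below -/
import Mathlib

section
/- Under assumptions (1), (2), (3) on the quadratic integrals of the geodesic flow, and assuming in addition that the integrals are pairwise in involution, i.e. {I_α, I_β} = 0 on U × ℝⁿ for all α, β ∈ {1,…,n}, the integrals come locally from the Stäckel construction near almost every point: for almost every x₀ ∈ U (Lebesgue measure) there exist an open neighborhood V ⊆ U of x₀, an open set W ⊆ ℝⁿ, a smooth diffeomorphism φ : V → W with smooth inverse, and a smooth map S : W → (n×n real matrices) such that S(y) is invertible for every y ∈ W, the i-th row of S depends only on the i-th coordinate (i.e. (S(y))_{ij} = (S(y'))_{ij} for all j whenever y, y' ∈ W satisfy y_i = y'_i), and for every α ∈ {1,…,n}, every y ∈ W and every q ∈ ℝⁿ one has I_α(φ⁻¹(y), Dφ(φ⁻¹(y))ᵀ q) = ∑_{i=1}^n (S(y)⁻¹)_{α i} q_i², where Dφ(x) denotes the Jacobian matrix of φ at x. In particular the metric admits orthogonal separation of variables in the coordinates given by φ. -/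
open MeasureTheory Matrix

/-- The canonical Poisson bracket on the phase space `(Fin n → ℝ) × (Fin n → ℝ)`
with coordinates `(x, p)`. -/
noncomputable def poisson {n : ℕ} (f h : (Fin n → ℝ) × (Fin n → ℝ) → ℝ)
    (z : (Fin n → ℝ) × (Fin n → ℝ)) : ℝ :=
  ∑ i : Fin n,
    (fderiv ℝ f z (Pi.single i 1, 0) * fderiv ℝ h z (0, Pi.single i 1)
      - fderiv ℝ f z (0, Pi.single i 1) * fderiv ℝ h z (Pi.single i 1, 0))

/-- The Jacobian matrix of a map `φ : ℝⁿ → ℝⁿ` at a point `x`. -/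
noncomputable def jacobian {n : ℕ} (φ : (Fin n → ℝ) → (Fin n → ℝ)) (x : Fin n → ℝ) :
    Matrix (Fin n) (Fin n) ℝ :=
  fun i j => fderiv ℝ (fun x' => φ x' i) x (Pi.single j 1)

namespace Stk

/-- partial derivative -/
noncomputable def pd {n : ℕ} (a : Fin n) (f : (Fin n → ℝ) → ℝ) (x : Fin n → ℝ) : ℝ :=
  fderiv ℝ f x (Pi.single a 1)

/-- entrywise partial derivative of a matrix function -/
noncomputable def Dm {n : ℕ} (a : Fin n) (M : (Fin n → ℝ) → Matrix (Fin n) (Fin n) ℝ)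
    (x : Fin n → ℝ) : Matrix (Fin n) (Fin n) ℝ :=
  Matrix.of fun i j => pd a (fun y => M y i j) x

/-- smooth on `U` -/
def Sm {n : ℕ} (U : Set (Fin n → ℝ)) (f : (Fin n → ℝ) → ℝ) : Prop :=
  ContDiffOn ℝ (⊤ : ℕ∞) f U

/-- entrywise smooth -/
def Smm {n : ℕ} (U : Set (Fin n → ℝ)) (M : (Fin n → ℝ) → Matrix (Fin n) (Fin n) ℝ) : Prop :=
  ∀ i j, Sm U (fun x => M x i j)

variable {n : ℕ} {U : Set (Fin n → ℝ)}

theorem Sm.diff {f : (Fin n → ℝ) → ℝ} (hU : IsOpen U) (hf : Sm U f) {x} (hx : x ∈ U) :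
    DifferentiableAt ℝ f x :=
  ((ContDiffOn.contDiffAt hf (hU.mem_nhds hx)).differentiableAt (by simp))

theorem Sm.pd {f : (Fin n → ℝ) → ℝ} (hU : IsOpen U) (hf : Sm U f) (a : Fin n) :
    Sm U (pd a f) := by
  have h : ContDiffOn ℝ (⊤ : ℕ∞) (fderiv ℝ f) U :=
    ContDiffOn.fderiv_of_isOpen hf hU (by simp)
  exact h.clm_apply contDiffOn_const

theorem Sm.add {f g : (Fin n → ℝ) → ℝ} (hf : Sm U f) (hg : Sm U g) :
    Sm U (fun x => f x + g x) := ContDiffOn.add hf hg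
theorem Sm.sub {f g : (Fin n → ℝ) → ℝ} (hf : Sm U f) (hg : Sm U g) :
    Sm U (fun x => f x - g x) := ContDiffOn.sub hf hg
theorem Sm.mul {f g : (Fin n → ℝ) → ℝ} (hf : Sm U f) (hg : Sm U g) :
    Sm U (fun x => f x * g x) := ContDiffOn.mul hf hg
theorem Sm.const (c : ℝ) : Sm U (fun _ => c) := contDiffOn_const
theorem Sm.sum {ι : Type*} {s : Finset ι} {f : ι → (Fin n → ℝ) → ℝ} (hf : ∀ i ∈ s, Sm U (f i)) :
    Sm U (fun x => ∑ i ∈ s, f i x) := ContDiffOn.sum hf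
theorem Sm.prod {ι : Type*} {s : Finset ι} {f : ι → (Fin n → ℝ) → ℝ} (hf : ∀ i ∈ s, Sm U (f i)) :
    Sm U (fun x => ∏ i ∈ s, f i x) := contDiffOn_prod hf
theorem Sm.congr {f g : (Fin n → ℝ) → ℝ} (hf : Sm U f) (h : ∀ x ∈ U, g x = f x) : Sm U g :=
  ContDiffOn.congr hf h
theorem Sm.mono {f : (Fin n → ℝ) → ℝ} {V} (hf : Sm U f) (h : V ⊆ U) : Sm V f :=
  ContDiffOn.mono hf h

theorem Smm.mul {A B : (Fin n → ℝ) → Matrix (Fin n) (Fin n) ℝ} (hA : Smm U A) (hB : Smm U B) :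
    Smm U (fun x => A x * B x) := by
  intro i j
  simp only [Matrix.mul_apply]
  exact Sm.sum fun k _ => (hA i k).mul (hB k j)

theorem Smm.transpose {A : (Fin n → ℝ) → Matrix (Fin n) (Fin n) ℝ} (hA : Smm U A) :
    Smm U (fun x => (A x)ᵀ) := fun i j => hA j i

theorem Smm.det {m : Type*} [Fintype m] [DecidableEq m] {A : (Fin n → ℝ) → Matrix m m ℝ}
    (hA : ∀ i j, Sm U (fun x => A x i j)) : Sm U (fun x => (A x).det) := by
  simp only [Matrix.det_apply']
  exact Sm.sum fun σ _ => (Sm.const _).mul (Sm.prod fun i _ => hA _ _)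

theorem Smm.inv {m : Type*} [Fintype m] [DecidableEq m] {A : (Fin n → ℝ) → Matrix m m ℝ}
    (hA : ∀ i j, Sm U (fun x => A x i j)) (hd : ∀ x ∈ U, IsUnit (A x)) (i j) :
    Sm U (fun x => (A x)⁻¹ i j) := by
  have h1 : ∀ i j, Sm U (fun x => (A x).adjugate i j) := by
    intro i j
    simp only [Matrix.adjugate_apply]
    apply Smm.det
    intro k l
    by_cases hk : k = j
    · subst hk; simp only [Matrix.updateRow_self]; exact Sm.const _
    · simp only [Matrix.updateRow_ne hk]; exact hA _ _
  have h2 : Sm U (fun x => ((A x).det)⁻¹) := by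
    apply ContDiffOn.inv (Smm.det hA)
    intro x hx
    exact ((Matrix.isUnit_iff_isUnit_det _).1 (hd x hx)).ne_zero
  refine (h2.mul (h1 i j)).congr ?_
  intro x hx
  simp [Matrix.inv_def, Ring.inverse_eq_inv']

theorem pd_congr {f g : (Fin n → ℝ) → ℝ} (hU : IsOpen U) (h : ∀ x ∈ U, f x = g x) (a : Fin n)
    {x} (hx : x ∈ U) : pd a f x = pd a g x := by
  unfold Stk.pd
  rw [Filter.EventuallyEq.fderiv_eq]
  filter_upwards [hU.mem_nhds hx] with y hy using h y hy

theorem pd_add {f g : (Fin n → ℝ) → ℝ} {x} (a : Fin n) (hf : DifferentiableAt ℝ f x)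
    (hg : DifferentiableAt ℝ g x) : pd a (fun x => f x + g x) x = pd a f x + pd a g x := by
  unfold Stk.pd; rw [fderiv_fun_add hf hg]; rfl
theorem pd_sub {f g : (Fin n → ℝ) → ℝ} {x} (a : Fin n) (hf : DifferentiableAt ℝ f x)
    (hg : DifferentiableAt ℝ g x) : pd a (fun x => f x - g x) x = pd a f x - pd a g x := by
  unfold Stk.pd; rw [fderiv_fun_sub hf hg]; rfl
theorem pd_mul {f g : (Fin n → ℝ) → ℝ} {x} (a : Fin n) (hf : DifferentiableAt ℝ f x)
    (hg : DifferentiableAt ℝ g x) :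
    pd a (fun x => f x * g x) x = pd a f x * g x + f x * pd a g x := by
  unfold Stk.pd; rw [fderiv_fun_mul hf hg]; simp; ring
theorem pd_const_mul {f : (Fin n → ℝ) → ℝ} {x} (a : Fin n) (c : ℝ) (hf : DifferentiableAt ℝ f x) :
    pd a (fun x => c * f x) x = c * pd a f x := by
  unfold Stk.pd; rw [fderiv_const_mul hf]; rfl
theorem pd_const {x} (a : Fin n) (c : ℝ) :
    pd a (fun _ => c) x = 0 := by
  unfold Stk.pd; simp
theorem pd_sum {ι : Type*} {s : Finset ι} {f : ι → (Fin n → ℝ) → ℝ} {x} (a : Fin n)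
    (hf : ∀ i ∈ s, DifferentiableAt ℝ (f i) x) :
    pd a (fun x => ∑ i ∈ s, f i x) x = ∑ i ∈ s, pd a (f i) x := by
  unfold Stk.pd; rw [fderiv_fun_sum hf]; simp

theorem pd_comm {f : (Fin n → ℝ) → ℝ} (hU : IsOpen U) (hf : Sm U f) (a b : Fin n) {x} (hx : x ∈ U) :
    pd a (pd b f) x = pd b (pd a f) x := by
  have hc : ContDiffAt ℝ (⊤ : ℕ∞) f x := ContDiffOn.contDiffAt hf (hU.mem_nhds hx)
  have hs : IsSymmSndFDerivAt ℝ f x := hc.isSymmSndFDerivAt (by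
    simp only [minSmoothness_of_isRCLikeNormedField]
    exact WithTop.coe_le_coe.2 (le_top : (2 : ℕ∞) ≤ ⊤))
  have hd : DifferentiableAt ℝ (fderiv ℝ f) x := by
    have h : ContDiffOn ℝ (⊤ : ℕ∞) (fderiv ℝ f) U :=
      ContDiffOn.fderiv_of_isOpen hf hU (by simp)
    exact (h.contDiffAt (hU.mem_nhds hx)).differentiableAt (by simp)
  have key : ∀ a b : Fin n, pd a (pd b f) x
      = fderiv ℝ (fderiv ℝ f) x (Pi.single a 1) (Pi.single b 1) := by
    intro a b
    unfold Stk.pd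
    rw [fderiv_clm_apply hd (differentiableAt_const _)]
    simp
  rw [key, key]
  exact hs _ _

theorem fderiv_eq_sum {f : (Fin n → ℝ) → ℝ} {x} (v : Fin n → ℝ) :
    fderiv ℝ f x v = ∑ a, v a * pd a f x := by
  have : v = ∑ a, v a • (Pi.single a (1:ℝ) : Fin n → ℝ) := by
    ext i; simp [Finset.sum_apply, Pi.single_apply]
  conv_lhs => rw [this]
  simp [map_sum, Stk.pd]

theorem Dm_mul {A B : (Fin n → ℝ) → Matrix (Fin n) (Fin n) ℝ} (hU : IsOpen U) (hA : Smm U A)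
    (hB : Smm U B) (a : Fin n) {x} (hx : x ∈ U) :
    Dm a (fun x => A x * B x) x = Dm a A x * B x + A x * Dm a B x := by
  ext i j
  simp only [Dm, Matrix.of_apply, Matrix.mul_apply, Matrix.add_apply]
  rw [pd_sum a fun k _ => ((hA i k).mul (hB k j)).diff hU hx, ← Finset.sum_add_distrib]
  refine Finset.sum_congr rfl fun k _ => ?_
  rw [pd_mul a ((hA i k).diff hU hx) ((hB k j).diff hU hx)]

theorem Dm_transpose {A : (Fin n → ℝ) → Matrix (Fin n) (Fin n) ℝ} (a : Fin n) (x) :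
    Dm a (fun x => (A x)ᵀ) x = (Dm a A x)ᵀ := rfl

theorem Dm_congr {A B : (Fin n → ℝ) → Matrix (Fin n) (Fin n) ℝ} (hU : IsOpen U)
    (h : ∀ x ∈ U, A x = B x) (a : Fin n) {x} (hx : x ∈ U) : Dm a A x = Dm a B x := by
  ext i j
  exact pd_congr hU (fun x hx => by rw [h x hx]) a hx

theorem Dm_sum {ι : Type*} {s : Finset ι} {A : ι → (Fin n → ℝ) → Matrix (Fin n) (Fin n) ℝ}
    (hU : IsOpen U) (hA : ∀ i, Smm U (A i)) (c : ι → ℝ) (a : Fin n) {x} (hx : x ∈ U) :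
    Dm a (fun x => ∑ i ∈ s, c i • A i x) x = ∑ i ∈ s, c i • Dm a (A i) x := by
  ext i j
  simp only [Dm, Matrix.of_apply, Matrix.sum_apply, Matrix.smul_apply, smul_eq_mul]
  rw [pd_sum a fun k _ => ((Sm.const _).mul (hA k i j)).diff hU hx]
  refine Finset.sum_congr rfl fun k _ => ?_
  rw [pd_const_mul a _ ((hA k i j).diff hU hx)]

/-- value of the Poisson bracket of two quadratic functions -/
theorem poisson_quad {A B : (Fin n → ℝ) → Matrix (Fin n) (Fin n) ℝ} (hU : IsOpen U)
    (hA : Smm U A) (hB : Smm U B) (hAs : ∀ x ∈ U, (A x).IsSymm) (hBs : ∀ x ∈ U, (B x).IsSymm)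
    {x} (hx : x ∈ U) (p : Fin n → ℝ) :
    poisson (fun z => ∑ i : Fin n, ∑ j : Fin n, A z.1 i j * z.2 i * z.2 j)
      (fun z => ∑ i : Fin n, ∑ j : Fin n, B z.1 i j * z.2 i * z.2 j) (x, p)
      = 2 * ∑ k, (p ⬝ᵥ (Dm k A x *ᵥ p)) * (B x *ᵥ p) k
        - 2 * ∑ k, (p ⬝ᵥ (Dm k B x *ᵥ p)) * (A x *ᵥ p) k := by
  have key : ∀ {A : (Fin n → ℝ) → Matrix (Fin n) (Fin n) ℝ} (hA : Smm U A)
      (hAs : ∀ x ∈ U, (A x).IsSymm) (v w : Fin n → ℝ),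
      fderiv ℝ (fun z : (Fin n → ℝ) × (Fin n → ℝ) =>
        ∑ i : Fin n, ∑ j : Fin n, A z.1 i j * z.2 i * z.2 j) (x, p) (v, w)
      = ∑ i, ∑ j, fderiv ℝ (fun y => A y i j) x v * p i * p j + 2 * w ⬝ᵥ (A x *ᵥ p) := by
    intro A hA hAs v w
    have h1 : ∀ i j, HasFDerivAt (fun z : (Fin n → ℝ) × (Fin n → ℝ) => A z.1 i j * z.2 i * z.2 j)
        ((A x i j * p i) • ((ContinuousLinearMap.proj (R := ℝ) j).comp
            (ContinuousLinearMap.snd ℝ (Fin n → ℝ) (Fin n → ℝ))) +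
          p j • (A x i j • ((ContinuousLinearMap.proj (R := ℝ) i).comp
            (ContinuousLinearMap.snd ℝ (Fin n → ℝ) (Fin n → ℝ))) +
           p i • ((fderiv ℝ (fun y => A y i j) x).comp
            (ContinuousLinearMap.fst ℝ (Fin n → ℝ) (Fin n → ℝ))))) (x, p) := by
      intro i j
      have e1 : HasFDerivAt (fun z : (Fin n → ℝ) × (Fin n → ℝ) => A z.1 i j)
          ((fderiv ℝ (fun y => A y i j) x).comp
            (ContinuousLinearMap.fst ℝ (Fin n → ℝ) (Fin n → ℝ))) (x, p) :=
        HasFDerivAt.comp (x, p) (g := fun y => A y i j) ((hA i j).diff hU hx).hasFDerivAt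
          (hasFDerivAt_fst)
      have e2 : ∀ i, HasFDerivAt (fun z : (Fin n → ℝ) × (Fin n → ℝ) => z.2 i)
          ((ContinuousLinearMap.proj (R := ℝ) i).comp
            (ContinuousLinearMap.snd ℝ (Fin n → ℝ) (Fin n → ℝ))) (x, p) := by
        intro i
        exact ((ContinuousLinearMap.proj (R := ℝ) i).comp
            (ContinuousLinearMap.snd ℝ (Fin n → ℝ) (Fin n → ℝ))).hasFDerivAt
      exact (e1.mul (e2 i)).mul (e2 j)
    have h2 := HasFDerivAt.fun_sum (u := Finset.univ) fun i _ =>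
      HasFDerivAt.fun_sum (u := Finset.univ) fun j _ => h1 i j
    rw [h2.fderiv]
    simp only [_root_.sum_apply, _root_.add_apply,
      _root_.smul_apply, ContinuousLinearMap.comp_apply,
      ContinuousLinearMap.proj_apply, smul_eq_mul, ContinuousLinearMap.coe_snd',
      ContinuousLinearMap.coe_fst', mul_add, Finset.sum_add_distrib]
    have e3 : ∑ i, ∑ j, A x i j * p i * w j = w ⬝ᵥ (A x *ᵥ p) := by
      rw [Finset.sum_comm]
      simp only [dotProduct, mulVec, Finset.mul_sum]
      refine Finset.sum_congr rfl fun i _ => Finset.sum_congr rfl fun j _ => ?_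
      rw [← (hAs x hx).apply i j]; ring
    have e4 : ∑ i, ∑ j, p j * (A x i j * w i) = w ⬝ᵥ (A x *ᵥ p) := by
      simp only [dotProduct, mulVec, Finset.mul_sum]
      refine Finset.sum_congr rfl fun i _ => Finset.sum_congr rfl fun j _ => ?_
      ring
    have e5 : ∑ i, ∑ j, p j * (p i * (fderiv ℝ (fun y => A y i j) x) v)
        = ∑ i, ∑ j, fderiv ℝ (fun y => A y i j) x v * p i * p j := by
      refine Finset.sum_congr rfl fun i _ => Finset.sum_congr rfl fun j _ => ?_
      ring
    rw [e3, e4, e5]; ring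
  have q : ∀ (A : (Fin n → ℝ) → Matrix (Fin n) (Fin n) ℝ) (k : Fin n),
      ∑ i, ∑ j, fderiv ℝ (fun y => A y i j) x (Pi.single k 1) * p i * p j
        = p ⬝ᵥ (Dm k A x *ᵥ p) := by
    intro A k
    simp only [dotProduct, mulVec, Finset.mul_sum, Dm, Matrix.of_apply, Stk.pd]
    refine Finset.sum_congr rfl fun i _ => Finset.sum_congr rfl fun j _ => ?_
    ring
  unfold poisson
  simp only [key hA hAs, key hB hBs, q, map_zero, zero_mul, Finset.sum_const_zero, zero_add,
    zero_dotProduct, mul_zero, add_zero, single_one_dotProduct]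
  rw [Finset.sum_sub_distrib, Finset.mul_sum, Finset.mul_sum]
  congr 1
  · exact Finset.sum_congr rfl fun i _ => by ring
  · exact Finset.sum_congr rfl fun i _ => by ring

end Stk

namespace Stk
variable {n : ℕ} {U : Set (Fin n → ℝ)}

theorem uc_local {E F : Type*} [NormedAddCommGroup E] [NormedSpace ℝ E] [NormedAddCommGroup F]
    [NormedSpace ℝ F] {u : E → F} {x : E} (hd : ∀ᶠ y in nhds x, DifferentiableAt ℝ u y)
    (hO : (fderiv ℝ u) =O[nhds x] u) (h0 : u x = 0) : ∀ᶠ y in nhds x, u y = 0 := by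
  obtain ⟨C, hC⟩ := hO.bound
  obtain ⟨r, hr, hb⟩ := Metric.eventually_nhds_iff_ball.1 (hd.and hC)
  refine Metric.eventually_nhds_iff_ball.2 ⟨r, hr, fun y hy => ?_⟩
  have hmem : ∀ t ∈ Set.Icc (0:ℝ) 1, x + t • (y - x) ∈ Metric.ball x r := by
    intro t ht
    rw [mem_ball_iff_norm, add_sub_cancel_left, norm_smul, Real.norm_eq_abs, abs_of_nonneg ht.1]
    calc t * ‖y - x‖ ≤ 1 * ‖y - x‖ := by gcongr; exact ht.2
      _ < r := by rw [one_mul]; exact mem_ball_iff_norm.1 hy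
  have hder : ∀ t ∈ Set.Icc (0:ℝ) 1, HasDerivAt (fun t : ℝ => u (x + t • (y - x)))
      (fderiv ℝ u (x + t • (y - x)) (y - x)) t := by
    intro t ht
    have h1 : HasDerivAt (fun t : ℝ => x + t • (y - x)) (y - x) t := by
      simpa using ((hasDerivAt_id t).smul_const (y - x)).const_add x
    exact (hb _ (hmem t ht)).1.hasFDerivAt.comp_hasDerivAt t h1
  have := eq_zero_of_abs_deriv_le_mul_abs_self_of_eq_zero_right (K := C * ‖y - x‖)
    (f := fun t : ℝ => u (x + t • (y - x))) (a := 0) (b := 1)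
    (f' := fun t => fderiv ℝ u (x + t • (y - x)) (y - x))
    (fun t ht => (hder t ht).continuousAt.continuousWithinAt)
    (fun t ht => (hder t (Set.Ico_subset_Icc_self ht)).hasDerivWithinAt)
    (by simpa using h0) (by
      intro t ht
      have h2 := (hb _ (hmem t (Set.Ico_subset_Icc_self ht))).2
      calc _ ≤ ‖fderiv ℝ u (x + t • (y - x))‖ * ‖y - x‖ := ContinuousLinearMap.le_opNorm _ _
        _ ≤ (C * ‖u (x + t • (y - x))‖) * ‖y - x‖ := by gcongr
        _ = _ := by ring) 1 (by simp)
  simpa using this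

/-- classes of functions closed under smooth linear combinations -/
structure Good (U : Set (Fin n → ℝ)) (P : ((Fin n → ℝ) → ℝ) → Prop) : Prop where
  add : ∀ f g, P f → P g → P (fun x => f x + g x)
  mul : ∀ a f, Sm U a → P f → P (fun x => a x * f x)
  congr : ∀ f g, (∀ x ∈ U, f x = g x) → P f → P g
  zero : P (fun _ => 0)

theorem good_zero {x} (hx : x ∈ U) : Good U (fun f => f x = 0) where
  add f g hf hg := by simp only [hf, hg, add_zero]
  mul a f _ hf := by simp only [hf, mul_zero]
  congr f g h hf := by rw [← h x hx]; exact hf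
  zero := rfl

theorem good_bigO {F : Type*} [NormedAddCommGroup F] (u : (Fin n → ℝ) → F) (hU : IsOpen U)
    {x} (hx : x ∈ U) : Good U (fun f => f =O[nhds x] u) where
  add f g hf hg := hf.add hg
  mul a f ha hf := by
    have h1 : a =O[nhds x] (fun _ => (1:ℝ)) := (ha.diff hU hx).continuousAt.tendsto.isBigO_one ℝ
    have h2 := h1.mul hf.norm_right
    simp only [one_mul] at h2
    exact Asymptotics.isBigO_norm_right.1 h2
  congr f g h hf := by
    refine hf.congr' ?_ Filter.EventuallyEq.rfl
    filter_upwards [hU.mem_nhds hx] with y hy using h y hy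
  zero := Asymptotics.isBigO_zero _ _

/-- two-jets in the class `P` -/
structure Fl (U : Set (Fin n → ℝ)) (P : ((Fin n → ℝ) → ℝ) → Prop) (f : (Fin n → ℝ) → ℝ) :
    Prop where
  sm : Sm U f
  j0 : P f
  j1 : ∀ a, P (pd a f)
  j2 : ∀ a b, P (pd a (pd b f))

variable {P : ((Fin n → ℝ) → ℝ) → Prop}

theorem Fl.congr (hU : IsOpen U) (hP : Good U P) {f g} (hf : Fl U P f) (h : ∀ x ∈ U, f x = g x) :
    Fl U P g where
  sm := hf.sm.congr fun x hx => (h x hx).symm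
  j0 := hP.congr _ _ h hf.j0
  j1 a := hP.congr _ _ (fun x hx => pd_congr hU h a hx) (hf.j1 a)
  j2 a b := hP.congr _ _ (fun x hx => pd_congr hU (fun y hy => pd_congr hU h b hy) a hx) (hf.j2 a b)

theorem Fl.add (hU : IsOpen U) (hP : Good U P) {f g} (hf : Fl U P f) (hg : Fl U P g) :
    Fl U P (fun x => f x + g x) := by
  have h1 : ∀ a, ∀ x ∈ U, pd a f x + pd a g x = pd a (fun x => f x + g x) x :=
    fun a x hx => (pd_add a (hf.sm.diff hU hx) (hg.sm.diff hU hx)).symm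
  refine ⟨hf.sm.add hg.sm, hP.add _ _ hf.j0 hg.j0, fun a => ?_, fun a b => ?_⟩
  · exact hP.congr _ _ (h1 a) (hP.add _ _ (hf.j1 a) (hg.j1 a))
  · refine hP.congr _ _ (fun x hx => ?_) (hP.add _ _ (hf.j2 a b) (hg.j2 a b))
    rw [← pd_congr hU (h1 b) a hx, pd_add a ((hf.sm.pd hU b).diff hU hx) ((hg.sm.pd hU b).diff hU hx)]

theorem Fl.mul (hU : IsOpen U) (hP : Good U P) {f g} (hf : Sm U f) (hg : Fl U P g) :
    Fl U P (fun x => f x * g x) := by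
  have h1 : ∀ a, ∀ x ∈ U, pd a f x * g x + f x * pd a g x = pd a (fun x => f x * g x) x :=
    fun a x hx => (pd_mul a (hf.diff hU hx) (hg.sm.diff hU hx)).symm
  refine ⟨hf.mul hg.sm, hP.mul _ _ hf hg.j0, fun a => ?_, fun a b => ?_⟩
  · exact hP.congr _ _ (h1 a) (hP.add _ _ (hP.mul _ _ (hf.pd hU a) hg.j0) (hP.mul _ _ hf (hg.j1 a)))
  · refine hP.congr _ _ (fun x hx => ?_) (hP.add _ _
      (hP.add _ _ (hP.mul _ _ ((hf.pd hU b).pd hU a) hg.j0) (hP.mul _ _ (hf.pd hU b) (hg.j1 a)))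
      (hP.add _ _ (hP.mul _ _ (hf.pd hU a) (hg.j1 b)) (hP.mul _ _ hf (hg.j2 a b))))
    rw [← pd_congr hU (h1 b) a hx, pd_add a (((hf.pd hU b).mul hg.sm).diff hU hx)
      ((hf.mul (hg.sm.pd hU b)).diff hU hx), pd_mul a ((hf.pd hU b).diff hU hx) (hg.sm.diff hU hx),
      pd_mul a (hf.diff hU hx) ((hg.sm.pd hU b).diff hU hx)]

theorem Fl.sum {ι : Type*} {s : Finset ι} (hU : IsOpen U) (hP : Good U P)
    {f : ι → (Fin n → ℝ) → ℝ}
    (hf : ∀ i ∈ s, Fl U P (f i)) : Fl U P (fun x => ∑ i ∈ s, f i x) := by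
  classical
  induction s using Finset.induction_on with
  | empty =>
    simp only [Finset.sum_empty]
    have h0 : ∀ a : Fin n, pd a (fun _ => (0:ℝ)) = fun _ => 0 := by
      intro a; ext x; exact pd_const a 0
    exact ⟨Sm.const 0, hP.zero, fun a => by rw [h0]; exact hP.zero,
      fun a b => by rw [h0, h0]; exact hP.zero⟩
  | insert i s hi ih =>
    simp only [Finset.sum_insert hi]
    exact (hf i (by simp)).add hU hP (ih fun j hj => hf j (by simp [hj]))

theorem Good.sum {ι : Type*} {s : Finset ι} (hP : Good U P) {f : ι → (Fin n → ℝ) → ℝ}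
    (hf : ∀ i ∈ s, P (f i)) : P (fun x => ∑ i ∈ s, f i x) := by
  classical
  induction s using Finset.induction_on with
  | empty => simpa using hP.zero
  | insert i s hi ih =>
    simp only [Finset.sum_insert hi]
    exact hP.add _ _ (hf i (by simp)) (ih fun j hj => hf j (by simp [hj]))

/-- Petersen-graph linear algebra: third derivatives are controlled by the prolonged equations. -/
theorem petersen (X : Fin n → Fin n → Fin n → Fin n → Fin n → ℝ)
    (s1 : ∀ a b c d e, X a b c d e = X b a c d e) (s2 : ∀ a b c d e, X a b c d e = X a c b d e)
    (s3 : ∀ a b c d e, X a b c d e = X a b c e d)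
    (a b c d e : Fin n) :
    let Y := fun a b c d e => X a b c d e + X a b d e c + X a b e c d
    X a b c d e = (1/2) * (Y a b c d e + Y a c b d e + Y b c a d e + Y d e a b c)
      - (1/6) * (Y a b c d e + Y a c b d e + Y a d b c e + Y a e b c d + Y b c a d e
        + Y b d a c e + Y b e a c d + Y c d a b e + Y c e a b d + Y d e a b c) := by
  intro Y
  simp only [Y]
  have eabdec : X a b d e c = X a b d c e := by rw [s3 a b d e c]
  have eacbde : X a c b d e = X a b c d e := by rw [s2 a c b]
  have eacdeb : X a c d e b = X a c d b e := by rw [s3 a c d e b]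
  have eadbce : X a d b c e = X a b d c e := by rw [s2 a d b]
  have eadceb : X a d c e b = X a c d b e := by rw [s2 a d c, s3 a c d e b]
  have eaebcd : X a e b c d = X a b e c d := by rw [s2 a e b]
  have eaecdb : X a e c d b = X a c e b d := by rw [s2 a e c, s3 a c e d b]
  have eaedbc : X a e d b c = X a d e b c := by rw [s2 a e d]
  have ebcade : X b c a d e = X a b c d e := by rw [s2 b c a, s1 b a c]
  have ebcdea : X b c d e a = X b c d a e := by rw [s3 b c d e a]
  have ebdace : X b d a c e = X a b d c e := by rw [s2 b d a, s1 b a d]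
  have ebdcea : X b d c e a = X b c d a e := by rw [s2 b d c, s3 b c d e a]
  have ebeacd : X b e a c d = X a b e c d := by rw [s2 b e a, s1 b a e]
  have ebecda : X b e c d a = X b c e a d := by rw [s2 b e c, s3 b c e d a]
  have ebedac : X b e d a c = X b d e a c := by rw [s2 b e d]
  have ecdabe : X c d a b e = X a c d b e := by rw [s2 c d a, s1 c a d]
  have ecdbea : X c d b e a = X b c d a e := by rw [s2 c d b, s1 c b d, s3 b c d e a]
  have eceabd : X c e a b d = X a c e b d := by rw [s2 c e a, s1 c a e]
  have ecebda : X c e b d a = X b c e a d := by rw [s2 c e b, s1 c b e, s3 b c e d a]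
  have ecedab : X c e d a b = X c d e a b := by rw [s2 c e d]
  have edeabc : X d e a b c = X a d e b c := by rw [s2 d e a, s1 d a e]
  have edebca : X d e b c a = X b d e a c := by rw [s2 d e b, s1 d b e, s3 b d e c a]
  have edecab : X d e c a b = X c d e a b := by rw [s2 d e c, s1 d c e]
  rw [eabdec, eacbde, eacdeb, eadbce, eadceb, eaebcd, eaecdb, eaedbc, ebcade, ebcdea, ebdace, ebdcea, ebeacd, ebecda, ebedac, ecdabe, ecdbea, eceabd, ecebda, ecedab, edeabc, edebca, edecab]
  ring

end Stk

namespace Stk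
variable {n : ℕ} {U : Set (Fin n → ℝ)}

theorem uc_fin {J : Type*} [Fintype J] (hU : IsOpen U) (hUc : IsPreconnected U)
    (u : J → (Fin n → ℝ) → ℝ) (hs : ∀ j, Sm U (u j))
    (hO : ∀ x ∈ U, ∀ a j, pd a (u j) =O[nhds x] (fun y => fun j => u j y))
    {x0} (hx0 : x0 ∈ U) (h0 : ∀ j, u j x0 = 0) : ∀ x ∈ U, ∀ j, u j x = 0 := by
  set v : (Fin n → ℝ) → J → ℝ := fun y => fun j => u j y with hv
  have hdv : ∀ x ∈ U, DifferentiableAt ℝ v x := fun x hx =>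
    differentiableAt_pi.2 fun j => (hs j).diff hU hx
  have hloc : ∀ x ∈ U, v x = 0 → ∀ᶠ y in nhds x, v y = 0 := by
    intro x hx hvx
    refine uc_local ?_ ?_ hvx
    · filter_upwards [hU.mem_nhds hx] with y hy using hdv y hy
    · have h1 : (fun y => ∑ a : Fin n, ‖fderiv ℝ v y (Pi.single a 1)‖) =O[nhds x] v := by
        refine Asymptotics.IsBigO.fun_sum fun a _ => Asymptotics.IsBigO.norm_left ?_
        refine Asymptotics.isBigO_pi.2 fun j => ?_
        refine (hO x hx a j).congr' ?_ Filter.EventuallyEq.rfl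
        filter_upwards [hU.mem_nhds hx] with y hy
        rw [hv, fderiv_pi fun j => (hs j).diff hU hy]
        rfl
      refine Asymptotics.IsBigO.trans (Asymptotics.IsBigO.of_bound 1 ?_) h1
      filter_upwards with y
      rw [one_mul, Real.norm_of_nonneg (Finset.sum_nonneg fun _ _ => norm_nonneg _)]
      refine ContinuousLinearMap.opNorm_le_bound _ (Finset.sum_nonneg fun _ _ => norm_nonneg _) ?_
      intro w
      have hw : w = ∑ a, w a • (Pi.single a (1:ℝ) : Fin n → ℝ) := by
        ext i; simp [Finset.sum_apply, Pi.single_apply]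
      calc ‖fderiv ℝ v y w‖ = ‖∑ a, w a • fderiv ℝ v y (Pi.single a 1)‖ := by
            conv_lhs => rw [hw]
            simp [map_sum]
        _ ≤ ∑ a, ‖w a • fderiv ℝ v y (Pi.single a 1)‖ := norm_sum_le _ _
        _ ≤ ∑ a, ‖fderiv ℝ v y (Pi.single a 1)‖ * ‖w‖ := by
            refine Finset.sum_le_sum fun a _ => ?_
            rw [norm_smul, mul_comm]
            gcongr
            exact norm_le_pi_norm w a
        _ = _ := by rw [Finset.sum_mul]
  have hsub : U ⊆ interior {x | v x = 0} := by
    have hin : ∀ x ∈ U, v x = 0 → x ∈ interior {x | v x = 0} := fun x hx h =>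
      mem_interior_iff_mem_nhds.2 (hloc x hx h)
    refine hUc.subset_of_closure_inter_subset isOpen_interior
      ⟨x0, hx0, hin x0 hx0 (funext h0)⟩ ?_
    rintro x ⟨hxc, hx⟩
    refine hin x hx ?_
    have hcv : ContinuousAt v x := (hdv x hx).continuousAt
    by_contra hne
    have : ∀ᶠ y in nhds x, v y ≠ 0 := hcv.eventually_ne hne
    obtain ⟨y, hy1, hy2⟩ := mem_closure_iff_nhds.1 hxc _ this
    have hy3 : y ∈ {x | v x = 0} := interior_subset hy2
    exact hy1 hy3
  intro x hx j
  have hx3 : x ∈ {x | v x = 0} := interior_subset (hsub hx)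
  exact congrFun (show v x = 0 from hx3) j

theorem uc_sys (hU : IsOpen U) (hUc : IsPreconnected U)
    (l : (Fin n → ℝ) → Matrix (Fin n) (Fin n) ℝ) (hl : Smm U l) (hsym : ∀ x ∈ U, (l x).IsSymm)
    (ρ : Fin n → Fin n → Fin n → (Fin n → ℝ) → ℝ)
    (hρ : ∀ a b c, ∀ x ∈ U, pd a (fun y => l y b c) x + pd b (fun y => l y c a) x
      + pd c (fun y => l y a b) x = ρ a b c x)
    (hFl : ∀ P, Good U P → (∀ d e, Fl U P (fun y => l y d e)) → ∀ a b c, Fl U P (ρ a b c))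
    {x0} (hx0 : x0 ∈ U) (h0 : ∀ d e, Fl U (fun f => f x0 = 0) (fun y => l y d e)) :
    ∀ x ∈ U, l x = 0 := by
  let u : (Fin n × Fin n) ⊕ (Fin n × Fin n × Fin n) ⊕ (Fin n × Fin n × Fin n × Fin n) →
      (Fin n → ℝ) → ℝ := Sum.elim (fun p => fun y => l y p.1 p.2)
        (Sum.elim (fun p => pd p.1 (fun y => l y p.2.1 p.2.2))
          (fun p => pd p.1 (pd p.2.1 (fun y => l y p.2.2.1 p.2.2.2))))
  have hu : ∀ x ∈ U, ∀ j, u j x = 0 := by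
    refine uc_fin hU hUc u ?_ ?_ hx0 ?_
    · rintro (p | p | p)
      · exact hl _ _
      · exact (hl _ _).pd hU _
      · exact ((hl _ _).pd hU _).pd hU _
    · intro x hx
      have hG := good_bigO (fun y => fun j => u j y) hU hx
      have hc : ∀ j, u j =O[nhds x] (fun y => fun j => u j y) := by
        intro j
        refine Asymptotics.IsBigO.of_bound 1 ?_
        filter_upwards with y
        rw [one_mul]
        exact norm_le_pi_norm (fun j => u j y) j
      have hF : ∀ d e, Fl U (fun f => f =O[nhds x] (fun y => fun j => u j y))
          (fun y => l y d e) := fun d e =>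
        ⟨hl d e, hc (Sum.inl (d, e)), fun a => hc (Sum.inr (Sum.inl (a, d, e))),
          fun a b => hc (Sum.inr (Sum.inr (a, b, d, e)))⟩
      have hR := hFl _ hG hF
      rintro a (p | p | p)
      · exact (hF p.1 p.2).j1 a
      · exact (hF p.2.1 p.2.2).j2 a p.1
      · obtain ⟨b, c, d, e⟩ := p
        have h2 : ∀ a b c d e, ∀ y ∈ U, pd a (pd b (ρ c d e)) y =
            pd a (pd b (pd c (fun y => l y d e))) y + pd a (pd b (pd d (fun y => l y e c))) y
              + pd a (pd b (pd e (fun y => l y c d))) y := by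
          intro a b c d e y hy
          have s1 := (hl d e).pd hU c
          have s2 := (hl e c).pd hU d
          have s3 := (hl c d).pd hU e
          rw [← pd_congr hU (fun z hz => pd_congr hU (hρ c d e) b hz) a hy]
          rw [pd_congr hU (fun z hz => by
            rw [pd_add b ((s1.add s2).diff hU hz) (s3.diff hU hz),
              pd_add b (s1.diff hU hz) (s2.diff hU hz)]) a hy]
          rw [pd_add a (((s1.pd hU b).add (s2.pd hU b)).diff hU hy) ((s3.pd hU b).diff hU hy),
              pd_add a ((s1.pd hU b).diff hU hy) ((s2.pd hU b).diff hU hy)]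
        refine hG.congr (fun y => (1/2) * (pd a (pd b (ρ c d e)) y + pd a (pd c (ρ b d e)) y
           + pd b (pd c (ρ a d e)) y + pd d (pd e (ρ a b c)) y)
          + (-1/6) * (pd a (pd b (ρ c d e)) y + pd a (pd c (ρ b d e)) y + pd a (pd d (ρ b c e)) y
           + pd a (pd e (ρ b c d)) y + pd b (pd c (ρ a d e)) y + pd b (pd d (ρ a c e)) y
           + pd b (pd e (ρ a c d)) y + pd c (pd d (ρ a b e)) y + pd c (pd e (ρ a b d)) y
           + pd d (pd e (ρ a b c)) y)) _ ?_ ?_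
        · intro y hy
          have := petersen (fun a b c d e => pd a (pd b (pd c (fun y => l y d e))) y)
            (fun a b c d e => pd_comm hU ((hl d e).pd hU c) a b hy)
            (fun a b c d e => pd_congr hU (fun z hz => pd_comm hU (hl d e) b c hz) a hy)
            (fun a b c d e => pd_congr hU (fun z hz => pd_congr hU (fun w hw => pd_congr hU
              (fun t ht => ((hsym t ht).apply e d)) c hw) b hz) a hy) a b c d e
          simp only [h2 _ _ _ _ _ y hy]
          refine Eq.trans ?_ this.symm
          ring
        · have q : ∀ a b c d e, pd a (pd b (ρ c d e)) =O[nhds x] (fun y => fun j => u j y) :=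
            fun a b c d e => (hR c d e).j2 a b
          refine hG.add _ _ (hG.mul _ _ (Sm.const _) ?_) (hG.mul _ _ (Sm.const _) ?_)
          · exact (((q _ _ _ _ _).add (q _ _ _ _ _)).add (q _ _ _ _ _)).add (q _ _ _ _ _)
          · exact (((((((((q _ _ _ _ _).add (q _ _ _ _ _)).add (q _ _ _ _ _)).add
              (q _ _ _ _ _)).add (q _ _ _ _ _)).add (q _ _ _ _ _)).add (q _ _ _ _ _)).add
              (q _ _ _ _ _)).add (q _ _ _ _ _)).add (q _ _ _ _ _)
    · rintro (p | p | p)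
      · exact (h0 _ _).j0
      · exact (h0 _ _).j1 _
      · exact (h0 _ _).j2 _ _
  intro x hx
  ext d e
  exact hu x hx (Sum.inl (d, e))

theorem polar3 (T : Fin n → Fin n → Fin n → ℝ)
    (h : ∀ w : Fin n → ℝ, ∑ a, ∑ b, ∑ c, T a b c * w a * w b * w c = 0) (a b c : Fin n) :
    T a b c + T a c b + T b a c + T b c a + T c a b + T c b a = 0 := by
  let F : (Fin n → ℝ) → (Fin n → ℝ) → (Fin n → ℝ) → ℝ := fun u v w =>
    ∑ a, ∑ b, ∑ c, T a b c * u a * v b * w c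
  have a1 : ∀ u u' v w, F (u + u') v w = F u v w + F u' v w := by
    intro u u' v w
    simp only [F, Pi.add_apply, ← Finset.sum_add_distrib]
    refine Finset.sum_congr rfl fun _ _ => Finset.sum_congr rfl fun _ _ =>
      Finset.sum_congr rfl fun _ _ => by ring
  have a2 : ∀ u u' v w, F v (u + u') w = F v u w + F v u' w := by
    intro u u' v w
    simp only [F, Pi.add_apply, ← Finset.sum_add_distrib]
    refine Finset.sum_congr rfl fun _ _ => Finset.sum_congr rfl fun _ _ =>
      Finset.sum_congr rfl fun _ _ => by ring
  have a3 : ∀ u u' v w, F v w (u + u') = F v w u + F v w u' := by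
    intro u u' v w
    simp only [F, Pi.add_apply, ← Finset.sum_add_distrib]
    refine Finset.sum_congr rfl fun _ _ => Finset.sum_congr rfl fun _ _ =>
      Finset.sum_congr rfl fun _ _ => by ring
  have hF : ∀ w, F w w w = 0 := h
  have hb : ∀ a b c, F (Pi.single a 1) (Pi.single b 1) (Pi.single c 1) = T a b c := by
    intro a b c
    simp only [F]
    rw [Finset.sum_eq_single a, Finset.sum_eq_single b, Finset.sum_eq_single c]
    · simp
    all_goals simp +contextual [Pi.single_apply]
  have gen : ∀ u v w, F u v w + F u w v + F v u w + F v w u + F w u v + F w v u = 0 := by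
    intro u v w
    have h1 := hF (u + v + w)
    have h2 := hF (u + v)
    have h3 := hF (u + w)
    have h4 := hF (v + w)
    simp only [a1, a2, a3] at h1 h2 h3 h4
    linear_combination h1 - h2 - h3 - h4 + hF u + hF v + hF w
  simpa only [hb] using gen (Pi.single a 1) (Pi.single b 1) (Pi.single c 1)

end Stk

namespace Stk
variable {n : ℕ} {U : Set (Fin n → ℝ)}

theorem dot_symm {A : Matrix (Fin n) (Fin n) ℝ} (h : A.IsSymm) (v w : Fin n → ℝ) :
    v ⬝ᵥ (A *ᵥ w) = (A *ᵥ v) ⬝ᵥ w := by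
  rw [dotProduct_mulVec, ← mulVec_transpose, h.eq]

theorem Dm_symm {A : (Fin n → ℝ) → Matrix (Fin n) (Fin n) ℝ} (hU : IsOpen U)
    (h : ∀ x ∈ U, (A x).IsSymm) (k : Fin n) {x} (hx : x ∈ U) : (Dm k A x).IsSymm := by
  ext i j
  exact pd_congr hU (fun y hy => (h y hy).apply _ _) k hx

theorem cubic_sum (M : Fin n → Matrix (Fin n) (Fin n) ℝ) (w : Fin n → ℝ) :
    ∑ a, ∑ b, ∑ c, M a b c * w a * w b * w c = ∑ a, w a * (w ⬝ᵥ (M a *ᵥ w)) := by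
  refine Finset.sum_congr rfl fun a _ => ?_
  simp only [dotProduct, mulVec, Finset.mul_sum]
  refine Finset.sum_congr rfl fun b _ => Finset.sum_congr rfl fun c _ => ?_
  ring

theorem killing_uc (hU : IsOpen U) (hUc : IsPreconnected U)
    (G L : (Fin n → ℝ) → Matrix (Fin n) (Fin n) ℝ) (hG : Smm U G) (hL : Smm U L)
    (hGs : ∀ x ∈ U, (G x).IsSymm) (hLs : ∀ x ∈ U, (L x).IsSymm) (hGi : ∀ x ∈ U, IsUnit (G x))
    (hK : ∀ x ∈ U, ∀ p : Fin n → ℝ, ∑ k, (p ⬝ᵥ (Dm k G x *ᵥ p)) * (L x *ᵥ p) k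
      = ∑ k, (p ⬝ᵥ (Dm k L x *ᵥ p)) * (G x *ᵥ p) k)
    {x0} (hx0 : x0 ∈ U) (h0 : ∀ d e, Fl U (fun f => f x0 = 0) (fun y => L y d e)) :
    ∀ x ∈ U, L x = 0 := by
  let g : (Fin n → ℝ) → Matrix (Fin n) (Fin n) ℝ := fun x => (G x)⁻¹
  let l : (Fin n → ℝ) → Matrix (Fin n) (Fin n) ℝ := fun x => g x * (L x * g x)
  have hg : Smm U g := fun i j => Smm.inv hG hGi i j
  have hl : Smm U l := hg.mul (hL.mul hg)
  have hdet : ∀ x ∈ U, IsUnit (G x).det := fun x hx => (Matrix.isUnit_iff_isUnit_det _).1 (hGi x hx)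
  have hGg : ∀ x ∈ U, G x * g x = 1 := fun x hx => Matrix.mul_nonsing_inv _ (hdet x hx)
  have hgG : ∀ x ∈ U, g x * G x = 1 := fun x hx => Matrix.nonsing_inv_mul _ (hdet x hx)
  have hgs : ∀ x ∈ U, (g x).IsSymm := fun x hx => by
    unfold Matrix.IsSymm
    simp only [g]
    rw [Matrix.transpose_nonsing_inv, (hGs x hx).eq]
  have hls : ∀ x ∈ U, (l x).IsSymm := fun x hx => by
    unfold Matrix.IsSymm
    simp only [l]
    rw [Matrix.transpose_mul, Matrix.transpose_mul, (hgs x hx).eq, (hLs x hx).eq, Matrix.mul_assoc]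
  have hLl : ∀ x ∈ U, L x = G x * l x * G x := fun x hx => by
    simp only [l]
    calc L x = (G x * g x) * L x * (g x * G x) := by rw [hGg x hx, hgG x hx]; simp
      _ = _ := by simp only [Matrix.mul_assoc]
  let h : Fin n → (Fin n → ℝ) → Matrix (Fin n) (Fin n) ℝ := fun k x => g x * (Dm k G x * g x)
  have hDG : ∀ k, Smm U (Dm k G) := fun k i j => (hG i j).pd hU k
  have hh : ∀ k, Smm U (h k) := fun k => hg.mul ((hDG k).mul hg)
  let R : Fin n → Fin n → Fin n → (Fin n → ℝ) → ℝ := fun a b c x =>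
    ∑ k, h k x b c * (∑ m, G x k m * l x m a)
      + (-2) * ∑ m, (g x * Dm a G x) b m * l x m c
  let ρ : Fin n → Fin n → Fin n → (Fin n → ℝ) → ℝ := fun a b c x =>
    (1/2) * (((((R a b c x + R a c b x) + R b a c x) + R b c a x) + R c a b x) + R c b a x)
  have hl0 : ∀ x ∈ U, l x = 0 := by
    refine uc_sys hU hUc l hl hls ρ ?_ ?_ hx0 ?_
    · intro a b c x hx
      have hT : ∀ w : Fin n → ℝ, ∑ a, ∑ b, ∑ c, (Dm a l x b c - R a b c x) * w a * w b * w c = 0 := by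
        intro w
        let p := g x *ᵥ w
        have hGp : G x *ᵥ p = w := by simp only [p, mulVec_mulVec, hGg x hx, one_mulVec]
        have hLp : L x *ᵥ p = G x *ᵥ (l x *ᵥ w) := by
          rw [hLl x hx, ← mulVec_mulVec, hGp, mulVec_mulVec]
        have e1 : ∀ k, p ⬝ᵥ (Dm k L x *ᵥ p) = w ⬝ᵥ (Dm k l x *ᵥ w)
            + 2 * (p ⬝ᵥ (Dm k G x *ᵥ (l x *ᵥ w))) := by
          intro k
          have s1 := dot_symm (hGs x hx) p
          have s2 := dot_symm (hls x hx) w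
          have s3 := dot_symm (Dm_symm hU hGs k hx) (l x *ᵥ w) p
          rw [Dm_congr hU hLl k hx, Dm_mul hU (hG.mul hl) hG k hx, Dm_mul hU hG hl k hx]
          simp only [add_mulVec, ← mulVec_mulVec, dotProduct_add, hGp]
          rw [s1, s1, hGp, s2, s3, dotProduct_comm (Dm k G x *ᵥ (l x *ᵥ w)) p]
          ring
        have e2 := hK x hx p
        rw [hLp, hGp] at e2
        have e3 : ∀ a b c, R a b c x = ∑ k, h k x b c * (G x * l x) k a
            - 2 * (g x * Dm a G x * l x) b c := by
          intro a b c
          simp only [R, Matrix.mul_apply (M := G x), Matrix.mul_apply (M := g x * Dm a G x)]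
          ring
        have e4 : ∑ a, ∑ b, ∑ c, Dm a l x b c * w a * w b * w c
            = ∑ a, w a * (w ⬝ᵥ (Dm a l x *ᵥ w)) := cubic_sum _ w
        have e5 : ∑ a, ∑ b, ∑ c, (g x * Dm a G x * l x) b c * w a * w b * w c
            = ∑ a, w a * (p ⬝ᵥ (Dm a G x *ᵥ (l x *ᵥ w))) := by
          rw [cubic_sum (fun a => g x * Dm a G x * l x)]
          refine Finset.sum_congr rfl fun a _ => ?_
          rw [← mulVec_mulVec, ← mulVec_mulVec, dot_symm (hgs x hx)]
        have e6 : ∑ a, ∑ b, ∑ c, (∑ k, h k x b c * (G x * l x) k a) * w a * w b * w c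
            = ∑ k, (p ⬝ᵥ (Dm k G x *ᵥ p)) * (G x *ᵥ (l x *ᵥ w)) k := by
          have q : ∀ k, p ⬝ᵥ (Dm k G x *ᵥ p) = w ⬝ᵥ (h k x *ᵥ w) := by
            intro k
            simp only [h]
            rw [← mulVec_mulVec, ← mulVec_mulVec, dot_symm (hgs x hx) w]
          simp only [q, mulVec_mulVec]
          simp only [Finset.sum_mul]
          calc _ = ∑ k, ∑ a, ∑ b, ∑ c, h k x b c * (G x * l x) k a * w a * w b * w c := by
                rw [Finset.sum_comm]
                conv_rhs =>
                  rw [Finset.sum_comm]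
                  enter [2, a]
                  rw [Finset.sum_comm]
                  enter [2, b]
                  rw [Finset.sum_comm]
                rw [Finset.sum_comm]
            _ = _ := by
                refine Finset.sum_congr rfl fun k _ => ?_
                simp only [dotProduct, mulVec, Finset.mul_sum, Finset.sum_mul]
                refine Finset.sum_congr rfl fun a _ => Finset.sum_congr rfl fun b _ =>
                  Finset.sum_congr rfl fun c _ => by ring
        simp only [e3, sub_mul, Finset.sum_sub_distrib, mul_assoc (2:ℝ), ← Finset.mul_sum]
        rw [e4, e5, e6, e2]
        simp only [e1, add_mul, Finset.sum_add_distrib, mul_comm (w _), mul_assoc (2:ℝ),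
          ← Finset.mul_sum]
        ring
      have hp := polar3 _ hT a b c
      have sy : ∀ a b c, Dm a l x b c = Dm a l x c b := fun a b c =>
        (Dm_symm hU hls a hx).apply c b
      have d1 : ∀ a b c, pd a (fun y => l y b c) x = Dm a l x b c := fun _ _ _ => rfl
      simp only [ρ, d1]
      rw [sy a c b, sy b a c, sy c b a] at hp
      linear_combination (1/2) * hp
    · intro P hP hF
      have hR : ∀ a b c, Fl U P (R a b c) := by
        intro a b c
        refine Fl.add hU hP (Fl.sum hU hP fun k _ => Fl.mul hU hP (hh k b c) (Fl.sum hU hP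
          fun m _ => Fl.mul hU hP (hG k m) (hF m a))) (Fl.mul hU hP (Sm.const _)
          (Fl.sum hU hP fun m _ => Fl.mul hU hP (hg.mul (hDG a) b m) (hF m c)))
      intro a b c
      exact Fl.mul hU hP (Sm.const _) (Fl.add hU hP (Fl.add hU hP (Fl.add hU hP (Fl.add hU hP
        (Fl.add hU hP (hR _ _ _) (hR _ _ _)) (hR _ _ _)) (hR _ _ _)) (hR _ _ _)) (hR _ _ _))
    · intro d e
      have hP := good_zero hx0
      have : Fl U (fun f => f x0 = 0) (fun y => ∑ i, g y d i * ∑ j, g y j e * L y i j) :=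
        Fl.sum hU hP fun i _ => Fl.mul hU hP (hg d i) (Fl.sum hU hP fun j _ =>
          Fl.mul hU hP (hg j e) (h0 i j))
      refine this.congr hU hP fun y _ => ?_
      simp only [l, Matrix.mul_apply]
      refine Finset.sum_congr rfl fun i _ => ?_
      congr 1
      exact Finset.sum_congr rfl fun j _ => mul_comm _ _
  intro x hx
  rw [hLl x hx, hl0 x hx]; simp

end Stk

namespace Stk
variable {n : ℕ} {U : Set (Fin n → ℝ)}

theorem pd_ae {f : (Fin n → ℝ) → ℝ} (hU : IsOpen U) (hf : Sm U f) :
    ∀ᵐ x ∂(volume : Measure (Fin n → ℝ)), x ∈ U → f x = 0 → ∀ a, pd a f x = 0 := by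
  set A : Set (Fin n → ℝ) := U \ (U ∩ f ⁻¹' {0}ᶜ) with hA
  have hmeas : MeasurableSet A := hU.measurableSet.diff
    ((ContDiffOn.continuousOn hf).isOpen_inter_preimage hU isOpen_compl_singleton).measurableSet
  have hA0 : ∀ x ∈ A, f x = 0 := by
    intro x hx
    by_contra h
    exact hx.2 ⟨hx.1, h⟩
  let F : (Fin n → ℝ) → (Fin n → ℝ) := fun x _ => f x
  let F' : (Fin n → ℝ) → (Fin n → ℝ) →L[ℝ] (Fin n → ℝ) := fun x =>
    ContinuousLinearMap.pi fun _ => fderiv ℝ f x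
  have h1 : ApproximatesLinearOn F (0 : (Fin n → ℝ) →L[ℝ] (Fin n → ℝ)) A 0 := by
    intro x hx y hy
    have : F x = F y := by ext i; simp only [F]; rw [hA0 x hx, hA0 y hy]
    simp [this]
  have h2 := h1.norm_fderiv_sub_le volume hmeas F' (by
    intro x hx
    refine HasFDerivAt.hasFDerivWithinAt ?_
    exact hasFDerivAt_pi.2 fun i => (hf.diff hU hx.1).hasFDerivAt)
  rw [ae_restrict_iff' hmeas] at h2
  filter_upwards [h2] with x hx hxU hfx a
  have hxA : x ∈ A := ⟨hxU, fun h => h.2 hfx⟩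
  have h3 : F' x = 0 := by simpa using hx hxA
  have h4 := congrFun (congrArg (fun T : (Fin n → ℝ) →L[ℝ] (Fin n → ℝ) => T (Pi.single a 1)) h3) a
  simpa [F', Stk.pd] using h4

theorem flat_ae {f : (Fin n → ℝ) → ℝ} (hU : IsOpen U) (hf : Sm U f) :
    ∀ᵐ x ∂(volume : Measure (Fin n → ℝ)), x ∈ U → f x = 0 → Fl U (fun f => f x = 0) f := by
  have h2 : ∀ᵐ x ∂(volume : Measure (Fin n → ℝ)), ∀ b, x ∈ U → pd b f x = 0 →
      ∀ a, pd a (pd b f) x = 0 := ae_all_iff.2 fun b => pd_ae hU (hf.pd hU b)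
  filter_upwards [pd_ae hU hf, h2] with x h1 h2 hx h0
  exact ⟨hf, h0, h1 hx h0, fun a b => h2 b hx (h1 hx h0 b) a⟩

theorem cubic_diag (m : Matrix (Fin n) (Fin n) ℝ)
    (h : ∀ q : Fin n → ℝ, ∑ j, ∑ k, m j k * (q j) ^ 2 * q k = 0) : m = 0 := by
  let T : Fin n → Fin n → Fin n → ℝ := fun a b c => if a = b then m a c else 0
  have hT : ∀ w : Fin n → ℝ, ∑ a, ∑ b, ∑ c, T a b c * w a * w b * w c = 0 := by
    intro w
    rw [← h w]
    refine Finset.sum_congr rfl fun a _ => ?_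
    rw [Finset.sum_comm]
    refine Finset.sum_congr rfl fun c _ => ?_
    simp only [T, ite_mul, zero_mul, Finset.sum_ite_eq, Finset.mem_univ, if_true]
    ring
  ext j k
  have := polar3 T hT j j k
  by_cases hjk : j = k
  · subst hjk
    simp only [T, if_true] at this
    simp only [Matrix.zero_apply]; linarith
  · simp only [T, if_true, if_neg hjk, if_neg (Ne.symm hjk)] at this
    simp only [Matrix.zero_apply]; linarith

theorem quad_diag {A B : Matrix (Fin n) (Fin n) ℝ} (h : (B * A * Bᵀ).IsDiag) (q : Fin n → ℝ) :
    (Bᵀ *ᵥ q) ⬝ᵥ (A *ᵥ (Bᵀ *ᵥ q)) = ∑ j, (B * A * Bᵀ) j j * (q j) ^ 2 := by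
  have : (Bᵀ *ᵥ q) ⬝ᵥ (A *ᵥ (Bᵀ *ᵥ q)) = q ⬝ᵥ ((B * A * Bᵀ) *ᵥ q) := by
    rw [← mulVec_mulVec, ← mulVec_mulVec, dotProduct_mulVec q B, ← mulVec_transpose]
  rw [this]
  simp only [dotProduct, mulVec, Finset.mul_sum]
  refine Finset.sum_congr rfl fun i _ => ?_
  rw [Finset.sum_eq_single i]
  · ring
  · intro j _ hj
    rw [h (Ne.symm hj)]; ring
  · simp

theorem grad_zero {ι : Type*} [Fintype ι] (K : ι → Matrix (Fin n) (Fin n) ℝ)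
    (G B : Matrix (Fin n) (Fin n) ℝ) (hG : IsUnit G) (hB : IsUnit B)
    (hd : ∀ α, (B * K α * Bᵀ).IsDiag) (hind : ∀ e : ι → ℝ, ∑ α, e α • K α = 0 → e = 0)
    (ξ : ι → Fin n → ℝ)
    (h : ∀ p : Fin n → ℝ, ∑ α, (ξ α ⬝ᵥ (G *ᵥ p)) * (p ⬝ᵥ (K α *ᵥ p)) = 0) : ξ = 0 := by
  let N := G * Bᵀ
  have hm : (Matrix.of fun j k => ∑ α, (B * K α * Bᵀ) j j * (ξ α ᵥ* N) k) = 0 := by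
    refine cubic_diag _ fun q => ?_
    rw [← h (Bᵀ *ᵥ q)]
    have e : ∀ α, (ξ α ⬝ᵥ (G *ᵥ (Bᵀ *ᵥ q))) * ((Bᵀ *ᵥ q) ⬝ᵥ (K α *ᵥ (Bᵀ *ᵥ q)))
        = ∑ j, ∑ k, (B * K α * Bᵀ) j j * (ξ α ᵥ* N) k * q j ^ 2 * q k := by
      intro α
      rw [quad_diag (hd α), mulVec_mulVec, dotProduct_mulVec, dotProduct, Finset.sum_mul_sum,
        Finset.sum_comm]
      refine Finset.sum_congr rfl fun j _ => Finset.sum_congr rfl fun k _ => ?_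
      simp only [N]; ring
    simp only [e]
    rw [Finset.sum_comm (s := (Finset.univ : Finset ι))]
    refine Finset.sum_congr rfl fun j _ => ?_
    rw [Finset.sum_comm (s := (Finset.univ : Finset ι))]
    refine Finset.sum_congr rfl fun k _ => ?_
    simp only [Matrix.of_apply, Finset.sum_mul]
  have hz : ∀ k, (fun α => (ξ α ᵥ* N) k) = 0 := by
    intro k
    apply hind
    have : B * (∑ α, (ξ α ᵥ* N) k • K α) * Bᵀ = 0 := by
      rw [Finset.mul_sum, Finset.sum_mul]
      ext i j
      simp only [Matrix.sum_apply, Matrix.mul_smul, Matrix.smul_mul, Matrix.smul_apply, smul_eq_mul,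
        Matrix.zero_apply]
      by_cases hij : i = j
      · subst hij
        have := congrFun (congrFun hm i) k
        simp only [Matrix.of_apply, Matrix.zero_apply] at this
        rw [← this]
        exact Finset.sum_congr rfl fun α _ => mul_comm _ _
      · exact Finset.sum_eq_zero fun α _ => by rw [hd α hij, mul_zero]
    have hBT : IsUnit Bᵀ := (Matrix.isUnit_transpose _).2 hB
    have t := hBT.mul_left_eq_zero.1 this
    exact hB.mul_right_eq_zero.1 t
  have hN : IsUnit N := hG.mul ((Matrix.isUnit_transpose _).2 hB)
  ext α : 1
  have e1 : ξ α ᵥ* N = 0 := by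
    ext k; exact congrFun (hz k) α
  have := Matrix.vecMul_injective_of_isUnit hN
  apply this
  simpa using e1

end Stk

namespace Stk
variable {n : ℕ} {U : Set (Fin n → ℝ)}

theorem partA_step (hU : IsOpen U) (hUc : IsPreconnected U)
    (K : Fin n → (Fin n → ℝ) → Matrix (Fin n) (Fin n) ℝ) (hK : ∀ α, Smm U (K α))
    (hKs : ∀ α, ∀ x ∈ U, (K α x).IsSymm) (o : Fin n) (hGi : ∀ x ∈ U, IsUnit (K o x))
    (hkill : ∀ α, ∀ x ∈ U, ∀ p : Fin n → ℝ, ∑ k, (p ⬝ᵥ (Dm k (K o) x *ᵥ p)) * (K α x *ᵥ p) k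
      = ∑ k, (p ⬝ᵥ (Dm k (K α) x *ᵥ p)) * (K o x *ᵥ p) k)
    (h2 : ∀ᵐ x ∂(volume : Measure (Fin n → ℝ)), x ∈ U →
      ∃ B : Matrix (Fin n) (Fin n) ℝ, IsUnit B ∧ ∀ α, (B * K α x * Bᵀ).IsDiag)
    (h3 : ∀ e : Fin n → ℝ, (∀ x ∈ U, ∑ α, e α • K α x = 0) → e = 0)
    (s : Finset (Fin n)) (β : Fin n) (hβ : β ∉ s) :
    ∀ᵐ x ∂(volume : Measure (Fin n → ℝ)), x ∈ U →
      (∀ e : s → ℝ, ∑ α, e α • K α x = 0 → e = 0) →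
      ¬ ∃ a : s → ℝ, K β x = ∑ α, a α • K α x := by
  let ip : Matrix (Fin n) (Fin n) ℝ → Matrix (Fin n) (Fin n) ℝ → ℝ := fun A B =>
    ∑ i, ∑ j, A i j * B i j
  have ip_sum : ∀ (A : Matrix (Fin n) (Fin n) ℝ) (e : s → ℝ) x,
      ip A (∑ α, e α • K α x) = ∑ α : s, ip A (K α x) * e α := by
    intro A e x
    simp only [ip, Matrix.sum_apply, Matrix.smul_apply, smul_eq_mul, Finset.mul_sum, Finset.sum_mul]
    rw [Finset.sum_comm (s := (Finset.univ : Finset s))]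
    refine Finset.sum_congr rfl fun i _ => ?_
    rw [Finset.sum_comm (s := (Finset.univ : Finset s))]
    exact Finset.sum_congr rfl fun j _ => Finset.sum_congr rfl fun k _ => by ring
  have ip_zero : ∀ A, ip A A = 0 → A = 0 := by
    intro A hA
    ext i j
    have h1 := (Finset.sum_eq_zero_iff_of_nonneg (fun i _ => Finset.sum_nonneg fun j _ =>
      mul_self_nonneg (A i j))).1 hA i (Finset.mem_univ _)
    have h2 := (Finset.sum_eq_zero_iff_of_nonneg (fun j _ =>
      mul_self_nonneg (A i j))).1 h1 j (Finset.mem_univ _)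
    exact mul_self_eq_zero.1 h2
  have ip_comm : ∀ A B, ip A B = ip B A := fun A B => by
    simp only [ip, mul_comm]
  have ip_sm : ∀ α γ, Sm U (fun x => ip (K α x) (K γ x)) := fun α γ =>
    Sm.sum fun i _ => Sm.sum fun j _ => (hK α i j).mul (hK γ i j)
  let M : (Fin n → ℝ) → Matrix s s ℝ := fun x => Matrix.of fun α γ => ip (K α x) (K γ x)
  let b : (Fin n → ℝ) → s → ℝ := fun x γ => ip (K γ x) (K β x)
  have hMe : ∀ x (e : s → ℝ) α, (M x *ᵥ e) α = ip (K α x) (∑ γ, e γ • K γ x) := by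
    intro x e α
    rw [ip_sum]; rfl
  have hMsm : Sm U (fun x => (M x).det) := Smm.det fun α γ => ip_sm α γ
  let V : Set (Fin n → ℝ) := U ∩ (fun x => (M x).det) ⁻¹' {0}ᶜ
  have hVo : IsOpen V :=
    (ContDiffOn.continuousOn hMsm).isOpen_inter_preimage hU isOpen_compl_singleton
  have hVU : V ⊆ U := Set.inter_subset_left
  have hMu : ∀ x ∈ V, IsUnit (M x).det := fun x hx => isUnit_iff_ne_zero.2 hx.2
  have hindV : ∀ x ∈ U, (∀ e : s → ℝ, ∑ α, e α • K α x = 0 → e = 0) → x ∈ V := by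
    intro x hx hind
    refine ⟨hx, fun hdet => ?_⟩
    obtain ⟨v, hv, hMv⟩ := Matrix.exists_mulVec_eq_zero_iff.2 hdet
    apply hv
    apply hind
    apply ip_zero
    rw [ip_sum]
    refine Finset.sum_eq_zero fun α _ => ?_
    rw [ip_comm, ← hMe, hMv]; simp
  let c : s → (Fin n → ℝ) → ℝ := fun α x => ∑ γ, (M x)⁻¹ α γ * b x γ
  have hc : ∀ α, Sm V (c α) := fun α => Sm.sum fun γ _ =>
    (Smm.inv (A := M) (fun α γ => (ip_sm α γ).mono hVU)
      (fun x hx => (Matrix.isUnit_iff_isUnit_det _).2 (hMu x hx)) α γ).mul ((ip_sm γ β).mono hVU)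
  have hca : ∀ x ∈ V, ∀ a : s → ℝ, K β x = ∑ α, a α • K α x → ∀ α, c α x = a α := by
    intro x hx a ha α
    have h1 : b x = M x *ᵥ a := by
      ext γ
      rw [hMe, ← ha]
    have : c α x = ((M x)⁻¹ *ᵥ b x) α := rfl
    rw [this, h1, mulVec_mulVec, Matrix.nonsing_inv_mul _ (hMu x hx), one_mulVec]
  let D : Fin n → Fin n → (Fin n → ℝ) → ℝ := fun i j x => K β x i j - ∑ α, c α x * K α x i j
  have hKV : ∀ α i j, Sm V (fun x => K α x i j) := fun α i j => (hK α i j).mono hVU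
  have hD : ∀ i j, Sm V (D i j) := fun i j =>
    (hKV β i j).sub (Sm.sum fun α _ => (hc α).mul (hKV α i j))
  have ae1 : ∀ᵐ x ∂(volume : Measure (Fin n → ℝ)), ∀ i j, x ∈ V → D i j x = 0 →
      Fl V (fun f => f x = 0) (D i j) :=
    ae_all_iff.2 fun i => ae_all_iff.2 fun j => flat_ae hVo (hD i j)
  have ae2 : ∀ᵐ x ∂(volume : Measure (Fin n → ℝ)), ∀ (α : s) k, x ∈ V → pd k (c α) x = 0 →
      ∀ a, pd a (pd k (c α)) x = 0 :=
    ae_all_iff.2 fun α => ae_all_iff.2 fun k => pd_ae hVo ((hc α).pd hVo k)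
  filter_upwards [ae1, ae2, h2] with x hx1 hx2 hxB hx hind ⟨a, ha⟩
  obtain ⟨B, hB, hBd⟩ := hxB hx
  have hxV := hindV x hx hind
  have hcx := hca x hxV a ha
  have hD0 : ∀ i j, D i j x = 0 := by
    intro i j
    simp only [D, hcx]
    rw [ha]; simp [Matrix.sum_apply]
  have hDF := fun i j => hx1 i j hxV (hD0 i j)
  -- derivative of `K β` at `x`
  let ξ : s → Fin n → ℝ := fun α k => pd k (c α) x
  have hDm : ∀ k, Dm k (K β) x = ∑ α, (ξ α k • K α x + a α • Dm k (K α) x) := by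
    intro k
    ext i j
    have h1 := (hDF i j).j1 k
    simp only [D] at h1
    rw [pd_sub k ((hKV β i j).diff hVo hxV)
      ((Sm.sum fun α _ => (hc α).mul (hKV α i j)).diff hVo hxV),
      pd_sum k fun α _ => ((hc α).mul (hKV α i j)).diff hVo hxV] at h1
    have h3 : ∀ α : s, pd k (fun x => c α x * K α x i j) x
        = ξ α k * K α x i j + a α * Dm k (K α) x i j := by
      intro α
      rw [pd_mul k ((hc α).diff hVo hxV) ((hKV α i j).diff hVo hxV), hcx]; rfl
    simp only [h3] at h1
    simp only [Matrix.sum_apply, Matrix.add_apply, Matrix.smul_apply, smul_eq_mul]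
    exact sub_eq_zero.1 h1
  have hξ : ξ = 0 := by
    refine grad_zero (fun α : s => K α x) (K o x) B (hGi x hx) hB (fun α => hBd α) hind ξ ?_
    intro p
    have hb := hkill β x hx p
    have hs : ∑ α, a α * ∑ k, (p ⬝ᵥ (Dm k (K o) x *ᵥ p)) * (K α x *ᵥ p) k
        = ∑ α, a α * ∑ k, (p ⬝ᵥ (Dm k (K α) x *ᵥ p)) * (K o x *ᵥ p) k :=
      Finset.sum_congr rfl fun α _ => by rw [hkill α x hx p]
    have e1 : ∑ k, (p ⬝ᵥ (Dm k (K o) x *ᵥ p)) * (K β x *ᵥ p) k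
        = ∑ α, a α * ∑ k, (p ⬝ᵥ (Dm k (K o) x *ᵥ p)) * (K α x *ᵥ p) k := by
      rw [ha]
      simp only [Matrix.sum_mulVec, Matrix.smul_mulVec, Finset.sum_apply, Pi.smul_apply,
        smul_eq_mul, Finset.mul_sum]
      rw [Finset.sum_comm]
      exact Finset.sum_congr rfl fun _ _ => Finset.sum_congr rfl fun _ _ => by ring
    have e2 : ∑ k, (p ⬝ᵥ (Dm k (K β) x *ᵥ p)) * (K o x *ᵥ p) k
        = ∑ α, (ξ α ⬝ᵥ (K o x *ᵥ p)) * (p ⬝ᵥ (K α x *ᵥ p))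
          + ∑ α, a α * ∑ k, (p ⬝ᵥ (Dm k (K α) x *ᵥ p)) * (K o x *ᵥ p) k := by
      simp only [hDm, Matrix.sum_mulVec, dotProduct_sum, Matrix.add_mulVec, dotProduct_add,
        Matrix.smul_mulVec, dotProduct_smul, smul_eq_mul, Finset.sum_mul]
      rw [Finset.sum_comm, ← Finset.sum_add_distrib]
      refine Finset.sum_congr rfl fun α _ => ?_
      rw [show ξ α ⬝ᵥ (K o x *ᵥ p) = ∑ k, ξ α k * (K o x *ᵥ p) k from rfl, Finset.sum_mul, Finset.mul_sum, ← Finset.sum_add_distrib]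
      exact Finset.sum_congr rfl fun k _ => by ring
    linarith
  -- the constant coefficient combination
  let e : Fin n → ℝ := fun α => (if α = β then 1 else 0) - ∑ γ : s, if (γ : Fin n) = α then a γ else 0
  have he : ∀ y, ∑ α, e α • K α y = K β y - ∑ γ : s, a γ • K γ y := by
    intro y
    simp only [e, sub_smul, Finset.sum_sub_distrib, ite_smul, one_smul, zero_smul, Finset.sum_smul]
    congr 1
    · simp
    · rw [Finset.sum_comm]
      simp
  have hL0 : ∀ y ∈ U, ∑ α, e α • K α y = 0 := by
    refine killing_uc hU hUc (K o) (fun y => ∑ α, e α • K α y) (hK o) ?_ (hKs o) ?_ hGi ?_ hx ?_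
    · intro i j
      simp only [Matrix.sum_apply, Matrix.smul_apply, smul_eq_mul]
      exact Sm.sum fun α _ => (Sm.const _).mul (hK α i j)
    · intro y hy
      unfold Matrix.IsSymm
      rw [Matrix.transpose_sum]
      exact Finset.sum_congr rfl fun α _ => by rw [Matrix.transpose_smul, (hKs α y hy).eq]
    · intro y hy p
      have := Finset.sum_congr (rfl : (Finset.univ : Finset (Fin n)) = Finset.univ)
        fun α _ => congrArg (fun t => e α * t) (hkill α y hy p)
      simp only [Dm_sum hU hK e _ hy]
      simp only [Matrix.sum_mulVec, Matrix.smul_mulVec, Finset.sum_apply, Pi.smul_apply,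
        smul_eq_mul, Finset.mul_sum, dotProduct_sum, dotProduct_smul, Finset.sum_mul] at this ⊢
      rw [Finset.sum_comm]
      conv_rhs => rw [Finset.sum_comm]
      refine Eq.trans ?_ (this.trans ?_)
      · exact Finset.sum_congr rfl fun _ _ => Finset.sum_congr rfl fun _ _ => by ring
      · exact Finset.sum_congr rfl fun _ _ => Finset.sum_congr rfl fun _ _ => by ring
    · intro i j
      have hP := good_zero hxV
      have hcF : ∀ α : s, Fl V (fun f => f x = 0) (fun y => c α y - a α) := by
        intro α
        have h1 : ∀ k, pd k (fun y => c α y - a α) = pd k (c α) := by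
          intro k; ext y; unfold Stk.pd; rw [fderiv_sub_const]
        have h2 : ∀ k, pd k (c α) x = 0 := fun k => congrFun (congrFun hξ α) k
        refine ⟨(hc α).sub (Sm.const _), by simp [hcx], fun k => ?_, fun k l => ?_⟩
        · rw [h1]; exact h2 k
        · rw [h1]; exact hx2 α l hxV (h2 l) k
      have hF : Fl V (fun f => f x = 0) (fun y => D i j y + ∑ α : s, K α y i j * (c α y - a α)) :=
        Fl.add hVo hP (hDF i j) (Fl.sum hVo hP fun α _ => Fl.mul hVo hP (hKV α i j) (hcF α))
      have heq : (fun y => D i j y + ∑ α : s, K α y i j * (c α y - a α))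
          = fun y => (∑ α, e α • K α y) i j := by
        ext y
        rw [he]
        simp only [D, Matrix.sub_apply, Matrix.sum_apply, Matrix.smul_apply, smul_eq_mul, mul_sub,
          Finset.sum_sub_distrib, mul_comm]
        ring
      rw [heq] at hF
      refine ⟨?_, hF.j0, hF.j1, hF.j2⟩
      simp only [Matrix.sum_apply, Matrix.smul_apply, smul_eq_mul]
      exact Sm.sum fun α _ => (Sm.const _).mul (hK α i j)
  have he0 := congrFun (h3 e hL0) β
  have : ∀ γ : s, (γ : Fin n) ≠ β := fun γ h => hβ (h ▸ γ.2)
  simp [e, this] at he0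

theorem partA (hU : IsOpen U) (hUc : IsPreconnected U)
    (K : Fin n → (Fin n → ℝ) → Matrix (Fin n) (Fin n) ℝ) (hK : ∀ α, Smm U (K α))
    (hKs : ∀ α, ∀ x ∈ U, (K α x).IsSymm) (o : Fin n) (hGi : ∀ x ∈ U, IsUnit (K o x))
    (hkill : ∀ α, ∀ x ∈ U, ∀ p : Fin n → ℝ, ∑ k, (p ⬝ᵥ (Dm k (K o) x *ᵥ p)) * (K α x *ᵥ p) k
      = ∑ k, (p ⬝ᵥ (Dm k (K α) x *ᵥ p)) * (K o x *ᵥ p) k)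
    (h2 : ∀ᵐ x ∂(volume : Measure (Fin n → ℝ)), x ∈ U →
      ∃ B : Matrix (Fin n) (Fin n) ℝ, IsUnit B ∧ ∀ α, (B * K α x * Bᵀ).IsDiag)
    (h3 : ∀ e : Fin n → ℝ, (∀ x ∈ U, ∑ α, e α • K α x = 0) → e = 0) :
    ∀ᵐ x ∂(volume : Measure (Fin n → ℝ)), x ∈ U → LinearIndependent ℝ (fun α => K α x) := by
  have h : ∀ᵐ x ∂(volume : Measure (Fin n → ℝ)), ∀ (s : Finset (Fin n)) (β : Fin n), β ∉ s →
      x ∈ U → (∀ e : s → ℝ, ∑ α, e α • K α x = 0 → e = 0) →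
      ¬ ∃ a : s → ℝ, K β x = ∑ α, a α • K α x := by
    refine ae_all_iff.2 fun s => ae_all_iff.2 fun β => ?_
    by_cases hβ : β ∈ s
    · filter_upwards with x h using absurd hβ h
    · filter_upwards [partA_step hU hUc K hK hKs o hGi hkill h2 h3 s β hβ] with x hx _ using hx
  filter_upwards [h] with x hx hxU
  classical
  obtain ⟨b, -, -, hspan, hb⟩ := exists_linearIndepOn_extension (K := ℝ) (v := fun α => K α x)
    (s := ∅) (t := Set.univ) (linearIndepOn_empty _ _) (Set.empty_subset _)
  by_cases hbu : b = Set.univ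
  · rw [hbu] at hb
    exact linearIndepOn_univ_iff.1 hb
  · exfalso
    obtain ⟨β, hβ⟩ := (Set.ne_univ_iff_exists_notMem b).1 hbu
    have hbs : (b.toFinset : Set (Fin n)) = b := Set.coe_toFinset b
    refine hx b.toFinset β (by simpa using hβ) hxU ?_ ?_
    · intro e he
      have hb' : LinearIndepOn ℝ (fun α => K α x) (b.toFinset : Set (Fin n)) := by rw [hbs]; exact hb
      have := Fintype.linearIndependent_iff.1 hb' e
      ext i
      exact this he i
    · have h1 : K β x ∈ Submodule.span ℝ ((fun α => K α x) '' (b.toFinset : Set (Fin n))) := by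
        rw [hbs]; exact hspan ⟨β, trivial, rfl⟩
      rw [Set.image_eq_range] at h1
      obtain ⟨a, ha⟩ := (Submodule.mem_span_range_iff_exists_fun ℝ).1 h1
      exact ⟨a, ha.symm⟩

end Stk

namespace Stk
variable {n : ℕ} {U : Set (Fin n → ℝ)}

theorem cubic_ij {i j : Fin n} (hij : i ≠ j) (a b c : Fin n → ℝ)
    (h : ∀ q : Fin n → ℝ, q j * (∑ k, a k * q k ^ 2) - q i * (∑ k, b k * q k ^ 2)
      + 2 * q i * q j * (∑ k, c k * q k) = 0) :
    (∀ k, k ≠ i → a k = 0) ∧ (∀ k, k ≠ j → b k = 0) ∧ (∀ k, k ≠ i → k ≠ j → c k = 0) ∧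
      2 * c i + a i = 0 ∧ 2 * c j = b j := by
  let T : Fin n → Fin n → Fin n → ℝ := fun x y z =>
    (if x = j then (if y = z then a y else 0) else 0) - (if x = i then (if y = z then b y else 0) else 0)
      + (if x = i then (if y = j then 2 * c z else 0) else 0)
  have hT : ∀ w : Fin n → ℝ, ∑ x, ∑ y, ∑ z, T x y z * w x * w y * w z = 0 := by
    intro w
    rw [← h w]
    simp only [T, add_mul, sub_mul, Finset.sum_add_distrib, Finset.sum_sub_distrib, ite_mul, zero_mul]
    simp only [Finset.sum_ite_irrel, Finset.sum_const_zero, Finset.sum_ite_eq, Finset.sum_ite_eq',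
      Finset.mem_univ, if_true]
    congr 1
    · congr 1
      · rw [Finset.mul_sum]; exact Finset.sum_congr rfl fun k _ => by ring
      · rw [Finset.mul_sum]; exact Finset.sum_congr rfl fun k _ => by ring
    · rw [Finset.mul_sum]; exact Finset.sum_congr rfl fun k _ => by ring
  have P := polar3 T hT
  have hji := hij.symm
  refine ⟨fun k hk => ?_, fun k hk => ?_, fun k hk hk' => ?_, ?_, ?_⟩
  · by_cases hkj : k = j
    · subst hkj
      have := P k k k
      simp [T, hij, hji] at this; linarith
    · have := P j k k
      simp [T, hij, hji, hkj, hk, Ne.symm hk, Ne.symm hkj] at this; linarith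
  · by_cases hkj : k = i
    · subst hkj
      have := P k k k
      simp [T, hij, hji] at this; linarith
    · have := P i k k
      simp [T, hij, hji, hkj, hk, Ne.symm hk, Ne.symm hkj] at this; linarith
  · have := P i j k
    simp [T, hij, hji, hk, hk', Ne.symm hk, Ne.symm hk'] at this; linarith
  · have := P i j i
    have h2 := P i i i
    simp [T, hij, hji] at this h2; linarith
  · have := P i j j
    have h2 := P j j j
    simp [T, hij, hji] at this h2; linarith

/-- the derivative of a diagonalised quadratic form -/
theorem deriv_diag (hU : IsOpen U) (F B : (Fin n → ℝ) → Matrix (Fin n) (Fin n) ℝ)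
    (hF : Smm U F) (hB : Smm U B) (hFs : ∀ x ∈ U, (F x).IsSymm)
    (m : (Fin n → ℝ) → Fin n → ℝ) (hm : ∀ y ∈ U, B y * F y * (B y)ᵀ = diagonal (m y))
    {x} (hx : x ∈ U) (hBu : IsUnit (B x)) (i : Fin n)
    (hmi : m x = Pi.single i 1) (q : Fin n → ℝ) (l : Fin n) :
    ((B x)ᵀ *ᵥ q) ⬝ᵥ (Dm l F x *ᵥ ((B x)ᵀ *ᵥ q))
      = ∑ k, pd l (fun y => m y k) x * q k ^ 2 - 2 * q i * ∑ k, q k * (Dm l B x * (B x)⁻¹) k i := by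
  have hdet := (Matrix.isUnit_iff_isUnit_det _).1 hBu
  have h1 : Dm l (fun y => B y * F y * (B y)ᵀ) x
      = diagonal (fun k => pd l (fun y => m y k) x) := by
    rw [Dm_congr hU hm l hx]
    ext a b
    by_cases hab : a = b
    · subst hab; simp [Dm]
    · simp [Dm, hab, pd_const]
  rw [Dm_mul hU (hB.mul hF) hB.transpose l hx, Dm_mul hU hB hF l hx, Dm_transpose] at h1
  have h2 := hm x hx
  rw [hmi] at h2
  have e1 : F x * (B x)ᵀ = (B x)⁻¹ * diagonal (Pi.single i 1) := by
    rw [← h2, Matrix.mul_assoc, Matrix.nonsing_inv_mul_cancel_left _ _ hdet]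
  have e2 : B x * F x = (Dm l B x * 0) + diagonal (Pi.single i 1) * ((B x)⁻¹)ᵀ := by
    have := congrArg Matrix.transpose e1
    rw [Matrix.transpose_mul, Matrix.transpose_mul, Matrix.transpose_transpose, (hFs x hx).eq,
      diagonal_transpose] at this
    rw [this]; simp
  rw [Matrix.mul_zero, zero_add] at e2
  rw [Matrix.add_mul, Matrix.mul_assoc (Dm l B x), e1, e2] at h1
  have e3 : B x * Dm l F x * (B x)ᵀ = diagonal (fun k => pd l (fun y => m y k) x)
      - (Dm l B x * (B x)⁻¹) * diagonal (Pi.single i 1)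
      - ((Dm l B x * (B x)⁻¹) * diagonal (Pi.single i 1))ᵀ := by
    rw [← h1, Matrix.transpose_mul, Matrix.transpose_mul, diagonal_transpose]
    simp only [Matrix.mul_assoc]
    abel
  have e4 : ((B x)ᵀ *ᵥ q) ⬝ᵥ (Dm l F x *ᵥ ((B x)ᵀ *ᵥ q))
      = q ⬝ᵥ ((B x * Dm l F x * (B x)ᵀ) *ᵥ q) := by
    rw [← mulVec_mulVec, ← mulVec_mulVec, dotProduct_mulVec q, ← mulVec_transpose]
  have e5 : ∀ (R : Matrix (Fin n) (Fin n) ℝ), q ⬝ᵥ (Rᵀ *ᵥ q) = q ⬝ᵥ (R *ᵥ q) := by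
    intro R
    rw [mulVec_transpose, dotProduct_comm, ← dotProduct_mulVec]
  have e6 : ∀ (R : Matrix (Fin n) (Fin n) ℝ), q ⬝ᵥ ((R * diagonal (Pi.single i 1)) *ᵥ q)
      = q i * ∑ k, q k * R k i := by
    intro R
    rw [dotProduct, Finset.mul_sum]
    refine Finset.sum_congr rfl fun k _ => ?_
    simp [mulVec, dotProduct, Matrix.mul_diagonal, Pi.single_apply]
    ring
  rw [e4, e3, Matrix.sub_mulVec, Matrix.sub_mulVec, dotProduct_sub, dotProduct_sub, e5, e6]
  have e7 : q ⬝ᵥ (diagonal (fun k => pd l (fun y => m y k) x) *ᵥ q)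
      = ∑ k, pd l (fun y => m y k) x * q k ^ 2 := by
    simp only [dotProduct, mulVec_diagonal]
    exact Finset.sum_congr rfl fun k _ => by ring
  rw [e7]; ring

end Stk

namespace Stk
variable {n : ℕ} {U : Set (Fin n → ℝ)}

theorem stackel_pt (hU : IsOpen U)
    (K : Fin n → (Fin n → ℝ) → Matrix (Fin n) (Fin n) ℝ) (hK : ∀ α, Smm U (K α))
    (hKs : ∀ α, ∀ x ∈ U, (K α x).IsSymm)
    (hinv : ∀ α β, ∀ x ∈ U, ∀ p : Fin n → ℝ, ∑ k, (p ⬝ᵥ (Dm k (K α) x *ᵥ p)) * (K β x *ᵥ p) k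
      = ∑ k, (p ⬝ᵥ (Dm k (K β) x *ᵥ p)) * (K α x *ᵥ p) k)
    (B d S : (Fin n → ℝ) → Matrix (Fin n) (Fin n) ℝ)
    (hB : Smm U B) (hd : Smm U d) (hS : Smm U S) (hBu : ∀ x ∈ U, IsUnit (B x))
    (hdiag : ∀ α, ∀ x ∈ U, B x * K α x * (B x)ᵀ = diagonal (d x α))
    (hSd : ∀ x ∈ U, S x * d x = 1)
    (hnorm : ∀ i, ∃ α, ∃ c : ℝ, c ≠ 0 ∧ ∀ x ∈ U, S x i α = c) {x} (hx : x ∈ U) :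
    (∀ k l m, pd l (fun y => B y k m) x = pd m (fun y => B y k l) x) ∧
    (∀ i γ j, j ≠ i → ∑ l, (B x)⁻¹ l j * pd l (fun y => S y i γ) x = 0) := by
  have hdet := (Matrix.isUnit_iff_isUnit_det _).1 (hBu x hx)
  let F : Fin n → (Fin n → ℝ) → Matrix (Fin n) (Fin n) ℝ := fun i y => ∑ α, S x i α • K α y
  let m : Fin n → (Fin n → ℝ) → Fin n → ℝ := fun i y k => ∑ α, S x i α * d y α k
  have hF : ∀ i, Smm U (F i) := by
    intro i a b
    simp only [F, Matrix.sum_apply, Matrix.smul_apply, smul_eq_mul]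
    exact Sm.sum fun α _ => (Sm.const _).mul (hK α a b)
  have hFs : ∀ i, ∀ y ∈ U, (F i y).IsSymm := by
    intro i y hy
    unfold Matrix.IsSymm
    simp only [F]
    rw [Matrix.transpose_sum]
    exact Finset.sum_congr rfl fun α _ => by rw [Matrix.transpose_smul, (hKs α y hy).eq]
  have hm : ∀ i, ∀ y ∈ U, B y * F i y * (B y)ᵀ = diagonal (m i y) := by
    intro i y hy
    simp only [F, Finset.mul_sum, Finset.sum_mul, Matrix.mul_smul, Matrix.smul_mul, hdiag _ y hy]
    ext a b
    by_cases hab : a = b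
    · subst hab; simp [Matrix.sum_apply, m]
    · simp [Matrix.sum_apply, hab]
  have hmi : ∀ i, m i x = Pi.single i 1 := by
    intro i
    ext k
    have := congrFun (congrFun (hSd x hx) i) k
    rw [Matrix.mul_apply] at this
    simp only [m, this, Matrix.one_apply, Pi.single_apply, eq_comm]
  have hFp : ∀ i (q : Fin n → ℝ) l, (F i x *ᵥ ((B x)ᵀ *ᵥ q)) l = q i * (B x)⁻¹ l i := by
    intro i q l
    have h2 := hm i x hx
    rw [hmi] at h2
    have e1 : F i x * (B x)ᵀ = (B x)⁻¹ * diagonal (Pi.single i 1) := by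
      rw [← h2, Matrix.mul_assoc, Matrix.nonsing_inv_mul_cancel_left _ _ hdet]
    rw [mulVec_mulVec, e1]
    simp [mulVec, dotProduct, Matrix.mul_diagonal, Pi.single_apply, mul_comm]
  have hDF : ∀ i l, Dm l (F i) x = ∑ α, S x i α • Dm l (K α) x := fun i l =>
    Dm_sum hU hK (fun α => S x i α) l hx
  have hFinv : ∀ i j (p : Fin n → ℝ), ∑ k, (p ⬝ᵥ (Dm k (F i) x *ᵥ p)) * (F j x *ᵥ p) k
      = ∑ k, (p ⬝ᵥ (Dm k (F j) x *ᵥ p)) * (F i x *ᵥ p) k := by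
    intro i j p
    have key : ∀ i j, ∑ k, (p ⬝ᵥ (Dm k (F i) x *ᵥ p)) * (F j x *ᵥ p) k
      = ∑ α, ∑ β, S x i α * S x j β * ∑ k, (p ⬝ᵥ (Dm k (K α) x *ᵥ p)) * (K β x *ᵥ p) k := by
      intro i j
      simp only [hDF]
      simp only [F, Matrix.sum_mulVec, Matrix.smul_mulVec, Finset.sum_apply, Pi.smul_apply,
        smul_eq_mul, Finset.mul_sum, dotProduct_sum, dotProduct_smul, Finset.sum_mul]
      rw [Finset.sum_comm]
      conv_rhs => rw [Finset.sum_comm]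
      refine Finset.sum_congr rfl fun β _ => ?_
      rw [Finset.sum_comm]
      exact Finset.sum_congr rfl fun _ _ => Finset.sum_congr rfl fun _ _ => by ring
    rw [key, key, Finset.sum_comm]
    refine Finset.sum_congr rfl fun β _ => Finset.sum_congr rfl fun α _ => ?_
    rw [hinv α β x hx p]; ring
  let a : Fin n → Fin n → Fin n → ℝ := fun i j k => ∑ l, (B x)⁻¹ l j * pd l (fun y => m i y k) x
  let R : Fin n → Matrix (Fin n) (Fin n) ℝ := fun k => Matrix.of fun l m => Dm l B x k m
  let Q : Fin n → Matrix (Fin n) (Fin n) ℝ := fun k => ((B x)⁻¹)ᵀ * (R k * (B x)⁻¹)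
  have hQ : ∀ k j i, Q k j i = ∑ l, (B x)⁻¹ l j * (Dm l B x * (B x)⁻¹) k i := by
    intro k j i
    simp only [Q]
    rw [Matrix.mul_apply]
    exact Finset.sum_congr rfl fun l _ => rfl
  have half : ∀ i j (q : Fin n → ℝ), ∑ k, (((B x)ᵀ *ᵥ q) ⬝ᵥ (Dm k (F i) x *ᵥ ((B x)ᵀ *ᵥ q)))
        * (F j x *ᵥ ((B x)ᵀ *ᵥ q)) k
      = q j * (∑ k, a i j k * q k ^ 2) - 2 * q i * q j * ∑ k, Q k j i * q k := by
    intro i j q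
    simp only [deriv_diag hU (F i) B (hF i) hB (hFs i) (m i) (hm i) hx (hBu x hx) i (hmi i), hFp,
      a, hQ, sub_mul, Finset.sum_sub_distrib, Finset.mul_sum, Finset.sum_mul]
    congr 1
    · rw [Finset.sum_comm]
      exact Finset.sum_congr rfl fun _ _ => Finset.sum_congr rfl fun _ _ => by ring
    · rw [Finset.sum_comm]
      exact Finset.sum_congr rfl fun _ _ => Finset.sum_congr rfl fun _ _ => by ring
  have main : ∀ i j, i ≠ j → _ := fun i j hij =>
    cubic_ij hij (a i j) (a j i) (fun k => Q k i j - Q k j i) (by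
      intro q
      have h := hFinv i j ((B x)ᵀ *ᵥ q)
      rw [half, half] at h
      simp only [sub_mul, Finset.sum_sub_distrib, mul_sub]
      linarith)
  have hvS : ∀ i γ j, j ≠ i → ∑ l, (B x)⁻¹ l j * pd l (fun y => S y i γ) x = - (a i j i * S x i γ) := by
    intro i γ j hji
    have hdS : d x * S x = 1 := mul_eq_one_comm.1 (hSd x hx)
    have hl : ∀ l, pd l (fun y => S y i γ) x = - ∑ k, pd l (fun y => m i y k) x * S x k γ := by
      intro l
      have h1 := Dm_mul hU hS hd l hx
      rw [Dm_congr hU hSd l hx] at h1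
      have h0 : Dm l (fun _ => (1 : Matrix (Fin n) (Fin n) ℝ)) x = 0 := by
        ext u v; simp [Dm, pd_const]
      rw [h0] at h1
      have h2 : Dm l S x = - (S x * Dm l d x * S x) := by
        have h3 : Dm l S x * d x = - (S x * Dm l d x) := eq_neg_of_add_eq_zero_left h1.symm
        rw [← Matrix.neg_mul, ← h3, Matrix.mul_assoc, hdS, Matrix.mul_one]
      have h4 : pd l (fun y => S y i γ) x = Dm l S x i γ := rfl
      rw [h4, h2, Matrix.neg_apply, Matrix.mul_apply]
      congr 1
      refine Finset.sum_congr rfl fun k _ => ?_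
      congr 1
      simp only [m]
      rw [pd_sum l fun α _ => ((Sm.const _).mul (hd α k)).diff hU hx, Matrix.mul_apply]
      refine Finset.sum_congr rfl fun α _ => ?_
      rw [pd_const_mul l _ ((hd α k).diff hU hx)]; rfl
    have h5 : ∑ l, (B x)⁻¹ l j * pd l (fun y => S y i γ) x = - ∑ k, a i j k * S x k γ := by
      simp only [hl, a, mul_neg, Finset.sum_neg_distrib, Finset.mul_sum, Finset.sum_mul]
      rw [Finset.sum_comm]
      congr 1
      exact Finset.sum_congr rfl fun _ _ => Finset.sum_congr rfl fun _ _ => by ring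
    rw [h5, Finset.sum_eq_single i]
    · intro k _ hk
      rw [(main i j hji.symm).1 k hk, zero_mul]
    · simp
  have ha : ∀ i j, j ≠ i → a i j i = 0 := by
    intro i j hji
    obtain ⟨α, c, hc, hcS⟩ := hnorm i
    have h1 := hvS i α j hji
    have h2 : ∀ l, pd l (fun y => S y i α) x = 0 := fun l => by
      rw [pd_congr hU hcS l hx, pd_const]
    simp only [h2, mul_zero, Finset.sum_const_zero, hcS x hx] at h1
    have := neg_eq_zero.1 h1.symm
    exact (mul_eq_zero.1 this).resolve_right hc
  have hQs : ∀ k i j, Q k i j = Q k j i := by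
    intro k i j
    by_cases hij : i = j
    · rw [hij]
    obtain ⟨-, -, h3, h4, h5⟩ := main i j hij
    rw [ha i j (Ne.symm hij)] at h4
    rw [ha j i hij] at h5
    by_cases hki : k = i
    · subst hki; linarith
    by_cases hkj : k = j
    · subst hkj; linarith
    have := h3 k hki hkj
    linarith
  refine ⟨fun k l m' => ?_, fun i γ j hji => ?_⟩
  · have hQT : (Q k)ᵀ = Q k := by ext i j; exact hQs k j i
    have hR : R k = (B x)ᵀ * Q k * B x := by
      simp only [Q]
      rw [← Matrix.mul_assoc (B x)ᵀ, ← Matrix.transpose_mul, Matrix.nonsing_inv_mul _ hdet,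
        Matrix.transpose_one, Matrix.one_mul, Matrix.mul_assoc, Matrix.nonsing_inv_mul _ hdet,
        Matrix.mul_one]
    have hRT : (R k)ᵀ = R k := by
      have aux : ∀ q b : Matrix (Fin n) (Fin n) ℝ, qᵀ = q → (bᵀ * q * b)ᵀ = bᵀ * q * b := by
        intro q b hq
        rw [Matrix.transpose_mul, Matrix.transpose_mul, hq, Matrix.transpose_transpose,
          Matrix.mul_assoc]
      rw [hR]
      exact aux _ _ hQT
    exact (congrFun (congrFun hRT l) m').symm
  · rw [hvS i γ j hji, ha i j hji, zero_mul, neg_zero]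

end Stk

namespace Stk
variable {n : ℕ} {U : Set (Fin n → ℝ)}

/-- invertible matrix as continuous linear equivalence -/
noncomputable def eqv (B : Matrix (Fin n) (Fin n) ℝ) (hB : IsUnit B) : (Fin n → ℝ) ≃L[ℝ] (Fin n → ℝ) :=
  (Matrix.toLin'OfInv (M := B⁻¹) (M' := B)
    (Matrix.nonsing_inv_mul _ ((Matrix.isUnit_iff_isUnit_det _).1 hB))
    (Matrix.mul_nonsing_inv _ ((Matrix.isUnit_iff_isUnit_det _).1 hB))).toContinuousLinearEquiv

theorem eqv_apply (B : Matrix (Fin n) (Fin n) ℝ) (hB : IsUnit B) (v) : eqv B hB v = B *ᵥ v := by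
  unfold eqv
  simp
  rfl
theorem eqv_symm_apply (B : Matrix (Fin n) (Fin n) ℝ) (hB : IsUnit B) (v) :
    (eqv B hB).symm v = B⁻¹ *ᵥ v := by
  unfold eqv
  simp
  rfl

theorem exists_potential {x₀ : Fin n → ℝ} {r : ℝ} (b : Fin n → (Fin n → ℝ) → ℝ)
    (hb : ∀ m, Sm (Metric.ball x₀ r) (b m))
    (hc : ∀ x ∈ Metric.ball x₀ r, ∀ l m, pd l (b m) x = pd m (b l) x) :
    ∃ f : (Fin n → ℝ) → ℝ, Sm (Metric.ball x₀ r) f ∧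
      ∀ x ∈ Metric.ball x₀ r, HasFDerivAt f
        (∑ m, b m x • (ContinuousLinearMap.proj (R := ℝ) (φ := fun _ : Fin n => ℝ) m)) x := by
  let s := Metric.ball x₀ r
  have hso : IsOpen s := Metric.isOpen_ball
  let ω : (Fin n → ℝ) → (Fin n → ℝ) →L[ℝ] ℝ := fun x =>
    ∑ m, b m x • (ContinuousLinearMap.proj (R := ℝ) (φ := fun _ : Fin n => ℝ) m)
  have hω : ContDiffOn ℝ (⊤ : ℕ∞) ω s :=
    ContDiffOn.sum fun m _ => ContDiffOn.smul (hb m) contDiffOn_const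
  have hd : ∀ a ∈ s, ∀ x, fderiv ℝ ω a x = ∑ m, fderiv ℝ (b m) a x •
      (ContinuousLinearMap.proj (R := ℝ) (φ := fun _ : Fin n => ℝ) m) := by
    intro a ha x
    have h1 := HasFDerivAt.fun_sum (u := Finset.univ) (fun m _ =>
      (((hb m).diff hso ha).hasFDerivAt.smul_const
        (ContinuousLinearMap.proj (R := ℝ) (φ := fun _ : Fin n => ℝ) m)))
    rw [show fderiv ℝ ω a = _ from h1.fderiv]
    simp
  obtain ⟨f, hf⟩ := Convex.exists_forall_hasFDerivAt_of_fderiv_symmetric (𝕜 := ℝ) (s := s) (ω := ω)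
    (convex_ball x₀ r) hso (hω.differentiableOn (by simp)) (by
      intro a ha x y
      rw [hd a ha, hd a ha]
      simp only [_root_.sum_apply, _root_.smul_apply, ContinuousLinearMap.proj_apply, smul_eq_mul,
        fderiv_eq_sum, Finset.sum_mul]
      rw [Finset.sum_comm]
      refine Finset.sum_congr rfl fun l _ => Finset.sum_congr rfl fun m _ => ?_
      rw [hc a ha l m]; ring)
  refine ⟨f, ?_, hf⟩
  refine (contDiffOn_infty_iff_fderiv_of_isOpen hso).2 ⟨fun a ha =>
    (hf a ha).differentiableAt.differentiableWithinAt, hω.congr fun a ha => (hf a ha).fderiv⟩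

theorem local_coords (hU : IsOpen U) (B S : (Fin n → ℝ) → Matrix (Fin n) (Fin n) ℝ)
    (hB : Smm U B) (hS : Smm U S) (hBu : ∀ x ∈ U, IsUnit (B x))
    (hcl : ∀ x ∈ U, ∀ k l m, pd l (fun y => B y k m) x = pd m (fun y => B y k l) x)
    (hrow : ∀ x ∈ U, ∀ i γ j, j ≠ i → ∑ l, (B x)⁻¹ l j * pd l (fun y => S y i γ) x = 0)
    {x₀ : Fin n → ℝ} (hx₀ : x₀ ∈ U) :
    ∃ (V W : Set (Fin n → ℝ)) (φ ψ : (Fin n → ℝ) → (Fin n → ℝ)),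
        IsOpen V ∧ V ⊆ U ∧ x₀ ∈ V ∧ IsOpen W ∧
        ContDiffOn ℝ (⊤ : ℕ∞) φ V ∧ ContDiffOn ℝ (⊤ : ℕ∞) ψ W ∧
        φ '' V = W ∧ (∀ x ∈ V, ψ (φ x) = x) ∧ (∀ y ∈ W, φ (ψ y) = y) ∧
        (∀ y ∈ W, ψ y ∈ V) ∧ (∀ x ∈ V, jacobian φ x = B x) ∧
        (∀ i j, ∀ y ∈ W, ∀ y' ∈ W, y i = y' i → S (ψ y) i j = S (ψ y') i j) := by
  obtain ⟨r, hr, hrU⟩ := Metric.isOpen_iff.1 hU x₀ hx₀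
  have hso : IsOpen (Metric.ball x₀ r) := Metric.isOpen_ball
  have hx₀b : x₀ ∈ Metric.ball x₀ r := Metric.mem_ball_self hr
  choose f hf hf' using fun k => exists_potential (x₀ := x₀) (r := r) (fun m x => B x k m)
    (fun m => (hB k m).mono hrU) (fun x hx l m => hcl x (hrU hx) k l m)
  let φ : (Fin n → ℝ) → (Fin n → ℝ) := fun x k => f k x
  have hφ : ContDiffOn ℝ (⊤ : ℕ∞) φ (Metric.ball x₀ r) := contDiffOn_pi.2 hf
  have hφ' : ∀ x (hx : x ∈ Metric.ball x₀ r),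
      HasFDerivAt φ (eqv (B x) (hBu x (hrU hx)) : (Fin n → ℝ) →L[ℝ] (Fin n → ℝ)) x := by
    intro x hx
    refine hasFDerivAt_pi'.2 fun k => ?_
    have heq : (ContinuousLinearMap.proj (R := ℝ) (φ := fun _ : Fin n => ℝ) k).comp
        (eqv (B x) (hBu x (hrU hx)) : (Fin n → ℝ) →L[ℝ] (Fin n → ℝ))
        = ∑ m, B x k m • ContinuousLinearMap.proj (R := ℝ) (φ := fun _ : Fin n => ℝ) m := by
      refine ContinuousLinearMap.ext fun v => ?_
      simp [eqv_apply, mulVec, dotProduct]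
    rw [heq]
    exact hf' k x hx
  have hφa : ContDiffAt ℝ (⊤ : ℕ∞) φ x₀ := hφ.contDiffAt (hso.mem_nhds hx₀b)
  let e := ContDiffAt.toOpenPartialHomeomorph φ hφa (hφ' x₀ hx₀b) (by simp)
  have hex : ∀ x, e x = φ x := fun x => rfl
  have hes : x₀ ∈ e.source := ContDiffAt.mem_toOpenPartialHomeomorph_source hφa (hφ' x₀ hx₀b) (by simp)
  have ho := e.isOpen_inter_preimage_symm hso
  have hmem : φ x₀ ∈ e.target ∩ e.symm ⁻¹' (Metric.ball x₀ r) := by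
    refine ⟨e.map_source hes, ?_⟩
    rw [Set.mem_preimage, ← hex, e.left_inv hes]; exact hx₀b
  obtain ⟨ρ, hρ, hW⟩ := Metric.isOpen_iff.1 ho _ hmem
  let W := Metric.ball (φ x₀) ρ
  let V := e.source ∩ e ⁻¹' W
  have hWo : IsOpen W := Metric.isOpen_ball
  have hVo : IsOpen V := e.isOpen_inter_preimage hWo
  have hVb : V ⊆ Metric.ball x₀ r := by
    intro x hx
    have := (hW hx.2).2
    rwa [Set.mem_preimage, e.left_inv hx.1] at this
  have hψV : ∀ y ∈ W, e.symm y ∈ V := by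
    intro y hy
    refine ⟨e.map_target (hW hy).1, ?_⟩
    rw [Set.mem_preimage, e.right_inv (hW hy).1]; exact hy
  have hψ' : ∀ y (hy : y ∈ W), HasFDerivAt e.symm
      ((eqv (B (e.symm y)) (hBu _ (hrU (hVb (hψV y hy))))).symm : (Fin n → ℝ) →L[ℝ] (Fin n → ℝ)) y :=
    fun y hy => e.hasFDerivAt_symm (hW hy).1 (hφ' _ (hVb (hψV y hy)))
  refine ⟨V, W, φ, e.symm, hVo, fun x hx => hrU (hVb hx), ⟨hes, Metric.mem_ball_self hρ⟩, hWo,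
    hφ.mono hVb, ?_, ?_, fun x hx => e.left_inv hx.1, fun y hy => e.right_inv (hW hy).1, hψV, ?_, ?_⟩
  · intro y hy
    exact (e.contDiffAt_symm (hW hy).1 (hφ' _ (hVb (hψV y hy)))
      (hφ.contDiffAt (hso.mem_nhds (hVb (hψV y hy))))).contDiffWithinAt
  · ext y
    constructor
    · rintro ⟨x, hx, rfl⟩; exact hx.2
    · intro hy; exact ⟨e.symm y, hψV y hy, e.right_inv (hW hy).1⟩
  · intro x hx
    ext i j
    unfold jacobian
    rw [show fderiv ℝ (fun x' => φ x' i) x = _ from (hf' i x (hVb hx)).fderiv]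
    simp [Pi.single_apply]
  · intro i γ y hy y' hy' hyy
    have hder : ∀ z ∈ W, HasFDerivWithinAt (fun y => S (e.symm y) i γ)
        ((fderiv ℝ (fun x => S x i γ) (e.symm z)).comp (fderiv ℝ e.symm z)) W z := by
      intro z hz
      refine (HasFDerivAt.comp z (g := fun x => S x i γ) ?_ ?_).hasFDerivWithinAt
      · exact ((hS i γ).diff hU (hrU (hVb (hψV z hz)))).hasFDerivAt
      · exact (hψ' z hz).differentiableAt.hasFDerivAt
    obtain ⟨z, hz, hz'⟩ := domain_mvt hder (convex_ball _ _) hy hy'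
    have hzW : z ∈ W := (convex_ball _ _).segment_subset hy hy' hz
    rw [(hψ' z hzW).fderiv, ContinuousLinearMap.comp_apply, fderiv_eq_sum] at hz'
    have h0 : ∑ a, (eqv (B (e.symm z)) (hBu _ (hrU (hVb (hψV z hzW))))).symm (y' - y) a *
        pd a (fun x => S x i γ) (e.symm z) = 0 := by
      simp only [eqv_symm_apply, mulVec, dotProduct, Finset.sum_mul]
      rw [Finset.sum_comm]
      refine Finset.sum_eq_zero fun j _ => ?_
      by_cases hj : j = i
      · subst hj
        simp [hyy]
      · have := hrow _ (hrU (hVb (hψV z hzW))) i γ j hj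
        rw [← mul_zero ((y' - y) j), ← this, Finset.mul_sum]
        exact Finset.sum_congr rfl fun _ _ => by ring
    have : S (e.symm y') i γ - S (e.symm y) i γ = 0 := hz'.trans h0
    linarith

end Stk

namespace Stk
variable {n : ℕ} {U : Set (Fin n → ℝ)}

theorem ift_smooth {E : Type*} [NormedAddCommGroup E] [NormedSpace ℝ E] [FiniteDimensional ℝ E]
    {O : Set E} (hO : IsOpen O) {Φ : E → E} (hΦ : ContDiffOn ℝ (⊤ : ℕ∞) Φ O) {a : E} (ha : a ∈ O)
    (hinj : ∀ v, fderiv ℝ Φ a v = 0 → v = 0) :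
    ∃ (T : Set E) (ψ : E → E), IsOpen T ∧ Φ a ∈ T ∧ ContDiffOn ℝ (⊤ : ℕ∞) ψ T ∧
      (∀ y ∈ T, ψ y ∈ O ∧ Φ (ψ y) = y) ∧ ψ (Φ a) = a := by
  have : CompleteSpace E := FiniteDimensional.complete ℝ E
  have hi : Function.Injective (fderiv ℝ Φ a : E →ₗ[ℝ] E) := by
    rw [← LinearMap.ker_eq_bot, LinearMap.ker_eq_bot']
    exact hinj
  let e₀ : E ≃L[ℝ] E := (LinearEquiv.ofInjectiveEndo _ hi).toContinuousLinearEquiv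
  have he₀ : (e₀ : E →L[ℝ] E) = fderiv ℝ Φ a := by
    refine ContinuousLinearMap.ext fun v => ?_
    simp [e₀]
  have hd : ∀ z ∈ O, HasFDerivAt Φ (fderiv ℝ Φ z) z := fun z hz =>
    ((hΦ.contDiffAt (hO.mem_nhds hz)).differentiableAt (by simp)).hasFDerivAt
  have hfc : ContinuousOn (fderiv ℝ Φ) O :=
    (ContDiffOn.fderiv_of_isOpen (m := (⊤ : ℕ∞)) hΦ hO (by simp)).continuousOn
  let O' := O ∩ fderiv ℝ Φ ⁻¹' (Set.range ((↑) : (E ≃L[ℝ] E) → E →L[ℝ] E))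
  have hO' : IsOpen O' := hfc.isOpen_inter_preimage hO ContinuousLinearEquiv.isOpen
  have haO' : a ∈ O' := ⟨ha, e₀, he₀⟩
  have hΦa := hΦ.contDiffAt (hO.mem_nhds ha)
  have hda : HasFDerivAt Φ (e₀ : E →L[ℝ] E) a := by rw [he₀]; exact hd a ha
  let e := ContDiffAt.toOpenPartialHomeomorph Φ hΦa hda (by simp)
  have hex : ∀ x, e x = Φ x := fun x => rfl
  have hes : a ∈ e.source := ContDiffAt.mem_toOpenPartialHomeomorph_source hΦa hda (by simp)
  refine ⟨e.target ∩ e.symm ⁻¹' O', e.symm, e.isOpen_inter_preimage_symm hO', ?_, ?_, ?_, ?_⟩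
  · refine ⟨e.map_source hes, ?_⟩
    rw [Set.mem_preimage, ← hex, e.left_inv hes]; exact haO'
  · rintro y ⟨hy, hy'⟩
    obtain ⟨e₁, he₁⟩ := hy'.2
    refine (e.contDiffAt_symm (f₀' := e₁) hy ?_ (hΦ.contDiffAt (hO.mem_nhds hy'.1))).contDiffWithinAt
    rw [he₁]
    exact hd _ hy'.1
  · rintro y ⟨hy, hy'⟩
    exact ⟨hy'.1, e.right_inv hy⟩
  · exact e.left_inv hes

abbrev EE (n : ℕ) := (Fin n → ℝ) × (Fin n → Fin n → ℝ)

theorem frame (hU : IsOpen U) (G M : (Fin n → ℝ) → Matrix (Fin n) (Fin n) ℝ)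
    (hG : Smm U G) (hM : Smm U M) (hGs : ∀ x ∈ U, (G x).IsSymm) (hMs : ∀ x ∈ U, (M x).IsSymm)
    {x₀ : Fin n → ℝ} (hx₀ : x₀ ∈ U) (B₀ : Matrix (Fin n) (Fin n) ℝ) (hB₀ : IsUnit B₀)
    (g m : Fin n → ℝ) (hg : B₀ * G x₀ * B₀ᵀ = diagonal g) (hm : B₀ * M x₀ * B₀ᵀ = diagonal m)
    (hne : ∀ i j, i ≠ j → m i * g j ≠ m j * g i) :
    ∃ (V : Set (Fin n → ℝ)) (B : (Fin n → ℝ) → Matrix (Fin n) (Fin n) ℝ), IsOpen V ∧ V ⊆ U ∧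
      x₀ ∈ V ∧ Smm V B ∧ B x₀ = B₀ ∧ ∀ x ∈ V, (B x * G x * (B x)ᵀ).IsDiag ∧
        (B x * M x * (B x)ᵀ).IsDiag := by
  have hdet := (Matrix.isUnit_iff_isUnit_det _).1 hB₀
  let q : Matrix (Fin n) (Fin n) ℝ → (Fin n → Fin n → ℝ) → Fin n → Fin n → ℝ :=
    fun A b i j => ∑ k, ∑ l, b i k * A k l * b j l
  have hq : ∀ A b i j, q A b i j = (Matrix.of b * A * (Matrix.of b)ᵀ) i j := by
    intro A b i j
    simp only [q, Matrix.mul_apply, Matrix.transpose_apply, Matrix.of_apply, Finset.sum_mul]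
    rw [Finset.sum_comm]
  let F : EE n → Fin n → Fin n → ℝ := fun z i j =>
    if i < j then q (G z.1) z.2 i j else if j < i then q (M z.1) z.2 i j else
      ∑ k, z.2 i k * B₀⁻¹ k i
  let Φ : EE n → EE n := fun z => (z.1, F z)
  let O : Set (EE n) := Prod.fst ⁻¹' U
  have hO : IsOpen O := hU.preimage continuous_fst
  have hcoord : ∀ i j, ContDiffOn ℝ (⊤ : ℕ∞) (fun z : EE n => z.2 i j) O := by
    intro i j
    have : ContDiff ℝ (⊤ : ℕ∞) (fun z : EE n => z.2 i j) := by fun_prop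
    exact this.contDiffOn
  have hfst : ContDiffOn ℝ (⊤ : ℕ∞) (fun z : EE n => z.1) O := contDiff_fst.contDiffOn
  have hqs : ∀ A : (Fin n → ℝ) → Matrix (Fin n) (Fin n) ℝ, Smm U A → ∀ i j,
      ContDiffOn ℝ (⊤ : ℕ∞) (fun z : EE n => q (A z.1) z.2 i j) O := by
    intro A hA i j
    refine ContDiffOn.sum fun k _ => ContDiffOn.sum fun l _ => ((hcoord i k).mul ?_).mul (hcoord j l)
    exact ContDiffOn.comp (g := fun x => A x k l) (hA k l) hfst fun z hz => hz
  have hF : ContDiffOn ℝ (⊤ : ℕ∞) F O := by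
    refine contDiffOn_pi.2 fun i => contDiffOn_pi.2 fun j => ?_
    simp only [F]
    split_ifs
    · exact hqs G hG i j
    · exact hqs M hM i j
    · exact ContDiffOn.sum fun k _ => (hcoord i k).mul contDiffOn_const
  have hΦ : ContDiffOn ℝ (⊤ : ℕ∞) Φ O := hfst.prodMk hF
  let b₀ : Fin n → Fin n → ℝ := fun i j => B₀ i j
  have hb₀ : Matrix.of b₀ = B₀ := rfl
  let a : EE n := (x₀, b₀)
  have haO : a ∈ O := hx₀
  have hinj : ∀ v, fderiv ℝ Φ a v = 0 → v = 0 := by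
    rintro ⟨ξ, δ⟩ hv
    have hda : HasFDerivAt Φ (fderiv ℝ Φ a) a :=
      ((hΦ.contDiffAt (hO.mem_nhds haO)).differentiableAt (by simp)).hasFDerivAt
    have hline : HasDerivAt (fun t : ℝ => a + t • ((ξ, δ) : EE n)) (ξ, δ) 0 := by
      have h := ((hasDerivAt_id (0:ℝ)).smul_const ((ξ, δ) : EE n)).const_add a
      rw [one_smul] at h
      exact h
    have hcomp : HasDerivAt (fun t : ℝ => Φ (a + t • ((ξ, δ) : EE n))) 0 0 := by
      have := HasFDerivAt.comp_hasDerivAt (0:ℝ) (l := Φ) (l' := fderiv ℝ Φ a)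
        (f := fun t : ℝ => a + t • ((ξ, δ) : EE n)) (f' := (ξ, δ)) (by simpa using hda) hline
      rw [hv] at this
      exact this
    have hξ : ξ = 0 := by
      have h1 : HasDerivAt (fun t : ℝ => (Φ (a + t • ((ξ, δ) : EE n))).1) 0 0 :=
        (hasFDerivAt_fst (𝕜 := ℝ) (E := Fin n → ℝ) (F := Fin n → Fin n → ℝ)).comp_hasDerivAt (0:ℝ) hcomp
      have h2 : HasDerivAt (fun t : ℝ => (Φ (a + t • ((ξ, δ) : EE n))).1) ξ 0 := by
        have : (fun t : ℝ => (Φ (a + t • ((ξ, δ) : EE n))).1) = fun t : ℝ => x₀ + t • ξ := rfl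
        rw [this]
        simpa using ((hasDerivAt_id (0:ℝ)).smul_const ξ).const_add x₀
      exact h2.unique h1
    subst hξ
    have hFd : ∀ i j, HasDerivAt (fun t : ℝ => F (x₀, b₀ + t • δ) i j) 0 0 := by
      intro i j
      have h1 : HasDerivAt (fun t : ℝ => (Φ (a + t • ((0, δ) : EE n))).2) 0 0 :=
        (hasFDerivAt_snd (𝕜 := ℝ) (E := Fin n → ℝ) (F := Fin n → Fin n → ℝ)).comp_hasDerivAt (0:ℝ) hcomp
      have h2 := hasDerivAt_pi.1 (hasDerivAt_pi.1 h1 i) j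
      have h3 : (fun t : ℝ => (Φ (a + t • ((0, δ) : EE n))).2 i j)
          = fun t : ℝ => F (x₀, b₀ + t • δ) i j := by
        ext t
        have : a + t • ((0, δ) : EE n) = (x₀, b₀ + t • δ) := by
          refine Prod.ext ?_ ?_
          · change x₀ + t • (0 : Fin n → ℝ) = x₀
            rw [smul_zero, add_zero]
          · rfl
        rw [this]
      rw [h3] at h2
      exact h2
    let ε := Matrix.of δ * B₀⁻¹
    have hqd : ∀ (A : Matrix (Fin n) (Fin n) ℝ) (w : Fin n → ℝ), A.IsSymm →
        B₀ * A * B₀ᵀ = diagonal w → ∀ i j,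
        HasDerivAt (fun t : ℝ => q A (b₀ + t • δ) i j) (ε i j * w j + ε j i * w i) 0 := by
      intro A w hA hw i j
      have e0 : A * B₀ᵀ = B₀⁻¹ * diagonal w := by
        rw [← hw, Matrix.mul_assoc, Matrix.nonsing_inv_mul_cancel_left _ _ hdet]
      have e1 : Matrix.of δ * A * B₀ᵀ = ε * diagonal w := by
        rw [Matrix.mul_assoc, e0, ← Matrix.mul_assoc]
      have e2 : B₀ * A * (Matrix.of δ)ᵀ = (ε * diagonal w)ᵀ := by
        rw [← e1, Matrix.transpose_mul, Matrix.transpose_mul, hA.eq, Matrix.transpose_transpose,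
          Matrix.mul_assoc]
      have hpoly : (fun t : ℝ => q A (b₀ + t • δ) i j) = fun t : ℝ => (B₀ * A * B₀ᵀ) i j
          + t * (ε i j * w j + ε j i * w i) + t ^ 2 * (Matrix.of δ * A * (Matrix.of δ)ᵀ) i j := by
        ext t
        rw [hq]
        have : Matrix.of (b₀ + t • δ) = B₀ + t • Matrix.of δ := rfl
        rw [this, Matrix.transpose_add, Matrix.transpose_smul]
        simp only [Matrix.add_mul, Matrix.mul_add, Matrix.smul_mul, Matrix.mul_smul, e1, e2]
        simp only [Matrix.add_apply, Matrix.smul_apply, smul_eq_mul, Matrix.transpose_apply,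
          Matrix.mul_diagonal]
        ring
      rw [hpoly]
      have := (((hasDerivAt_id (0:ℝ)).mul_const (ε i j * w j + ε j i * w i)).const_add
        ((B₀ * A * B₀ᵀ) i j)).add
        (((hasDerivAt_id (0:ℝ)).pow 2).mul_const ((Matrix.of δ * A * (Matrix.of δ)ᵀ) i j))
      have e3 : (1:ℝ) * (ε i j * w j + ε j i * w i) + (((2:ℕ):ℝ) * id (0:ℝ) ^ (2-1) * 1) *
          (Matrix.of δ * A * (Matrix.of δ)ᵀ) i j = ε i j * w j + ε j i * w i := by simp
      rw [e3] at this
      exact this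
    have hlt : ∀ i j, i < j → ε i j = 0 ∧ ε j i = 0 := by
      intro i j hij
      have h1 := hFd i j
      have h2 := hFd j i
      simp only [F, if_pos hij] at h1
      simp only [F, if_pos hij, if_neg (not_lt.2 hij.le)] at h2
      have h3 := h1.unique (hqd _ g (hGs x₀ hx₀) hg i j)
      have h4 := h2.unique (hqd _ m (hMs x₀ hx₀) hm j i)
      have hn := hne i j hij.ne
      have hd : m i * g j - m j * g i ≠ 0 := sub_ne_zero.2 hn
      constructor
      · have : ε i j * (m i * g j - m j * g i) = 0 := by linear_combination g i * h4 - m i * h3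
        exact (mul_eq_zero.1 this).resolve_right hd
      · have : ε j i * (m i * g j - m j * g i) = 0 := by linear_combination m j * h3 - g j * h4
        exact (mul_eq_zero.1 this).resolve_right hd
    have hdg : ∀ i, ε i i = 0 := by
      intro i
      have h1 := hFd i i
      simp only [F, lt_irrefl, if_false] at h1
      have h2 : HasDerivAt (fun t : ℝ => ∑ k, (b₀ + t • δ) i k * B₀⁻¹ k i) (ε i i) 0 := by
        have : (fun t : ℝ => ∑ k, (b₀ + t • δ) i k * B₀⁻¹ k i)
            = fun t : ℝ => (∑ k, b₀ i k * B₀⁻¹ k i) + t * ε i i := by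
          ext t
          simp only [ε, Matrix.mul_apply, Matrix.of_apply, Finset.mul_sum, ← Finset.sum_add_distrib]
          refine Finset.sum_congr rfl fun k _ => ?_
          simp only [Pi.add_apply, Pi.smul_apply, smul_eq_mul]; ring
        rw [this]
        simpa using ((hasDerivAt_id (0:ℝ)).mul_const (ε i i)).const_add (∑ k, b₀ i k * B₀⁻¹ k i)
      exact h2.unique h1
    have hε : ε = 0 := by
      ext i j
      rcases lt_trichotomy i j with h | h | h
      · exact (hlt i j h).1
      · subst h; exact hdg i
      · exact (hlt j i h).2
    have hδ : Matrix.of δ = 0 := by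
      have : Matrix.of δ = ε * B₀ := by
        simp only [ε]
        rw [Matrix.mul_assoc, Matrix.nonsing_inv_mul _ hdet, Matrix.mul_one]
      rw [this, hε, Matrix.zero_mul]
    have : δ = 0 := by
      ext i j; exact congrFun (congrFun hδ i) j
    rw [this]; rfl
  obtain ⟨T, ψ, hT, haT, hψ, hψT, hψa⟩ := ift_smooth hO hΦ haO hinj
  let c := F a
  have hcd : ∀ i j, i ≠ j → c i j = 0 := by
    intro i j hij
    simp only [c, F, a, hq, hb₀, hg, hm]
    have : ¬ i = j := hij
    split_ifs with h1 h2
    · exact diagonal_apply_ne _ hij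
    · exact diagonal_apply_ne _ hij
    · exact absurd (le_antisymm (not_lt.1 h2) (not_lt.1 h1)) hij
  let V : Set (Fin n → ℝ) := (fun x => ((x, c) : EE n)) ⁻¹' T
  have hV : IsOpen V := hT.preimage (by fun_prop)
  have h1 : ∀ x ∈ V, (ψ (x, c)).1 = x := fun x hx => congrArg Prod.fst (hψT _ hx).2
  have h2 : ∀ x ∈ V, F (x, (ψ (x, c)).2) = c := fun x hx => by
    have := congrArg Prod.snd (hψT _ hx).2
    have h3 : ψ (x, c) = (x, (ψ (x, c)).2) := Prod.ext (h1 x hx) rfl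
    rw [h3] at this
    exact this
  refine ⟨V, fun x => Matrix.of (ψ (x, c)).2, hV, ?_, haT, ?_, ?_, ?_⟩
  · intro x hx
    have := (hψT _ hx).1
    simp only [O, Set.mem_preimage, h1 x hx] at this
    exact this
  · have hs : ContDiffOn ℝ (⊤ : ℕ∞) (fun x : Fin n → ℝ => ψ (x, c)) V :=
      hψ.comp (contDiff_id.prodMk contDiff_const).contDiffOn fun x hx => hx
    have hs2 : ContDiffOn ℝ (⊤ : ℕ∞) (fun x : Fin n → ℝ => (ψ (x, c)).2) V := hs.snd
    intro i j
    exact contDiffOn_pi.1 (contDiffOn_pi.1 hs2 i) j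
  · change Matrix.of (ψ (Φ a)).2 = B₀
    rw [hψa]
    rfl
  · intro x hx
    have hsy : ∀ A : Matrix (Fin n) (Fin n) ℝ, A.IsSymm → ∀ (b : Matrix (Fin n) (Fin n) ℝ) i j,
        (b * A * bᵀ) i j = (b * A * bᵀ) j i := by
      intro A hA b i j
      have : (b * A * bᵀ)ᵀ = b * A * bᵀ := by
        rw [Matrix.transpose_mul, Matrix.transpose_mul, hA.eq, Matrix.transpose_transpose,
          Matrix.mul_assoc]
      exact congrFun (congrFun this j) i
    have hxU : x ∈ U := by
      have := (hψT _ hx).1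
      simp only [O, Set.mem_preimage, h1 x hx] at this
      exact this
    have k1 : ∀ i j, i < j → (Matrix.of (ψ (x, c)).2 * G x * (Matrix.of (ψ (x, c)).2)ᵀ) i j = 0 := by
      intro i j hij
      have h := congrFun (congrFun (h2 x hx) i) j
      rw [hcd i j hij.ne] at h
      simp only [F, if_pos hij] at h
      rw [← hq]; exact h
    have k2 : ∀ i j, i < j → (Matrix.of (ψ (x, c)).2 * M x * (Matrix.of (ψ (x, c)).2)ᵀ) j i = 0 := by
      intro i j hij
      have h := congrFun (congrFun (h2 x hx) j) i
      rw [hcd j i hij.ne'] at h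
      simp only [F, if_pos hij, if_neg (not_lt.2 hij.le)] at h
      rw [← hq]; exact h
    constructor
    · intro i j hij
      rcases lt_or_gt_of_ne hij with h | h
      · exact k1 i j h
      · rw [hsy _ (hGs x hxU)]; exact k1 j i h
    · intro i j hij
      rcases lt_or_gt_of_ne hij with h | h
      · rw [hsy _ (hMs x hxU)]; exact k2 i j h
      · exact k2 j i h

end Stk

namespace Stk
variable {n : ℕ} {U : Set (Fin n → ℝ)}

theorem conj_trip {B K G M : Matrix (Fin n) (Fin n) ℝ} (hB : IsUnit B) :
    B * (K * G⁻¹ * M) * Bᵀ = (B * K * Bᵀ) * (B * G * Bᵀ)⁻¹ * (B * M * Bᵀ) := by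
  have hd := (Matrix.isUnit_iff_isUnit_det _).1 hB
  have hd' : IsUnit (Bᵀ).det := by rwa [Matrix.det_transpose]
  rw [Matrix.mul_inv_rev, Matrix.mul_inv_rev]
  simp only [Matrix.mul_assoc]
  rw [Matrix.nonsing_inv_mul_cancel_left _ _ hd, Matrix.mul_nonsing_inv_cancel_left _ _ hd']

theorem conj_inj {B X Y : Matrix (Fin n) (Fin n) ℝ} (hB : IsUnit B) (h : B * X * Bᵀ = B * Y * Bᵀ) :
    X = Y := by
  have hB' : IsUnit Bᵀ := by
    rw [Matrix.isUnit_iff_isUnit_det, Matrix.det_transpose, ← Matrix.isUnit_iff_isUnit_det]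
    exact hB
  exact hB.mul_left_cancel (hB'.mul_right_cancel h)

theorem simdiag_comm {B K G M : Matrix (Fin n) (Fin n) ℝ} (hB : IsUnit B)
    (hK : (B * K * Bᵀ).IsDiag) (hG : (B * G * Bᵀ).IsDiag) (hM : (B * M * Bᵀ).IsDiag) :
    K * G⁻¹ * M = M * G⁻¹ * K := by
  apply conj_inj hB
  rw [conj_trip hB, conj_trip hB, ← hK.diagonal_diag, ← hG.diagonal_diag, ← hM.diagonal_diag,
    Matrix.inv_diagonal]
  simp only [Matrix.diagonal_mul_diagonal]
  congr 1
  ext i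
  ring

theorem comm_diag {B K G M : Matrix (Fin n) (Fin n) ℝ} (hB : IsUnit B) (hGu : IsUnit G)
    (h : K * G⁻¹ * M = M * G⁻¹ * K) {g m : Fin n → ℝ}
    (hG : B * G * Bᵀ = diagonal g) (hM : B * M * Bᵀ = diagonal m)
    (hne : ∀ i j, i ≠ j → m i * g j ≠ m j * g i) : (B * K * Bᵀ).IsDiag := by
  have h1 := congrArg (fun X => B * X * Bᵀ) h
  simp only [conj_trip hB, hG, hM] at h1
  have hB' : IsUnit Bᵀ := by
    rw [Matrix.isUnit_iff_isUnit_det, Matrix.det_transpose, ← Matrix.isUnit_iff_isUnit_det]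
    exact hB
  have hu : IsUnit (diagonal g) := by rw [← hG]; exact (hB.mul hGu).mul hB'
  have h2 := Matrix.mul_nonsing_inv _ ((Matrix.isUnit_iff_isUnit_det _).1 hu)
  rw [Matrix.inv_diagonal] at h1 h2
  rw [Matrix.diagonal_mul_diagonal] at h2
  have hw : ∀ i, g i * (Ring.inverse g) i = 1 := fun i => by
    have := congrFun (congrFun h2 i) i
    simpa using this
  intro i j hij
  have h3 := congrFun (congrFun h1 i) j
  simp only [Matrix.mul_diagonal, Matrix.diagonal_mul, Matrix.diagonal_mul_diagonal] at h3
  have hd : m i * g j - m j * g i ≠ 0 := sub_ne_zero.2 (hne i j hij)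
  have : (B * K * Bᵀ) i j * (m i * g j - m j * g i) = 0 := by
    have e1 := hw i
    have e2 := hw j
    linear_combination (-g i * g j) * h3 + (B * K * Bᵀ) i j * g i * m j * e2
      - (B * K * Bᵀ) i j * g j * m i * e1
  exact (mul_eq_zero.1 this).resolve_right hd

theorem diag_isUnit (K : Fin n → Matrix (Fin n) (Fin n) ℝ) {B : Matrix (Fin n) (Fin n) ℝ}
    (hB : IsUnit B) (hd : ∀ α, (B * K α * Bᵀ).IsDiag) (hli : LinearIndependent ℝ K) :
    IsUnit (Matrix.of fun α i => (B * K α * Bᵀ) i i) := by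
  rw [← Matrix.linearIndependent_rows_iff_isUnit, Fintype.linearIndependent_iff]
  intro e he
  refine Fintype.linearIndependent_iff.1 hli e ?_
  apply conj_inj hB
  rw [Matrix.mul_sum, Matrix.sum_mul, Matrix.mul_zero, Matrix.zero_mul]
  ext i j
  simp only [Matrix.sum_apply, Matrix.mul_smul, Matrix.smul_mul, Matrix.smul_apply, smul_eq_mul,
    Matrix.zero_apply]
  by_cases hij : i = j
  · subst hij
    have := congrFun he i
    simpa [Finset.sum_apply] using this
  · exact Finset.sum_eq_zero fun α _ => by rw [hd α hij, mul_zero]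

theorem diag_near (hU : IsOpen U)
    (K : Fin n → (Fin n → ℝ) → Matrix (Fin n) (Fin n) ℝ) (hK : ∀ α, Smm U (K α))
    (hKs : ∀ α, ∀ x ∈ U, (K α x).IsSymm) (o : Fin n) (hGi : ∀ x ∈ U, IsUnit (K o x))
    (h2 : ∀ᵐ x ∂(volume : Measure (Fin n → ℝ)), x ∈ U →
      ∃ B : Matrix (Fin n) (Fin n) ℝ, IsUnit B ∧ ∀ α, (B * K α x * Bᵀ).IsDiag)
    {x₀ : Fin n → ℝ} (hx₀ : x₀ ∈ U) (hli : LinearIndependent ℝ (fun α => K α x₀))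
    (B₀ : Matrix (Fin n) (Fin n) ℝ) (hB₀ : IsUnit B₀) (hd₀ : ∀ α, (B₀ * K α x₀ * B₀ᵀ).IsDiag) :
    ∃ (V : Set (Fin n → ℝ)) (B : (Fin n → ℝ) → Matrix (Fin n) (Fin n) ℝ), IsOpen V ∧ V ⊆ U ∧
      x₀ ∈ V ∧ Smm V B ∧ B x₀ = B₀ ∧ (∀ x ∈ V, IsUnit (B x)) ∧
      ∀ x ∈ V, ∀ α, (B x * K α x * (B x)ᵀ).IsDiag := by
  let d : Matrix (Fin n) (Fin n) ℝ := Matrix.of fun α i => (B₀ * K α x₀ * B₀ᵀ) i i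
  have hdu : IsUnit d := diag_isUnit _ hB₀ hd₀ hli
  have hdd : ∀ α, B₀ * K α x₀ * B₀ᵀ = diagonal (d α) := fun α => ((hd₀ α).diagonal_diag).symm
  have hB' : IsUnit B₀ᵀ := by
    rw [Matrix.isUnit_iff_isUnit_det, Matrix.det_transpose, ← Matrix.isUnit_iff_isUnit_det]
    exact hB₀
  have hg0 : ∀ i, d o i ≠ 0 := by
    have hu : IsUnit (diagonal (d o)) := by
      rw [← hdd]; exact (hB₀.mul (hGi x₀ hx₀)).mul hB'
    rw [Matrix.isUnit_iff_isUnit_det, Matrix.det_diagonal, isUnit_iff_ne_zero] at hu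
    intro i hi
    exact hu (Finset.prod_eq_zero (Finset.mem_univ i) hi)
  let m : Fin n → ℝ := fun i => (i : ℕ) * d o i
  let a : Fin n → ℝ := m ᵥ* d⁻¹
  have ha : a ᵥ* d = m := by
    simp only [a]
    rw [Matrix.vecMul_vecMul, Matrix.nonsing_inv_mul _ ((Matrix.isUnit_iff_isUnit_det _).1 hdu),
      Matrix.vecMul_one]
  let M : (Fin n → ℝ) → Matrix (Fin n) (Fin n) ℝ := fun x => ∑ α, a α • K α x
  have hconj : ∀ (B : Matrix (Fin n) (Fin n) ℝ) x, B * M x * Bᵀ = ∑ α, a α • (B * K α x * Bᵀ) := by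
    intro B x
    simp only [M, Matrix.mul_sum, Matrix.sum_mul, Matrix.mul_smul, Matrix.smul_mul]
  have hM : Smm U M := by
    intro i j
    simp only [M, Matrix.sum_apply, Matrix.smul_apply, smul_eq_mul]
    exact Sm.sum fun α _ => (Sm.const _).mul (hK α i j)
  have hMs : ∀ x ∈ U, (M x).IsSymm := by
    intro x hx
    ext i j
    simp only [M, Matrix.transpose_apply, Matrix.sum_apply, Matrix.smul_apply]
    exact Finset.sum_congr rfl fun α _ => by rw [(hKs α x hx).apply]
  have hm : B₀ * M x₀ * B₀ᵀ = diagonal m := by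
    rw [hconj, ← ha]
    ext i j
    simp only [Matrix.sum_apply, Matrix.smul_apply, hdd, smul_eq_mul]
    by_cases hij : i = j
    · subst hij; simp [Matrix.vecMul, dotProduct]
    · simp [Matrix.diagonal_apply_ne _ hij]
  have hne : ∀ i j, i ≠ j → m i * d o j ≠ m j * d o i := by
    intro i j hij h
    have h1 : ((i : ℕ) : ℝ) * (d o i * d o j) = ((j : ℕ) : ℝ) * (d o i * d o j) := by
      simp only [m] at h; linear_combination h
    have h2 := mul_right_cancel₀ (mul_ne_zero (hg0 i) (hg0 j)) h1
    exact hij (Fin.ext (by exact_mod_cast h2))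
  obtain ⟨V, B, hV, hVU, hxV, hB, hBx, hBd⟩ := frame hU (K o) M (hK o) hM (hKs o) hMs hx₀ B₀ hB₀
    (d o) m (hdd o) hm hne
  have cts : ∀ {f : (Fin n → ℝ) → ℝ}, Sm V f → ContinuousAt f x₀ := fun hf =>
    (hf.diff hV hxV).continuousAt
  have sG : Smm V (fun x => B x * K o x * (B x)ᵀ) :=
    (hB.mul fun i j => (hK o i j).mono hVU).mul hB.transpose
  have sM : Smm V (fun x => B x * M x * (B x)ᵀ) :=
    (hB.mul fun i j => (hM i j).mono hVU).mul hB.transpose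
  have ev : ∀ᶠ x in nhds x₀, x ∈ V ∧ (B x).det ≠ 0 ∧ ∀ i j, i ≠ j →
      (B x * M x * (B x)ᵀ) i i * (B x * K o x * (B x)ᵀ) j j
        - (B x * M x * (B x)ᵀ) j j * (B x * K o x * (B x)ᵀ) i i ≠ 0 := by
    refine (hV.eventually_mem hxV).and (Filter.Eventually.and ?_ ?_)
    · refine (cts (Smm.det hB)).eventually_ne ?_
      rw [hBx]
      exact ((Matrix.isUnit_iff_isUnit_det _).1 hB₀).ne_zero
    · refine Filter.eventually_all.2 fun i => Filter.eventually_all.2 fun j => ?_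
      by_cases hij : i = j
      · exact Filter.Eventually.of_forall fun x h => absurd hij h
      have := (cts (((sM i i).mul (sG j j)).sub ((sM j j).mul (sG i i)))).eventually_ne (y := 0) (by
        simp only [hBx, hm, hdd, Matrix.diagonal_apply_eq]
        exact sub_ne_zero.2 (hne i j hij))
      filter_upwards [this] with x hx _ using hx
  obtain ⟨V', hV'1, hV', hxV'⟩ := eventually_nhds_iff.1 ev
  have hV'V : V' ⊆ V := fun x hx => (hV'1 x hx).1
  have hBu : ∀ x ∈ V', IsUnit (B x) := fun x hx => by
    rw [Matrix.isUnit_iff_isUnit_det]; exact isUnit_iff_ne_zero.2 (hV'1 x hx).2.1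
  refine ⟨V', B, hV', hV'V.trans hVU, hxV', fun i j => (hB i j).mono hV'V, hBx, hBu, ?_⟩
  intro x hx α
  have hxU : ∀ y ∈ V', y ∈ U := fun y hy => hVU (hV'V hy)
  have hKc : ∀ β, Smm V' (K β) := fun β i j => (hK β i j).mono (hV'V.trans hVU)
  have hMc : Smm V' M := fun i j => (hM i j).mono (hV'V.trans hVU)
  have hGc : Smm V' (fun x => (K o x)⁻¹) := fun i j =>
    Smm.inv (hKc o) (fun y hy => hGi y (hxU y hy)) i j
  have hcomm : K α x * (K o x)⁻¹ * M x = M x * (K o x)⁻¹ * K α x := by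
    ext i j
    have s1 : Sm V' (fun y => (K α y * (K o y)⁻¹ * M y) i j - (M y * (K o y)⁻¹ * K α y) i j) :=
      ((((hKc α).mul hGc).mul hMc) i j).sub ((((hMc).mul hGc).mul (hKc α)) i j)
    by_contra hcon
    have hc : ∀ᶠ y in nhds x, y ∈ V' ∧
        (K α y * (K o y)⁻¹ * M y) i j - (M y * (K o y)⁻¹ * K α y) i j ≠ 0 :=
      (hV'.eventually_mem hx).and
        ((s1.diff hV' hx).continuousAt.eventually_ne (sub_ne_zero.2 hcon))
    obtain ⟨T, hT1, hT, hxT⟩ := eventually_nhds_iff.1 hc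
    obtain ⟨y, hyT, hy⟩ := (Measure.dense_of_ae h2).inter_open_nonempty T hT ⟨x, hxT⟩
    obtain ⟨C, hC, hCd⟩ := hy (hxU y (hT1 y hyT).1)
    have hCM : (C * M y * Cᵀ).IsDiag := by
      intro k l hkl
      rw [hconj, Matrix.sum_apply]
      exact Finset.sum_eq_zero fun β _ => by rw [Matrix.smul_apply, hCd β hkl, smul_zero]
    apply (hT1 y hyT).2
    rw [simdiag_comm hC (hCd α) (hCd o) hCM, sub_self]
  refine comm_diag (hBu x hx) (hGi x (hxU x hx)) hcomm
    ((hBd x (hV'V hx)).1.diagonal_diag).symm ((hBd x (hV'V hx)).2.diagonal_diag).symm ?_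
  intro i j hij
  exact sub_ne_zero.1 ((hV'1 x hx).2.2 i j hij)

end Stk

namespace Stk
variable {n : ℕ} {U : Set (Fin n → ℝ)}

theorem normal_frame (hU : IsOpen U)
    (K : Fin n → (Fin n → ℝ) → Matrix (Fin n) (Fin n) ℝ) (hK : ∀ α, Smm U (K α))
    (hKs : ∀ α, ∀ x ∈ U, (K α x).IsSymm) (o : Fin n) (hGi : ∀ x ∈ U, IsUnit (K o x))
    (h2 : ∀ᵐ x ∂(volume : Measure (Fin n → ℝ)), x ∈ U →
      ∃ B : Matrix (Fin n) (Fin n) ℝ, IsUnit B ∧ ∀ α, (B * K α x * Bᵀ).IsDiag)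
    {x₀ : Fin n → ℝ} (hx₀ : x₀ ∈ U) (hli : LinearIndependent ℝ (fun α => K α x₀))
    (B₀ : Matrix (Fin n) (Fin n) ℝ) (hB₀ : IsUnit B₀) (hd₀ : ∀ α, (B₀ * K α x₀ * B₀ᵀ).IsDiag) :
    ∃ (V : Set (Fin n → ℝ)) (B d S : (Fin n → ℝ) → Matrix (Fin n) (Fin n) ℝ), IsOpen V ∧ V ⊆ U ∧
      x₀ ∈ V ∧ Smm V B ∧ Smm V d ∧ Smm V S ∧ (∀ x ∈ V, IsUnit (B x)) ∧
      (∀ α, ∀ x ∈ V, B x * K α x * (B x)ᵀ = diagonal (d x α)) ∧ (∀ x ∈ V, S x * d x = 1) ∧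
      (∀ i, ∃ α, ∃ c : ℝ, c ≠ 0 ∧ ∀ x ∈ V, S x i α = c) := by
  obtain ⟨V, B, hV, hVU, hxV, hB, hBx, hBu, hBd⟩ :=
    diag_near hU K hK hKs o hGi h2 hx₀ hli B₀ hB₀ hd₀
  let d : (Fin n → ℝ) → Matrix (Fin n) (Fin n) ℝ := fun x =>
    Matrix.of fun α i => (B x * K α x * (B x)ᵀ) i i
  have hd : Smm V d := fun α i =>
    ((hB.mul fun i j => (hK α i j).mono hVU).mul hB.transpose) i i
  have hdu₀ : IsUnit (d x₀) := by
    simp only [d, hBx]; exact diag_isUnit _ hB₀ hd₀ hli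
  obtain ⟨V₁, hV₁1, hV₁, hxV₁⟩ := eventually_nhds_iff.1 ((hV.eventually_mem hxV).and
    (((Smm.det hd).diff hV hxV).continuousAt.eventually_ne
      ((Matrix.isUnit_iff_isUnit_det _).1 hdu₀).ne_zero))
  have hV₁V : V₁ ⊆ V := fun x hx => (hV₁1 x hx).1
  have hdu : ∀ x ∈ V₁, IsUnit (d x) := fun x hx => by
    rw [Matrix.isUnit_iff_isUnit_det]; exact isUnit_iff_ne_zero.2 (hV₁1 x hx).2
  have hd1 : Smm V₁ d := fun i j => (hd i j).mono hV₁V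
  have hS : Smm V₁ (fun x => (d x)⁻¹) := fun i j => Smm.inv hd1 hdu i j
  have hSd : ∀ x ∈ V₁, (d x)⁻¹ * d x = 1 := fun x hx =>
    Matrix.nonsing_inv_mul _ ((Matrix.isUnit_iff_isUnit_det _).1 (hdu x hx))
  have hex : ∀ i, ∃ α, (d x₀)⁻¹ i α ≠ 0 := by
    intro i
    by_contra! hcon
    have h := congrFun (congrFun (hSd x₀ hxV₁) i) i
    rw [Matrix.mul_apply] at h
    simp [hcon] at h
  choose a ha using hex
  let t : Fin n → (Fin n → ℝ) → ℝ := fun i x => (d x₀)⁻¹ i (a i) * (d x)⁻¹ i (a i)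
  have ht : ∀ i, Sm V₁ (t i) := fun i => (Sm.const _).mul (hS i (a i))
  obtain ⟨V₂, hV₂1, hV₂, hxV₂⟩ := eventually_nhds_iff.1 ((hV₁.eventually_mem hxV₁).and
    (Filter.eventually_all.2 fun i => ((ht i).diff hV₁ hxV₁).continuousAt.eventually_const_lt
      (u := 0) (mul_self_pos.2 (ha i))))
  have h21 : V₂ ⊆ V₁ := fun x hx => (hV₂1 x hx).1
  have h20 : V₂ ⊆ V := h21.trans hV₁V
  have tp : ∀ x ∈ V₂, ∀ i, 0 < t i x := fun x hx => (hV₂1 x hx).2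
  have hr : ∀ i, Sm V₂ (fun x => √(t i x)) := fun i =>
    ContDiffOn.sqrt ((ht i).mono h21) fun x hx => (tp x hx i).ne'
  have hti : ∀ i, Sm V₂ (fun x => (t i x)⁻¹) := fun i =>
    ContDiffOn.inv ((ht i).mono h21) fun x hx => (tp x hx i).ne'
  refine ⟨V₂, fun x => diagonal (fun i => √(t i x)) * B x,
    fun x => Matrix.of fun α i => t i x * d x α i,
    fun x => Matrix.of fun i α => (t i x)⁻¹ * (d x)⁻¹ i α, hV₂, h20.trans hVU, hxV₂, ?_, ?_, ?_,
    ?_, ?_, ?_, ?_⟩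
  · intro i j
    simp only [Matrix.diagonal_mul]
    exact (hr i).mul ((hB i j).mono h20)
  · intro α i
    exact ((ht i).mono h21).mul ((hd α i).mono h20)
  · intro i α
    exact (hti i).mul ((hS i α).mono h21)
  · intro x hx
    refine IsUnit.mul ?_ (hBu x (h20 hx))
    rw [Matrix.isUnit_iff_isUnit_det, Matrix.det_diagonal, isUnit_iff_ne_zero]
    exact Finset.prod_ne_zero_iff.2 fun i _ => (Real.sqrt_pos.2 (tp x hx i)).ne'
  · intro α x hx
    have e : B x * K α x * (B x)ᵀ = diagonal (d x α) := ((hBd x (h20 hx) α).diagonal_diag).symm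
    have e2 : diagonal (fun i => √(t i x)) * B x * K α x * (diagonal (fun i => √(t i x)) * B x)ᵀ
        = diagonal (fun i => √(t i x)) * (B x * K α x * (B x)ᵀ) * diagonal (fun i => √(t i x)) := by
      rw [Matrix.transpose_mul, Matrix.diagonal_transpose]
      simp only [Matrix.mul_assoc]
    rw [e2, e, Matrix.diagonal_mul_diagonal, Matrix.diagonal_mul_diagonal]
    congr 1
    ext i
    simp only [Matrix.of_apply]
    rw [mul_right_comm, Real.mul_self_sqrt (tp x hx i).le]
  · intro x hx
    ext i j
    have h := congrFun (congrFun (hSd x (h21 hx)) i) j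
    rw [Matrix.mul_apply] at h ⊢
    simp only [Matrix.of_apply]
    have : ∑ α, (t i x)⁻¹ * (d x)⁻¹ i α * (t j x * d x α j)
        = (t i x)⁻¹ * t j x * ∑ α, (d x)⁻¹ i α * d x α j := by
      rw [Finset.mul_sum]
      exact Finset.sum_congr rfl fun α _ => by ring
    rw [this, h]
    by_cases hij : i = j
    · subst hij; rw [inv_mul_cancel₀ (tp x hx i).ne', one_mul]
    · rw [Matrix.one_apply_ne hij, mul_zero]
  · intro i
    refine ⟨a i, ((d x₀)⁻¹ i (a i))⁻¹, inv_ne_zero (ha i), fun x hx => ?_⟩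
    have h1 : (d x)⁻¹ i (a i) ≠ 0 := right_ne_zero_of_mul (tp x hx i).ne'
    simp only [Matrix.of_apply, t]
    rw [mul_inv, mul_assoc, inv_mul_cancel₀ h1, mul_one]

theorem local_thm (hU : IsOpen U)
    (K : Fin n → (Fin n → ℝ) → Matrix (Fin n) (Fin n) ℝ) (hK : ∀ α, Smm U (K α))
    (hKs : ∀ α, ∀ x ∈ U, (K α x).IsSymm) (o : Fin n) (hGi : ∀ x ∈ U, IsUnit (K o x))
    (hinv : ∀ α β, ∀ x ∈ U, ∀ p : Fin n → ℝ, ∑ k, (p ⬝ᵥ (Dm k (K α) x *ᵥ p)) * (K β x *ᵥ p) k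
      = ∑ k, (p ⬝ᵥ (Dm k (K β) x *ᵥ p)) * (K α x *ᵥ p) k)
    (h2 : ∀ᵐ x ∂(volume : Measure (Fin n → ℝ)), x ∈ U →
      ∃ B : Matrix (Fin n) (Fin n) ℝ, IsUnit B ∧ ∀ α, (B * K α x * Bᵀ).IsDiag)
    {x₀ : Fin n → ℝ} (hx₀ : x₀ ∈ U) (hli : LinearIndependent ℝ (fun α => K α x₀))
    (B₀ : Matrix (Fin n) (Fin n) ℝ) (hB₀ : IsUnit B₀) (hd₀ : ∀ α, (B₀ * K α x₀ * B₀ᵀ).IsDiag) :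
      ∃ (V W : Set (Fin n → ℝ)) (φ ψ : (Fin n → ℝ) → (Fin n → ℝ))
        (S : (Fin n → ℝ) → Matrix (Fin n) (Fin n) ℝ),
        IsOpen V ∧ V ⊆ U ∧ x₀ ∈ V ∧ IsOpen W ∧
        ContDiffOn ℝ (⊤ : ℕ∞) φ V ∧ ContDiffOn ℝ (⊤ : ℕ∞) ψ W ∧
        φ '' V = W ∧ (∀ x ∈ V, ψ (φ x) = x) ∧ (∀ y ∈ W, φ (ψ y) = y) ∧
        (∀ i j, ContDiffOn ℝ (⊤ : ℕ∞) (fun y => S y i j) W) ∧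
        (∀ y ∈ W, IsUnit (S y)) ∧
        (∀ i j, ∀ y ∈ W, ∀ y' ∈ W, y i = y' i → S y i j = S y' i j) ∧
        (∀ α, ∀ y ∈ W, ∀ q : Fin n → ℝ,
          ((jacobian φ (ψ y))ᵀ *ᵥ q) ⬝ᵥ (K α (ψ y) *ᵥ ((jacobian φ (ψ y))ᵀ *ᵥ q))
            = ∑ i : Fin n, (S y)⁻¹ α i * (q i) ^ 2) := by
  obtain ⟨V₀, B, d, S, hV₀, hVU, hxV, hB, hd, hS, hBu, hdiag, hSd, hnorm⟩ :=
    normal_frame hU K hK hKs o hGi h2 hx₀ hli B₀ hB₀ hd₀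
  have key := fun x (hx : x ∈ V₀) => stackel_pt hV₀ K (fun α i j => (hK α i j).mono hVU)
    (fun α x hx => hKs α x (hVU hx)) (fun α β x hx => hinv α β x (hVU hx)) B d S hB hd hS hBu
    hdiag hSd hnorm hx
  obtain ⟨V, W, φ, ψ, h1, hVV, h3, h4, h5, h6, h7, h8, h9, h10, h11, h12⟩ :=
    local_coords hV₀ B S hB hS hBu (fun x hx => (key x hx).1) (fun x hx => (key x hx).2) hxV
  refine ⟨V, W, φ, ψ, fun y => S (ψ y), h1, hVV.trans hVU, h3, h4, h5, h6, h7, h8, h9, ?_, ?_,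
    h12, ?_⟩
  · intro i j
    exact ContDiffOn.comp (g := fun x => S x i j) (hS i j) h6 fun y hy => hVV (h10 y hy)
  · intro y hy
    exact IsUnit.of_mul_eq_one _ (hSd _ (hVV (h10 y hy)))
  · intro α y hy q
    have hyV := hVV (h10 y hy)
    rw [h11 _ (h10 y hy)]
    have e := hdiag α _ hyV
    rw [quad_diag (by rw [e]; exact isDiag_diagonal _), e]
    rw [Matrix.inv_eq_right_inv (hSd _ hyV)]
    simp only [Matrix.diagonal_apply_eq]

theorem quad_sum (A : Matrix (Fin n) (Fin n) ℝ) (p : Fin n → ℝ) :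
    ∑ i, ∑ j, A i j * p i * p j = p ⬝ᵥ (A *ᵥ p) := by
  simp only [dotProduct, mulVec, Finset.mul_sum]
  exact Finset.sum_congr rfl fun i _ => Finset.sum_congr rfl fun j _ => by ring

end Stk

/-- under assumptions (1), (2), (3) on the quadratic integrals of the
geodesic flow (with `G = K ⟨0,hn⟩`), if moreover the integrals are pairwise in
involution, then near almost every point they come from the Stäckel construction:
there are local coordinates `y = φ(x)` and a Stäckel matrix `S` on the target such that
`I_α(φ⁻¹(y), Dφ(φ⁻¹(y))ᵀ q) = ∑ i, (S(y)⁻¹)_{α i} q_i²`. -/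
theorem stmt2 (n : ℕ) (hn : 1 ≤ n)
    (U : Set (Fin n → ℝ)) (hUopen : IsOpen U) (hUconn : IsConnected U)
    (K : Fin n → (Fin n → ℝ) → Matrix (Fin n) (Fin n) ℝ)
    (hKsmooth : ∀ α i j, ContDiffOn ℝ (⊤ : ℕ∞) (fun x => K α x i j) U)
    (hKsymm : ∀ α, ∀ x ∈ U, (K α x).IsSymm)
    (hGinv : ∀ x ∈ U, IsUnit (K ⟨0, hn⟩ x))
    (I : Fin n → (Fin n → ℝ) × (Fin n → ℝ) → ℝ)
    (hI : ∀ α, I α = fun z => ∑ i : Fin n, ∑ j : Fin n, K α z.1 i j * z.2 i * z.2 j)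
    (H : (Fin n → ℝ) × (Fin n → ℝ) → ℝ)
    (hH : H = fun z => (1 / 2 : ℝ) * I ⟨0, hn⟩ z)
    -- (1) each `I α` is an integral of the geodesic flow
    (h1 : ∀ α, ∀ z : (Fin n → ℝ) × (Fin n → ℝ), z.1 ∈ U → poisson H (I α) z = 0)
    -- (2) simultaneous diagonalisability at almost every point
    (h2 : ∀ᵐ x ∂(volume : Measure (Fin n → ℝ)), x ∈ U →
      ∃ B : Matrix (Fin n) (Fin n) ℝ, IsUnit B ∧ ∀ α, (B * K α x * Bᵀ).IsDiag)
    -- (3) the differentials of the integrals are linearly independent at some point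
    (h3 : ∃ z : (Fin n → ℝ) × (Fin n → ℝ), z.1 ∈ U ∧
      LinearIndependent ℝ (fun α => fderiv ℝ (I α) z))
    -- the integrals are pairwise in involution
    (hinvol : ∀ α β, ∀ z : (Fin n → ℝ) × (Fin n → ℝ), z.1 ∈ U →
      poisson (I α) (I β) z = 0) :
    ∀ᵐ x₀ ∂(volume : Measure (Fin n → ℝ)), x₀ ∈ U →
      ∃ (V W : Set (Fin n → ℝ)) (φ ψ : (Fin n → ℝ) → (Fin n → ℝ))
        (S : (Fin n → ℝ) → Matrix (Fin n) (Fin n) ℝ),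
        IsOpen V ∧ V ⊆ U ∧ x₀ ∈ V ∧ IsOpen W ∧
        -- φ : V → W is a smooth diffeomorphism with smooth inverse ψ
        ContDiffOn ℝ (⊤ : ℕ∞) φ V ∧ ContDiffOn ℝ (⊤ : ℕ∞) ψ W ∧
        φ '' V = W ∧ (∀ x ∈ V, ψ (φ x) = x) ∧ (∀ y ∈ W, φ (ψ y) = y) ∧
        -- S is a smooth invertible-valued matrix function on W
        (∀ i j, ContDiffOn ℝ (⊤ : ℕ∞) (fun y => S y i j) W) ∧
        (∀ y ∈ W, IsUnit (S y)) ∧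
        -- the i-th row of S depends only on the i-th coordinate
        (∀ i j, ∀ y ∈ W, ∀ y' ∈ W, y i = y' i → S y i j = S y' i j) ∧
        -- the integrals come from the Stäckel construction in coordinates y = φ(x)
        (∀ α, ∀ y ∈ W, ∀ q : Fin n → ℝ,
          I α (ψ y, (jacobian φ (ψ y))ᵀ.mulVec q)
            = ∑ i : Fin n, (S y)⁻¹ α i * (q i) ^ 2) := by
  have hK : ∀ α, Stk.Smm U (K α) := fun α i j => hKsmooth α i j
  have hinv : ∀ α β, ∀ x ∈ U, ∀ p : Fin n → ℝ,
      ∑ k, (p ⬝ᵥ (Stk.Dm k (K α) x *ᵥ p)) * (K β x *ᵥ p) k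
      = ∑ k, (p ⬝ᵥ (Stk.Dm k (K β) x *ᵥ p)) * (K α x *ᵥ p) k := by
    intro α β x hx p
    have h := hinvol α β (x, p) hx
    rw [hI α, hI β, Stk.poisson_quad hUopen (hK α) (hK β) (hKsymm α) (hKsymm β) hx p] at h
    linarith
  have hdiff : ∀ α, ∀ z : (Fin n → ℝ) × (Fin n → ℝ), z.1 ∈ U → DifferentiableAt ℝ (I α) z := by
    intro α z hz
    rw [hI α]
    refine DifferentiableAt.fun_sum fun i _ => DifferentiableAt.fun_sum fun j _ => ?_
    have h1 : DifferentiableAt ℝ (fun w : (Fin n → ℝ) × (Fin n → ℝ) => K α w.1 i j) z :=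
      DifferentiableAt.comp (g := fun x => K α x i j) z ((hK α i j).diff hUopen hz)
        differentiableAt_fst
    have h2 : ∀ i, DifferentiableAt ℝ (fun w : (Fin n → ℝ) × (Fin n → ℝ) => w.2 i) z := by
      intro i; fun_prop
    exact (h1.mul (h2 i)).mul (h2 j)
  have h3' : ∀ e : Fin n → ℝ, (∀ x ∈ U, ∑ α, e α • K α x = 0) → e = 0 := by
    intro e he
    obtain ⟨z, hz, hli⟩ := h3
    have hsum : ∑ α, e α • fderiv ℝ (I α) z = 0 := by
      have e1 : fderiv ℝ (fun w => ∑ α, e α • I α w) z = ∑ α, e α • fderiv ℝ (I α) z := by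
        exact HasFDerivAt.fderiv (HasFDerivAt.fun_sum fun α _ =>
          (hdiff α z hz).hasFDerivAt.const_smul (e α))
      rw [← e1]
      have e2 : (fun w => ∑ α, e α • I α w) =ᶠ[nhds z] fun _ => (0 : ℝ) := by
        filter_upwards [(hUopen.preimage continuous_fst).mem_nhds hz] with w hw
        have hw0 := he w.1 hw
        have : ∑ α, e α • I α w = w.2 ⬝ᵥ ((∑ α, e α • K α w.1) *ᵥ w.2) := by
          rw [Matrix.sum_mulVec, dotProduct_sum]
          refine Finset.sum_congr rfl fun α _ => ?_
          rw [hI α, Matrix.smul_mulVec, dotProduct_smul]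
          exact congrArg (fun r => e α • r) (Stk.quad_sum _ _)
        rw [this, hw0, Matrix.zero_mulVec, dotProduct_zero]
      rw [e2.fderiv_eq]
      simp
    exact funext (Fintype.linearIndependent_iff.1 hli e hsum)
  filter_upwards [Stk.partA hUopen hUconn.isPreconnected K hK hKsymm ⟨0, hn⟩ hGinv
    (fun α => hinv _ α) h2 h3', h2] with x₀ hA hB hx₀
  obtain ⟨B₀, hB₀, hd₀⟩ := hB hx₀
  obtain ⟨V, W, φ, ψ, S, a1, a2, a3, a4, a5, a6, a7, a8, a9, a10, a11, a12, a13⟩ :=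
    Stk.local_thm hUopen K hK hKsymm ⟨0, hn⟩ hGinv hinv h2 hx₀ (hA hx₀) B₀ hB₀ hd₀
  refine ⟨V, W, φ, ψ, S, a1, a2, a3, a4, a5, a6, a7, a8, a9, a10, a11, a12, ?_⟩
  intro α y hy q
  rw [← a13 α y hy q, hI α]
  exact Stk.quad_sum _ _
end

section
/- Let n, m ≥ 1, let U ⊆ ℝⁿ be a connected open set, and let A : U → (ℝⁿ →ₗ (ℝᵐ →ₗ ℝᵐ)) be a continuous map (a continuous family of bilinear maps ℝⁿ × ℝᵐ → ℝᵐ). If ρ, σ : U → ℝᵐ are differentiable and satisfy the linear first-order PDE system Dρ(x)(v) = A(x)(v)(ρ(x)) and Dσ(x)(v) = A(x)(v)(σ(x)) for all x ∈ U and v ∈ ℝⁿ, and if ρ(x₀) = σ(x₀) for some point x₀ ∈ U, then ρ = σ on all of U. (A solution of the system is determined by its value at one point.) -/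
theorem aux_norm0 {E G : Type*} [TopologicalSpace E] [NormedAddCommGroup G]
    (A : E → G) (x : E) (h : ContinuousAt A x) : ContinuousAt (fun y => ‖A y‖) x := h.norm

theorem aux_norm {E F : Type*} [NormedAddCommGroup E] [NormedSpace ℝ E]
    [NormedAddCommGroup F] [NormedSpace ℝ F] (A : E → (E →L[ℝ] (F →L[ℝ] F))) (x : E)
    (h : ContinuousAt A x) : ContinuousAt (fun y => ‖A y‖) x :=
  aux_norm0 (G := E →L[ℝ] (F →L[ℝ] F)) A x h

/-- let `U ⊆ ℝⁿ` be a connected open set and `A` a continuous family of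
bilinear maps `ℝⁿ × ℝᵐ → ℝᵐ`. If `ρ, σ : U → ℝᵐ` are differentiable and satisfy the
linear first-order PDE system `Dρ(x)(v) = A(x)(v)(ρ(x))`, `Dσ(x)(v) = A(x)(v)(σ(x))`
for all `x ∈ U`, `v ∈ ℝⁿ`, and agree at one point `x₀ ∈ U`, then they agree on `U`. -/
theorem stmt3 (n m : ℕ) (hn : 1 ≤ n) (hm : 1 ≤ m)
    (U : Set (Fin n → ℝ)) (hUopen : IsOpen U) (hUconn : IsConnected U)
    (A : (Fin n → ℝ) → ((Fin n → ℝ) →L[ℝ] ((Fin m → ℝ) →L[ℝ] (Fin m → ℝ))))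
    (hA : ContinuousOn A U)
    (ρ σ : (Fin n → ℝ) → (Fin m → ℝ))
    (hρ : ∀ x ∈ U, HasFDerivAt ρ ((A x).flip (ρ x)) x)
    (hσ : ∀ x ∈ U, HasFDerivAt σ ((A x).flip (σ x)) x)
    (x₀ : Fin n → ℝ) (hx₀ : x₀ ∈ U) (h0 : ρ x₀ = σ x₀) :
    ∀ x ∈ U, ρ x = σ x := by
  have hd : ∀ x ∈ U, HasFDerivAt (fun y => ρ y - σ y) ((A x).flip (ρ x - σ x)) x := by
    intro x hx
    have := (hρ x hx).fun_sub (hσ x hx)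
    rwa [← map_sub] at this
  generalize hdd : (fun y => ρ y - σ y) = d at hd
  have hdx : ∀ x, d x = ρ x - σ x := fun x => by rw [← hdd]
  have key : ∀ x ∈ U, ∀ᶠ y in nhdsWithin x U, (d x = 0 ↔ d y = 0) := by
    intro x hx
    have hcA : ContinuousAt A x := hA.continuousAt (hUopen.mem_nhds hx)
    have hc : ContinuousAt (fun y => ‖A y‖) x := by
      exact aux_norm A x hcA
    have h1 : ∀ᶠ y in nhds x, ‖A y‖ < ‖A x‖ + 1 :=
      Filter.Tendsto.eventually_lt_const (lt_add_one ‖A x‖) hc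
    obtain ⟨r, hr, hball⟩ := Metric.eventually_nhds_iff_ball.1 (h1.and (hUopen.mem_nhds hx))
    have main : ∀ y ∈ Metric.ball x r, ∀ z ∈ Metric.ball x r, d y = 0 → d z = 0 := by
      intro y hy z hz h
      have hmem : ∀ t ∈ Set.Icc (0:ℝ) 1, AffineMap.lineMap y z t ∈ Metric.ball x r :=
        fun t ht => (convex_ball x r).lineMap_mem hy hz ht
      have hder : ∀ t ∈ Set.Icc (0:ℝ) 1,
          HasDerivAt (fun t : ℝ => d (AffineMap.lineMap y z t))
            (A (AffineMap.lineMap y z t) (z - y) (d (AffineMap.lineMap y z t))) t := by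
        intro t ht
        have h2 := hd _ (hball _ (hmem t ht)).2
        rw [← hdx] at h2
        exact h2.comp_hasDerivAt t AffineMap.hasDerivAt_lineMap
      have := eq_zero_of_abs_deriv_le_mul_abs_self_of_eq_zero_right
        (K := (‖A x‖ + 1) * ‖z - y‖)
        (fun t ht => (hder t ht).continuousAt.continuousWithinAt)
        (fun t ht => (hder t (Set.Ico_subset_Icc_self ht)).hasDerivWithinAt)
        (by simpa using h) (fun t ht => ?_) 1 (by simp)
      · simpa using this
      · have h3 := (hball _ (hmem t (Set.Ico_subset_Icc_self ht))).1.le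
        refine ((A _).le_opNorm₂ _ _).trans ?_
        gcongr
    filter_upwards [mem_nhdsWithin_of_mem_nhds (Metric.ball_mem_nhds x hr)] with y hy
    have hxx := Metric.mem_ball_self (x := x) hr
    exact ⟨main x hxx y hy, main y hy x hxx⟩
  intro x hx
  have := hUconn.isPreconnected.induction₂ (fun a b => (d a = 0 ↔ d b = 0)) key
    (fun a b c _ _ _ h1 h2 => h1.trans h2) (fun a b _ _ h => h.symm) hx₀ hx
  rw [hdx, hdx, sub_eq_zero, sub_eq_zero] at this
  exact this.1 h0
end

section
/- Let n, m ≥ 1, let U ⊆ ℝⁿ be a connected open set, and let A : U → (ℝⁿ →ₗ (ℝᵐ →ₗ ℝᵐ)) be a continuous map (a continuous family of bilinear maps ℝⁿ × ℝᵐ → ℝᵐ). Then the set of differentiable functions ρ : U → ℝᵐ satisfying Dρ(x)(v) = A(x)(v)(ρ(x)) for all x ∈ U and v ∈ ℝⁿ is a real vector subspace of the space of functions U → ℝᵐ, and its dimension is at most m. -/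
theorem stmt4_local {n m : ℕ} {U : Set (Fin n → ℝ)} (hUopen : IsOpen U)
    {A : (Fin n → ℝ) → ((Fin n → ℝ) →L[ℝ] ((Fin m → ℝ) →L[ℝ] (Fin m → ℝ)))}
    (hA : ContinuousOn A U) {ρ : (Fin n → ℝ) → (Fin m → ℝ)}
    (hρ : ∀ x ∈ U, HasFDerivAt ρ ((A x).flip (ρ x)) x) {x : Fin n → ℝ} (hx : x ∈ U) :
    ∃ r > 0, ∀ y ∈ Metric.ball x r, ρ y = 0 → ∀ z ∈ Metric.ball x r, ρ z = 0 := by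
  have hc : ContinuousAt A x := hA.continuousAt (hUopen.mem_nhds hx)
  have h1 : ∀ᶠ y in nhds x, ‖A y‖ < ‖A x‖ + 1 := by
    have hn : ContinuousAt (fun y => ‖A y‖) x := by
      first
      | exact hc.norm
      | fun_prop
      | exact ContinuousAt.norm (E := (Fin n → ℝ) →L[ℝ] ((Fin m → ℝ) →L[ℝ] (Fin m → ℝ))) hc
      | exact ContinuousAt.comp (g := fun a : (Fin n → ℝ) →L[ℝ] ((Fin m → ℝ) →L[ℝ] (Fin m → ℝ)) => ‖a‖) (continuous_norm.continuousAt) hc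
    have hl : (fun y => ‖A y‖) x < ‖A x‖ + 1 := lt_add_one _
    exact hn.eventually (gt_mem_nhds hl)
  obtain ⟨r, hr, hb⟩ := Metric.eventually_nhds_iff_ball.1 (h1.and (hUopen.mem_nhds hx))
  refine ⟨r, hr, fun y hy hy0 z hz => ?_⟩
  have hseg : ∀ t ∈ Set.Icc (0:ℝ) 1, y + t • (z - y) ∈ Metric.ball x r := fun t ht =>
    (convex_ball x r).add_smul_sub_mem hy hz ht
  have hd : ∀ t ∈ Set.Icc (0:ℝ) 1, HasDerivAt (fun t : ℝ => ρ (y + t • (z - y)))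
      (A (y + t • (z - y)) (z - y) (ρ (y + t • (z - y)))) t := by
    intro t ht
    have hl : HasDerivAt (fun t : ℝ => y + t • (z - y)) (z - y) t := by
      simpa using ((hasDerivAt_id t).smul_const (z - y)).const_add y
    exact (hρ _ (hb _ (hseg t ht)).2).comp_hasDerivAt t hl
  have := eq_zero_of_abs_deriv_le_mul_abs_self_of_eq_zero_right
    (f := fun t : ℝ => ρ (y + t • (z - y))) (a := 0) (b := 1)
    (K := (‖A x‖ + 1) * ‖z - y‖)
    (fun t ht => (hd t ht).continuousAt.continuousWithinAt)
    (fun t ht => (hd t ⟨ht.1, ht.2.le⟩).hasDerivWithinAt) (by simpa using hy0)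
    (by
      intro t ht
      have h2 := (hb _ (hseg t ⟨ht.1, ht.2.le⟩)).1.le
      refine (ContinuousLinearMap.le_opNorm _ _).trans ?_
      gcongr
      refine (ContinuousLinearMap.le_opNorm _ _).trans ?_
      gcongr) 1 (by simp)
  simpa using this

theorem stmt4_global {n m : ℕ} {U : Set (Fin n → ℝ)} (hUopen : IsOpen U)
    (hU : IsConnected U)
    {A : (Fin n → ℝ) → ((Fin n → ℝ) →L[ℝ] ((Fin m → ℝ) →L[ℝ] (Fin m → ℝ)))}
    (hA : ContinuousOn A U) {ρ : (Fin n → ℝ) → (Fin m → ℝ)}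
    (hρ : ∀ x ∈ U, HasFDerivAt ρ ((A x).flip (ρ x)) x) {x : Fin n → ℝ} (hx : x ∈ U)
    (h0 : ρ x = 0) : ∀ y ∈ U, ρ y = 0 := by
  have key : U ⊆ interior {y | ρ y = 0} := by
    refine hU.isPreconnected.subset_of_closure_inter_subset isOpen_interior ⟨x, hx, ?_⟩ ?_
    · obtain ⟨r, hr, h⟩ := stmt4_local hUopen hA hρ hx
      exact mem_interior.2 ⟨_, h x (Metric.mem_ball_self hr) h0, Metric.isOpen_ball,
        Metric.mem_ball_self hr⟩
    · rintro z ⟨hz, hzU⟩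
      obtain ⟨r, hr, h⟩ := stmt4_local hUopen hA hρ hzU
      obtain ⟨y, hyb, hy⟩ := mem_closure_iff.1 hz _ Metric.isOpen_ball (Metric.mem_ball_self hr)
      exact mem_interior.2 ⟨_, h y hyb (interior_subset (s := {y | ρ y = 0}) hy), Metric.isOpen_ball,
        Metric.mem_ball_self hr⟩
  exact fun y hy => interior_subset (s := {y | ρ y = 0}) (key hy)

/-- let `U ⊆ ℝⁿ` be a connected open set and `A` a continuous family of
bilinear maps `ℝⁿ × ℝᵐ → ℝᵐ`. The set of differentiable functions `ρ : U → ℝᵐ`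
satisfying `Dρ(x)(v) = A(x)(v)(ρ(x))` for all `x ∈ U`, `v ∈ ℝⁿ` is a real vector
subspace of the functions `U → ℝᵐ` of dimension at most `m`. (A function on `U` is
identified with the restriction of any total function agreeing with it on `U`; since
`U` is open, differentiability and the PDE on `U` depend only on the values on `U`.) -/
theorem stmt4 (n m : ℕ) (hn : 1 ≤ n) (hm : 1 ≤ m)
    (U : Set (Fin n → ℝ)) (hUopen : IsOpen U) (hUconn : IsConnected U)
    (A : (Fin n → ℝ) → ((Fin n → ℝ) →L[ℝ] ((Fin m → ℝ) →L[ℝ] (Fin m → ℝ))))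
    (hA : ContinuousOn A U) :
    ∃ W : Submodule ℝ (↥U → (Fin m → ℝ)),
      (W : Set (↥U → (Fin m → ℝ)))
        = {f | ∃ ρ : (Fin n → ℝ) → (Fin m → ℝ),
            (∀ x ∈ U, HasFDerivAt ρ ((A x).flip (ρ x)) x) ∧ ∀ x : U, f x = ρ ↑x} ∧
      Module.rank ℝ W ≤ (m : Cardinal) := by
  let W : Submodule ℝ (↥U → (Fin m → ℝ)) :=
    { carrier := {f | ∃ ρ : (Fin n → ℝ) → (Fin m → ℝ),
            (∀ x ∈ U, HasFDerivAt ρ ((A x).flip (ρ x)) x) ∧ ∀ x : U, f x = ρ ↑x}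
      zero_mem' := ⟨0, fun x _ => by
        simpa using hasFDerivAt_const (𝕜 := ℝ) (0 : Fin m → ℝ) x, fun _ => rfl⟩
      add_mem' := by
        rintro f g ⟨ρ, hρ, hf⟩ ⟨σ, hσ, hg⟩
        refine ⟨ρ + σ, fun x hx => ?_, fun x => by simp [hf, hg]⟩
        simpa using (hρ x hx).add (hσ x hx)
      smul_mem' := by
        rintro c f ⟨ρ, hρ, hf⟩
        refine ⟨c • ρ, fun x hx => ?_, fun x => by simp [hf]⟩
        simpa using (hρ x hx).const_smul c }
  refine ⟨W, rfl, ?_⟩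
  obtain ⟨x, hx⟩ := hUconn.nonempty
  let ev : W →ₗ[ℝ] (Fin m → ℝ) := 
    { toFun := fun f => f.1 ⟨x, hx⟩
      map_add' := fun _ _ => rfl
      map_smul' := fun _ _ => rfl }
  have hinj : Function.Injective ev := by
    rw [injective_iff_map_eq_zero]
    rintro ⟨f, ρ, hρ, hf⟩ h
    have h' : f ⟨x, hx⟩ = 0 := h
    rw [hf] at h'
    have := stmt4_global hUopen hUconn hA hρ hx h'
    ext1
    funext y
    exact (hf y).trans (this y y.2)
  simpa using LinearMap.rank_le_of_injective ev hinj
end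

section
/- Let W ⊆ ℝⁿ be an open set and let S : W → (n×n real matrices) be a smooth map such that S(y) is invertible for every y ∈ W and the i-th row of S depends only on the i-th coordinate (i.e. (S(y))_{ij} = (S(y'))_{ij} for all j whenever y, y' ∈ W satisfy y_i = y'_i). Define, for each α ∈ {1,…,n}, the function I_α : W × ℝⁿ → ℝ by I_α(y,q) = ∑_{i=1}^n (S(y)⁻¹)_{α i} q_i² (the Stäckel construction, S·(I_1,…,I_n)ᵀ = (q_1²,…,q_n²)ᵀ). Then the functions I_1, …, I_n are pairwise in involution: {I_α, I_β} = 0 on W × ℝⁿ for all α, β ∈ {1,…,n}. -/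
open Matrix

theorem stk_det_diff {n : ℕ} {E : Type*} [NormedAddCommGroup E] [NormedSpace ℝ E]
    (M : E → Matrix (Fin n) (Fin n) ℝ) (x : E)
    (h : ∀ i j, DifferentiableAt ℝ (fun y => M y i j) x) :
    DifferentiableAt ℝ (fun y => (M y).det) x := by
  simp only [Matrix.det_apply']
  fun_prop

theorem stk_inv_diff {n : ℕ} {E : Type*} [NormedAddCommGroup E] [NormedSpace ℝ E]
    (M : E → Matrix (Fin n) (Fin n) ℝ) (x : E)
    (h : ∀ i j, DifferentiableAt ℝ (fun y => M y i j) x) (hu : IsUnit (M x)) (a i : Fin n) :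
    DifferentiableAt ℝ (fun y => (M y)⁻¹ a i) x := by
  have hd : (M x).det ≠ 0 := ((Matrix.isUnit_iff_isUnit_det _).1 hu).ne_zero
  simp only [Matrix.inv_def, Matrix.smul_apply, smul_eq_mul, Ring.inverse_eq_inv',
    Matrix.adjugate_apply]
  refine ((stk_det_diff M x h).inv hd).mul (stk_det_diff _ x ?_)
  intro k l
  by_cases hk : k = i
  · subst hk
    simp
  · simpa [Matrix.updateRow_ne hk] using h k l

/-- Solve the differentiated Stäckel relation. -/
theorem stk_solve {n : ℕ} (A : Matrix (Fin n) (Fin n) ℝ) (hA : IsUnit A) (w r : Fin n → ℝ)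
    (h : ∀ i, ∑ b, A i b * w b = r i) (a : Fin n) : w a = ∑ i, A⁻¹ a i * r i := by
  have h1 : A *ᵥ w = r := funext h
  have hd := (Matrix.isUnit_iff_isUnit_det _).1 hA
  have h2 : A⁻¹ *ᵥ r = w := by
    rw [← h1, Matrix.mulVec_mulVec, Matrix.nonsing_inv_mul _ hd, Matrix.one_mulVec]
  rw [← h2]; rfl

/-- the functions `I_α(y,q) = ∑ i, (S(y)⁻¹)_{α i} q_i²` arising from the
Stäckel construction with a smooth invertible-valued Stäckel matrix `S` (the `i`-th row
of `S` depends only on the `i`-th coordinate) are pairwise in involution on `W × ℝⁿ`. -/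
theorem stmt6 (n : ℕ) (W : Set (Fin n → ℝ)) (hWopen : IsOpen W)
    (S : (Fin n → ℝ) → Matrix (Fin n) (Fin n) ℝ)
    (hSsmooth : ∀ i j, ContDiffOn ℝ (⊤ : ℕ∞) (fun y => S y i j) W)
    (hSinv : ∀ y ∈ W, IsUnit (S y))
    (hSrow : ∀ i j, ∀ y ∈ W, ∀ y' ∈ W, y i = y' i → S y i j = S y' i j)
    (I : Fin n → (Fin n → ℝ) × (Fin n → ℝ) → ℝ)
    (hI : ∀ α, I α = fun z => ∑ i : Fin n, (S z.1)⁻¹ α i * (z.2 i) ^ 2) :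
    ∀ α β, ∀ z : (Fin n → ℝ) × (Fin n → ℝ), z.1 ∈ W → poisson (I α) (I β) z = 0 := by
  intro α β z hz
  have hWn : W ∈ nhds z.1 := hWopen.mem_nhds hz
  have hS0 : ∀ i j, DifferentiableAt ℝ (fun y => S y i j) z.1 := fun i j =>
    ((hSsmooth i j).contDiffAt hWn).differentiableAt (by simp)
  have hS : ∀ i j, DifferentiableAt ℝ
      (fun x : (Fin n → ℝ) × (Fin n → ℝ) => S x.1 i j) z := fun i j =>
    DifferentiableAt.comp z (hS0 i j) differentiableAt_fst
  have hInv := fun a i => stk_inv_diff (fun x : (Fin n → ℝ) × (Fin n → ℝ) => S x.1) z hS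
    (hSinv _ hz) a i
  have hId : ∀ a, DifferentiableAt ℝ (I a) z := by
    intro a
    rw [hI a]
    refine DifferentiableAt.fun_sum fun i _ => (hInv a i).mul ?_
    have h1 : DifferentiableAt ℝ (fun x : (Fin n → ℝ) × (Fin n → ℝ) => x.2 i) z :=
      ((ContinuousLinearMap.proj (R := ℝ) (φ := fun _ : Fin n => ℝ) i).comp
          (ContinuousLinearMap.snd ℝ (Fin n → ℝ) (Fin n → ℝ))).differentiableAt
    exact h1.pow 2
  have hev : ∀ᶠ x in nhds z, x.1 ∈ W := continuous_fst.continuousAt.eventually hWn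
  -- the Stäckel relation
  have hrel : ∀ i, (fun x => ∑ b, S x.1 i b * I b x) =ᶠ[nhds z] fun x => (x.2 i) ^ 2 := by
    intro i
    filter_upwards [hev] with x hx
    have hd := (Matrix.isUnit_iff_isUnit_det _).1 (hSinv _ hx)
    have h1 : (fun b => I b x) = (S x.1)⁻¹ *ᵥ (fun i => (x.2 i) ^ 2) := by
      funext b; rw [hI b]; rfl
    have h2 : S x.1 *ᵥ (fun b => I b x) = fun i => (x.2 i) ^ 2 := by
      rw [h1, Matrix.mulVec_mulVec, Matrix.mul_nonsing_inv _ hd, Matrix.one_mulVec]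
    exact congrFun h2 i
  have hq : ∀ i v, fderiv ℝ (fun x : (Fin n → ℝ) × (Fin n → ℝ) => (x.2 i) ^ 2) z v
      = 2 * z.2 i * v.2 i := by
    intro i v
    have h1 : HasFDerivAt (fun x : (Fin n → ℝ) × (Fin n → ℝ) => x.2 i)
        ((ContinuousLinearMap.proj (R := ℝ) (φ := fun _ : Fin n => ℝ) i).comp
          (ContinuousLinearMap.snd ℝ (Fin n → ℝ) (Fin n → ℝ))) z :=
      ((ContinuousLinearMap.proj (R := ℝ) (φ := fun _ : Fin n => ℝ) i).comp
          (ContinuousLinearMap.snd ℝ (Fin n → ℝ) (Fin n → ℝ))).hasFDerivAt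
    rw [(h1.pow 2).fderiv]
    simp
  have hdrel : ∀ i v, ∑ b, S z.1 i b * fderiv ℝ (I b) z v =
      2 * z.2 i * v.2 i - ∑ b, I b z * fderiv ℝ (fun x : (Fin n → ℝ) × (Fin n → ℝ) =>
        S x.1 i b) z v := by
    intro i v
    have h1 := (hrel i).fderiv_eq (𝕜 := ℝ)
    have h2 :=
      HasFDerivAt.fun_sum (𝕜 := ℝ) (A := fun b x => S x.1 i b * I b x) (x := z) (u := Finset.univ) fun b _ =>
        (hS i b).hasFDerivAt.mul (hId b).hasFDerivAt
    rw [← hq i v, ← h1, h2.fderiv]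
    simp [Finset.sum_add_distrib]
  have hSq : ∀ i b k, fderiv ℝ (fun x : (Fin n → ℝ) × (Fin n → ℝ) => S x.1 i b) z
      (0, Pi.single k 1) = 0 := by
    intro i b k
    rw [← (hS i b).lineDeriv_eq_fderiv]
    simp [lineDeriv]
  have hSy : ∀ i b k, i ≠ k → fderiv ℝ (fun x : (Fin n → ℝ) × (Fin n → ℝ) => S x.1 i b) z
      (Pi.single k 1, 0) = 0 := by
    intro i b k hik
    rw [← (hS i b).lineDeriv_eq_fderiv, lineDeriv]
    have hc : Continuous fun t : ℝ => z.1 + t • (Pi.single k 1 : Fin n → ℝ) := by fun_prop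
    have ht : ∀ᶠ t : ℝ in nhds 0, z.1 + t • (Pi.single k 1 : Fin n → ℝ) ∈ W :=
      hc.continuousAt.eventually (by simpa using hWn)
    have he : (fun t : ℝ => S (z + t • ((Pi.single k 1 : Fin n → ℝ), (0 : Fin n → ℝ))).1 i b)
        =ᶠ[nhds 0] fun _ => S z.1 i b := by
      filter_upwards [ht] with t ht
      refine hSrow i b _ ht _ hz ?_
      simp [Pi.single_eq_of_ne hik]
    rw [he.deriv_eq]
    simp
  have hu := hSinv _ hz
  have hIq : ∀ a k, fderiv ℝ (I a) z (0, Pi.single k 1) = (S z.1)⁻¹ a k * (2 * z.2 k) := by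
    intro a k
    rw [stk_solve (S z.1) hu (fun b => fderiv ℝ (I b) z (0, Pi.single k 1)) _
      (fun i => hdrel i _) a, Finset.sum_eq_single k]
    · simp [hSq]
    · intro i _ hik
      simp [hSq, Pi.single_eq_of_ne hik]
    · simp
  have hIy : ∀ a k, fderiv ℝ (I a) z (Pi.single k 1, 0) = (S z.1)⁻¹ a k *
      (- ∑ b, I b z * fderiv ℝ (fun x : (Fin n → ℝ) × (Fin n → ℝ) =>
        S x.1 k b) z (Pi.single k 1, 0)) := by
    intro a k
    rw [stk_solve (S z.1) hu (fun b => fderiv ℝ (I b) z (Pi.single k 1, 0)) _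
      (fun i => hdrel i _) a, Finset.sum_eq_single k]
    · simp
    · intro i _ hik
      simp [hSy _ _ _ hik]
    · simp
  unfold poisson
  refine Finset.sum_eq_zero fun k _ => ?_
  rw [hIq, hIq, hIy, hIy]
  ring
end

section
/- Let W ⊆ ℝⁿ be an open set and let S : W → (n×n real matrices) be a smooth map such that S(y) is invertible for every y ∈ W and the i-th row of S depends only on the i-th coordinate (i.e. (S(y))_{ij} = (S(y'))_{ij} for all j whenever y, y' ∈ W satisfy y_i = y'_i). Define, for each α ∈ {1,…,n}, the function I_α : W × ℝⁿ → ℝ by I_α(y,q) = ∑_{i=1}^n (S(y)⁻¹)_{α i} q_i². Then at every point (y,q) ∈ W × ℝⁿ with q_i ≠ 0 for all i, the differentials dI_1, …, dI_n (total derivatives of I_1, …, I_n as functions on W × ℝⁿ ⊆ ℝ²ⁿ) are linearly independent; in particular the functions I_1, …, I_n arising from the Stäckel construction are functionally independent. -/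
open Matrix

theorem stmt7_det_diff {E : Type*} [NormedAddCommGroup E] [NormedSpace ℝ E] {n : ℕ}
    (M : E → Matrix (Fin n) (Fin n) ℝ) (x : E)
    (h : ∀ i j, DifferentiableAt ℝ (fun y => M y i j) x) :
    DifferentiableAt ℝ (fun y => (M y).det) x := by
  simp only [Matrix.det_apply']
  refine DifferentiableAt.fun_sum fun σ _ => ?_
  refine DifferentiableAt.const_mul ?_ _
  have := fun i : Fin n => h (σ i) i
  fun_prop

theorem stmt7_inv_diff {E : Type*} [NormedAddCommGroup E] [NormedSpace ℝ E] {n : ℕ}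
    (M : E → Matrix (Fin n) (Fin n) ℝ) (x : E)
    (h : ∀ i j, DifferentiableAt ℝ (fun y => M y i j) x) (hu : IsUnit (M x)) (i j : Fin n) :
    DifferentiableAt ℝ (fun y => (M y)⁻¹ i j) x := by
  have hd : (M x).det ≠ 0 := ((Matrix.isUnit_iff_isUnit_det _).1 hu).ne_zero
  simp only [Matrix.inv_def, Matrix.smul_apply, smul_eq_mul, Ring.inverse_eq_inv']
  refine DifferentiableAt.mul ((stmt7_det_diff M x h).inv hd) ?_
  simp only [Matrix.adjugate_apply]
  refine stmt7_det_diff _ x fun a b => ?_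
  by_cases hab : a = j
  · subst hab
    simp
  · simp only [Matrix.updateRow_ne hab]
    exact h a b

/-- the functions `I_α(y,q) = ∑ i, (S(y)⁻¹)_{α i} q_i²` arising from the
Stäckel construction with a smooth invertible-valued Stäckel matrix `S` (the `i`-th row
of `S` depends only on the `i`-th coordinate) have linearly independent differentials at
every point `(y,q) ∈ W × ℝⁿ` with all `q_i ≠ 0`; in particular they are functionally
independent. -/
theorem stmt7 (n : ℕ) (W : Set (Fin n → ℝ)) (hWopen : IsOpen W)
    (S : (Fin n → ℝ) → Matrix (Fin n) (Fin n) ℝ)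
    (hSsmooth : ∀ i j, ContDiffOn ℝ (⊤ : ℕ∞) (fun y => S y i j) W)
    (hSinv : ∀ y ∈ W, IsUnit (S y))
    (hSrow : ∀ i j, ∀ y ∈ W, ∀ y' ∈ W, y i = y' i → S y i j = S y' i j)
    (I : Fin n → (Fin n → ℝ) × (Fin n → ℝ) → ℝ)
    (hI : ∀ α, I α = fun z => ∑ i : Fin n, (S z.1)⁻¹ α i * (z.2 i) ^ 2) :
    ∀ y ∈ W, ∀ q : Fin n → ℝ, (∀ i, q i ≠ 0) →
      LinearIndependent ℝ (fun α => fderiv ℝ (I α) (y, q)) := by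
  intro y hy q hq
  have hS : ∀ i j, DifferentiableAt ℝ (fun y => S y i j) y := fun i j =>
    ((hSsmooth i j).contDiffAt (hWopen.mem_nhds hy)).differentiableAt (by simp)
  have hD : ∀ α, DifferentiableAt ℝ (I α) (y, q) := by
    intro α
    rw [hI α]
    refine DifferentiableAt.fun_sum fun i _ => ?_
    refine DifferentiableAt.mul ?_ (by fun_prop)
    have h1 := stmt7_inv_diff S y hS (hSinv y hy) α i
    have h2 : DifferentiableAt ℝ (fun z : (Fin n → ℝ) × (Fin n → ℝ) => z.1) (y, q) := by fun_prop
    exact DifferentiableAt.fun_comp' (y, q) (g := fun y => (S y)⁻¹ α i) h1 h2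
  have key : ∀ α k, fderiv ℝ (I α) (y, q) (0, Pi.single k 1) = (S y)⁻¹ α k * (2 * q k) := by
    intro α k
    have hc : HasDerivAt (fun t : ℝ => (y, Function.update q k t))
        ((0 : Fin n → ℝ), (Pi.single k 1 : Fin n → ℝ)) (q k) :=
      (hasDerivAt_const _ _).prodMk (hasDerivAt_update q k (q k))
    have h1 : HasDerivAt (fun t : ℝ => I α (y, Function.update q k t))
        (fderiv ℝ (I α) (y, q) (0, Pi.single k 1)) (q k) := by
      refine HasFDerivAt.comp_hasDerivAt (q k) ?_ hc
      rw [Function.update_eq_self]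
      exact (hD α).hasFDerivAt
    have h2 : HasDerivAt (fun t : ℝ => I α (y, Function.update q k t))
        (∑ i, (S y)⁻¹ α i * (if i = k then 2 * q k else 0)) (q k) := by
      rw [hI α]
      refine HasDerivAt.fun_sum fun i _ => ?_
      refine HasDerivAt.const_mul ((S y)⁻¹ α i) (d := fun t => (Function.update q k t i) ^ 2) ?_
      by_cases hik : i = k
      · subst hik
        simpa using hasDerivAt_pow 2 (q i)
      · simpa [hik] using hasDerivAt_const (q k) (q i ^ 2)
    rw [h1.unique h2]
    simp
  rw [Fintype.linearIndependent_iff]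
  intro g hg
  have hv : g ᵥ* (S y)⁻¹ = 0 := by
    funext k
    have h := congrArg (fun L => L ((0 : Fin n → ℝ), (Pi.single k 1 : Fin n → ℝ))) hg
    simp only [ContinuousLinearMap.sum_apply, ContinuousLinearMap.smul_apply, key, smul_eq_mul,
      ContinuousLinearMap.zero_apply, ← mul_assoc] at h
    rw [← Finset.sum_mul, ← Finset.sum_mul] at h
    have := hq k
    simpa [Matrix.vecMul, dotProduct, this] using h
  have hg0 : g = 0 := by
    have h := congrArg (fun v => v ᵥ* S y) hv
    simpa [Matrix.vecMul_vecMul,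
      Matrix.nonsing_inv_mul _ ((Matrix.isUnit_iff_isUnit_det _).1 (hSinv y hy))] using h
  intro i
  rw [hg0]
  rfl
end

section
/- Let n ≥ 1, let U ⊆ ℝⁿ be a connected open set, let v_1, …, v_n : U → ℝⁿ be smooth vector fields whose values at each point of U are linearly independent, let ε_1, …, ε_n ∈ {−1, 1}, and let b : {1,…,n} → {1,…,m} be a surjection (a partition of the frame into m blocks). Define V_j : U × ℝⁿ → ℝ by V_j(x,p) = ∑_{i : b(i) = j} ε_i ⟨v_i(x), p⟩² for j ∈ {1,…,m}, and H(x,p) = ½ ∑_{j=1}^m V_j(x,p). Then the set of smooth maps ρ = (ρ_1, …, ρ_m) : U → ℝᵐ such that the function I_ρ(x,p) = ∑_{j=1}^m ρ_j(x) V_j(x,p) satisfies {H, I_ρ} = 0 on U × ℝⁿ is a real vector space of dimension at most m. -/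
lemma poisson_expand {n m : ℕ} {f : (Fin n → ℝ) × (Fin n → ℝ) → ℝ}
    {V : Fin m → (Fin n → ℝ) × (Fin n → ℝ) → ℝ} {ρ : (Fin n → ℝ) → (Fin m → ℝ)}
    {z : (Fin n → ℝ) × (Fin n → ℝ)}
    (hV : ∀ j, DifferentiableAt ℝ (V j) z) (hρ : DifferentiableAt ℝ ρ z.1) :
    poisson f (fun w => ∑ j : Fin m, ρ w.1 j * V j w) z
      = ∑ j, (ρ z.1 j * poisson f (V j) z
        - V j z * fderiv ℝ ρ z.1 (fun s => fderiv ℝ f z (0, Pi.single s 1)) j) := by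
  have h1 : ∀ j, HasFDerivAt (fun w : (Fin n → ℝ) × (Fin n → ℝ) => ρ w.1 j)
      (((ContinuousLinearMap.proj j).comp (fderiv ℝ ρ z.1)).comp
        (ContinuousLinearMap.fst ℝ (Fin n → ℝ) (Fin n → ℝ))) z := by
    intro j
    have h2 : HasFDerivAt (fun x => ρ x j)
        ((ContinuousLinearMap.proj j).comp (fderiv ℝ ρ z.1)) z.1 :=
      (hasFDerivAt_pi'.1 hρ.hasFDerivAt) j
    exact HasFDerivAt.comp z h2 hasFDerivAt_fst
  have h2 : HasFDerivAt (fun w => ∑ j : Fin m, ρ w.1 j * V j w) _ z :=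
    HasFDerivAt.fun_sum (u := Finset.univ) (fun j _ => (h1 j).mul (hV j).hasFDerivAt)
  have h3 : ∀ j, fderiv ℝ ρ z.1 (fun s => fderiv ℝ f z (0, Pi.single s 1)) j
      = ∑ s, fderiv ℝ f z (0, Pi.single s 1) * fderiv ℝ ρ z.1 (Pi.single s 1) j := by
    intro j
    conv_lhs => rw [pi_eq_sum_univ' (fun s => fderiv ℝ f z (0, Pi.single s 1))]
    rw [map_sum, Finset.sum_apply]
    refine Finset.sum_congr rfl fun s _ => ?_
    rw [map_smul, Pi.smul_apply, smul_eq_mul]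
  unfold poisson
  rw [h2.fderiv]
  simp only [h3, Finset.mul_sum, ← Finset.sum_sub_distrib]
  rw [Finset.sum_comm]
  refine Finset.sum_congr rfl fun s _ => ?_
  simp only [_root_.sum_apply, Finset.mul_sum, ← Finset.sum_sub_distrib]
  refine Finset.sum_congr rfl fun j _ => ?_
  simp
  ring

lemma alg_id {n m : ℕ} (ε : Fin n → ℝ) (hε : ∀ i, ε i = 1 ∨ ε i = -1) (b : Fin n → Fin m)
    (D : Fin m → Fin n → ℝ) (F : (Fin n → ℝ) → ℝ)
    (hF : ∀ q, F q = ∑ j, (∑ i ∈ Finset.univ.filter (fun i => b i = j), ε i * (q i)^2) *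
      (∑ i, ε i * q i * D j i)) (i k : Fin n) :
    D (b k) i = (if i = k then 1/3 else ε i * ε k) *
      ((F (Pi.single i 1 + Pi.single k 1) + F (Pi.single i 1 - Pi.single k 1))/2
        - F (Pi.single i 1)) := by
  have hF' : ∀ q, F q = ∑ l, ∑ i, ε l * (q l)^2 * (ε i * q i * D (b l) i) := by
    intro q
    rw [hF]
    simp only [Finset.sum_mul]
    rw [← Finset.sum_fiberwise Finset.univ b]
    refine Finset.sum_congr rfl fun j _ => Finset.sum_congr rfl fun l hl => ?_
    rw [Finset.mul_sum]
    rw [(Finset.mem_filter.1 hl).2]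
  have e2 : ∀ i, ε i * ε i = 1 := by
    intro i; rcases hε i with h | h <;> rw [h] <;> norm_num
  have hs : ∀ t : ℝ, F (t • Pi.single i 1) = t^3 * D (b i) i := by
    intro t
    rw [hF', Finset.sum_eq_single i, Finset.sum_eq_single i]
    · simp
      linear_combination t^3 * D (b i) i * e2 i
    · intro x _ hx; simp [hx]
    · simp
    · intro x _ hx; simp [hx]
    · simp
  have hs1 := hs 1
  rw [one_smul] at hs1
  by_cases hik : i = k
  · subst hik
    rw [if_pos rfl, ← two_smul ℝ, sub_self, hs, hs1]
    have := hs 0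
    rw [zero_smul] at this
    rw [this]; ring
  · rw [if_neg hik, hs1]
    have key : ∀ t : ℝ, F (Pi.single i 1 + t • Pi.single k 1) = 
        (ε i * (ε i * D (b i) i + t * ε k * D (b i) k))
        + t^2 * (ε k * (ε i * D (b k) i + t * ε k * D (b k) k)) := by
      intro t
      have hik' : k ≠ i := fun h => hik h.symm
      rw [hF', ← Finset.sum_subset (Finset.subset_univ {i, k}), Finset.sum_pair hik,
        ← Finset.sum_subset (Finset.subset_univ {i, k}), Finset.sum_pair hik,
        ← Finset.sum_subset (Finset.subset_univ {i, k}), Finset.sum_pair hik]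
      · simp [hik, hik']
        ring
      · intro x _ hx; simp at hx; simp [hx]
      · intro x _ hx; simp at hx; simp [hx]
      · intro x _ hx; simp at hx; simp [hx]
    have k1 := key 1
    have k2 := key (-1)
    rw [one_smul] at k1
    rw [neg_one_smul, ← sub_eq_add_neg] at k2
    rw [k1, k2]
    linear_combination (-D (b k) i * (ε k * ε k) - ε i * ε k * D (b i) i) * e2 i - D (b k) i * e2 k

lemma uniq {n m : ℕ} {U : Set (Fin n → ℝ)} (hUopen : IsOpen U) (hUconn : IsConnected U)
    (a : Fin m → Fin n → Fin m → (Fin n → ℝ) → ℝ) (ha : ∀ j s l, ContinuousOn (a j s l) U)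
    (ρ : (Fin n → ℝ) → (Fin m → ℝ)) (hρ : DifferentiableOn ℝ ρ U)
    (h : ∀ x ∈ U, ∀ j s, fderiv ℝ ρ x (Pi.single s 1) j = ∑ l, a j s l x * ρ x l)
    (x0 : Fin n → ℝ) (hx0 : x0 ∈ U) (h0 : ρ x0 = 0) : ∀ x ∈ U, ρ x = 0 := by
  have hd : ∀ x ∈ U, DifferentiableAt ℝ ρ x := fun x hx =>
    (hρ x hx).differentiableAt (hUopen.mem_nhds hx)
  let G : (Fin n → ℝ) → ℝ := fun x => ∑ j, ∑ s, ∑ l, |a j s l x|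
  have hG : ContinuousOn G U := by
    refine continuousOn_finsetSum _ fun j _ => continuousOn_finsetSum _ fun s _ =>
      continuousOn_finsetSum _ fun l _ => (ha j s l).abs
  have hG0 : ∀ x, 0 ≤ G x := fun x => by positivity
  have hbd : ∀ x ∈ U, ∀ w, ‖fderiv ℝ ρ x w‖ ≤ G x * ‖w‖ * ‖ρ x‖ := by
    intro x hx w
    rw [pi_norm_le_iff_of_nonneg (mul_nonneg (mul_nonneg (hG0 x) (norm_nonneg _)) (norm_nonneg _))]
    intro j
    have h3 : fderiv ℝ ρ x w j = ∑ s, w s * ∑ l, a j s l x * ρ x l := by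
      conv_lhs => rw [pi_eq_sum_univ' w]
      rw [map_sum, Finset.sum_apply]
      refine Finset.sum_congr rfl fun s _ => ?_
      rw [map_smul, Pi.smul_apply, smul_eq_mul, ← h x hx]
    rw [h3]
    calc _ ≤ ∑ s, ∑ l, |a j s l x| * ‖w‖ * ‖ρ x‖ := by
            refine (norm_sum_le _ _).trans (Finset.sum_le_sum fun s _ => ?_)
            rw [Finset.mul_sum]
            refine (norm_sum_le _ _).trans (Finset.sum_le_sum fun l _ => ?_)
            rw [norm_mul, norm_mul, Real.norm_eq_abs (a j s l x)]
            have h1 := norm_le_pi_norm w s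
            have h2 := norm_le_pi_norm (ρ x) l
            calc _ ≤ ‖w‖ * (|a j s l x| * ‖ρ x‖) := by gcongr
              _ = _ := by ring
      _ = (∑ s, ∑ l, |a j s l x|) * ‖w‖ * ‖ρ x‖ := by simp only [Finset.sum_mul]
      _ ≤ _ := by
            gcongr
            exact Finset.single_le_sum (f := fun j => ∑ s, ∑ l, |a j s l x|)
              (fun j _ => by positivity) (Finset.mem_univ j)
  let Z : Set (Fin n → ℝ) := {x | x ∈ U ∧ ρ x = 0}
  have hZo : IsOpen Z := by
    rw [Metric.isOpen_iff]
    rintro x ⟨hx, hx0⟩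
    obtain ⟨r, hr, hrU⟩ := Metric.nhds_basis_closedBall.mem_iff.1 (hUopen.mem_nhds hx)
    obtain ⟨C, hC⟩ := (isCompact_closedBall x r).bddAbove_image (hG.mono hrU)
    refine ⟨r, hr, fun y hy => ?_⟩
    have hseg : ∀ t ∈ Set.Icc (0:ℝ) 1, x + t • (y - x) ∈ Metric.closedBall x r := by
      intro t ht
      exact (convex_closedBall x r).add_smul_sub_mem (Metric.mem_closedBall_self hr.le)
        (Metric.ball_subset_closedBall hy) ht
    have hder : ∀ t ∈ Set.Icc (0:ℝ) 1, HasDerivAt (fun t : ℝ => ρ (x + t • (y - x)))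
        (fderiv ℝ ρ (x + t • (y - x)) (y - x)) t := by
      intro t ht
      have h1 : HasDerivAt (fun t : ℝ => x + t • (y - x)) (y - x) t := by
        simpa using ((hasDerivAt_id t).smul_const (y - x)).const_add x
      exact (hd _ (hrU (hseg t ht))).hasFDerivAt.comp_hasDerivAt t h1
    have := norm_le_gronwallBound_of_norm_deriv_right_le
      (f := fun t : ℝ => ρ (x + t • (y - x)))
      (f' := fun t => fderiv ℝ ρ (x + t • (y - x)) (y - x))
      (δ := 0) (K := C * ‖y - x‖) (ε := 0) (a := 0) (b := 1)
      (fun t ht => (hder t ht).continuousAt.continuousWithinAt)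
      (fun t ht => (hder t ⟨ht.1, ht.2.le⟩).hasDerivWithinAt)
      (by simp [hx0])
      (fun t ht => by
        have ht' := hseg t ⟨ht.1, ht.2.le⟩
        refine (hbd _ (hrU ht') _).trans ?_
        rw [add_zero]
        have := hC (Set.mem_image_of_mem G ht')
        gcongr) 1 ⟨zero_le_one, le_rfl⟩
    rw [gronwallBound_ε0_δ0] at this
    refine ⟨hrU (Metric.ball_subset_closedBall hy), ?_⟩
    simpa using this
  have := hUconn.isPreconnected.subset_of_closure_inter_subset hZo ⟨x0, hx0, hx0, h0⟩ (by
    rintro x ⟨hx, hxU⟩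
    refine ⟨hxU, ?_⟩
    have hc := (hd x hxU).continuousAt
    have := hc.continuousWithinAt.mem_closure (s := Z) (t := {0}) hx (fun y hy => hy.2)
    simpa using this)
  exact fun x hx => (this hx).2

/-- given a smooth pointwise linearly independent frame `v_1, …, v_n` on a
connected open set `U ⊆ ℝⁿ`, signs `ε_i ∈ {−1,1}`, and a surjective block map
`b : {1,…,n} → {1,…,m}`, set `V_j(x,p) = ∑_{i : b i = j} ε_i ⟨v_i(x), p⟩²` and
`H = ½ ∑_j V_j`. Then the smooth maps `ρ : U → ℝᵐ` such that
`I_ρ(x,p) = ∑_j ρ_j(x) V_j(x,p)` Poisson-commutes with `H` on `U × ℝⁿ` form a real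
vector space of dimension at most `m` (realised as a submodule of the functions
`U → ℝᵐ`, a function on `U` being the restriction of any total map agreeing with it). -/
theorem stmt8 (n m : ℕ) (hn : 1 ≤ n) (hm : 1 ≤ m)
    (U : Set (Fin n → ℝ)) (hUopen : IsOpen U) (hUconn : IsConnected U)
    (v : Fin n → (Fin n → ℝ) → (Fin n → ℝ))
    (hvsmooth : ∀ i, ContDiffOn ℝ (⊤ : ℕ∞) (v i) U)
    (hvindep : ∀ x ∈ U, LinearIndependent ℝ (fun i => v i x))
    (ε : Fin n → ℝ) (hε : ∀ i, ε i = 1 ∨ ε i = -1)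
    (b : Fin n → Fin m) (hb : Function.Surjective b)
    (V : Fin m → (Fin n → ℝ) × (Fin n → ℝ) → ℝ)
    (hV : ∀ j, V j = fun z => ∑ i ∈ Finset.univ.filter (fun i => b i = j),
      ε i * (∑ s : Fin n, v i z.1 s * z.2 s) ^ 2)
    (H : (Fin n → ℝ) × (Fin n → ℝ) → ℝ)
    (hH : H = fun z => (1 / 2 : ℝ) * ∑ j : Fin m, V j z) :
    ∃ Sol : Submodule ℝ (↥U → (Fin m → ℝ)),
      (Sol : Set (↥U → (Fin m → ℝ)))
        = {f | ∃ ρ : (Fin n → ℝ) → (Fin m → ℝ), ContDiffOn ℝ (⊤ : ℕ∞) ρ U ∧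
            (∀ z : (Fin n → ℝ) × (Fin n → ℝ), z.1 ∈ U →
              poisson H (fun w => ∑ j : Fin m, ρ w.1 j * V j w) z = 0) ∧
            ∀ x : U, f x = ρ ↑x} ∧
      Module.rank ℝ Sol ≤ (m : Cardinal) := by
  have hopen : IsOpen (U ×ˢ (Set.univ : Set (Fin n → ℝ))) := hUopen.prod isOpen_univ
  have hmem : ∀ z : (Fin n → ℝ) × (Fin n → ℝ), z.1 ∈ U → z ∈ U ×ˢ (Set.univ : Set (Fin n → ℝ)) :=
    fun z hz => ⟨hz, trivial⟩
  have hVsm : ∀ j, ContDiffOn ℝ (⊤ : ℕ∞) (V j) (U ×ˢ Set.univ) := by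
    intro j
    rw [hV j]
    refine ContDiffOn.sum fun i _ => contDiffOn_const.mul (ContDiffOn.pow ?_ 2)
    refine ContDiffOn.sum fun s _ => ContDiffOn.mul ?_ ?_
    · exact (contDiffOn_pi.1 (hvsmooth i) s).comp contDiff_fst.contDiffOn (fun z hz => hz.1)
    · exact ((contDiff_apply ℝ ℝ s).comp contDiff_snd).contDiffOn
  have hHsm : ContDiffOn ℝ (⊤ : ℕ∞) H (U ×ˢ Set.univ) := by
    rw [hH]
    exact contDiffOn_const.mul (ContDiffOn.sum fun j _ => hVsm j)
  have hVd : ∀ j z, z.1 ∈ U → DifferentiableAt ℝ (V j) z := fun j z hz =>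
    ((hVsm j).differentiableOn (by simp) z (hmem z hz)).differentiableAt
      (hopen.mem_nhds (hmem z hz))
  have hHd : ∀ z, z.1 ∈ U → DifferentiableAt ℝ H z := fun z hz =>
    (hHsm.differentiableOn (by simp) z (hmem z hz)).differentiableAt
      (hopen.mem_nhds (hmem z hz))
  have hW : ∀ z : (Fin n → ℝ) × (Fin n → ℝ), z.1 ∈ U →
      (fun s => fderiv ℝ H z (0, Pi.single s 1))
        = ∑ i, (ε i * ∑ s : Fin n, v i z.1 s * z.2 s) • v i z.1 := by
    intro z hz
    ext t
    have h1 : HasFDerivAt (fun p => H (z.1, p))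
        ((fderiv ℝ H z).comp (ContinuousLinearMap.inr ℝ (Fin n → ℝ) (Fin n → ℝ))) z.2 :=
      HasFDerivAt.comp (g := H) z.2 (hHd z hz).hasFDerivAt (hasFDerivAt_prodMk_right z.1 z.2)
    let L : Fin n → (Fin n → ℝ) →L[ℝ] ℝ := fun i =>
      ∑ s, v i z.1 s • ContinuousLinearMap.proj (R := ℝ) (φ := fun _ : Fin n => ℝ) s
    have hL : ∀ i p, L i p = ∑ s, v i z.1 s * p s := by
      intro i p
      simp [L]
    have h2 : (fun p => H (z.1, p)) = fun p => (1/2 : ℝ) * ∑ i, ε i * (L i p)^2 := by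
      funext p
      rw [hH]
      simp only [hV, hL]
      rw [Finset.sum_fiberwise Finset.univ b]
    have h3 : HasFDerivAt (fun p => (1/2 : ℝ) * ∑ i, ε i * (L i p)^2) _ z.2 :=
      (HasFDerivAt.fun_sum (u := Finset.univ)
        (fun i _ => ((L i).hasFDerivAt.pow 2).const_mul (ε i))).const_mul (1/2 : ℝ)
    rw [h2] at h1
    have h4 := congrArg (fun T => T (Pi.single t 1)) (h1.unique h3)
    simp only [ContinuousLinearMap.comp_apply, ContinuousLinearMap.inr_apply] at h4
    rw [h4, Finset.sum_apply]
    simp only [_root_.smul_apply, _root_.sum_apply, Finset.smul_sum]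
    refine Finset.sum_congr rfl fun i _ => ?_
    have h5 : L i (Pi.single t 1) = v i z.1 t := by
      rw [hL]; simp [Pi.single_apply]
    simp [h5, hL]
    ring
  have hexp : ∀ ρ : (Fin n → ℝ) → (Fin m → ℝ), ContDiffOn ℝ (⊤ : ℕ∞) ρ U →
      ∀ z : (Fin n → ℝ) × (Fin n → ℝ), z.1 ∈ U →
      poisson H (fun w => ∑ j : Fin m, ρ w.1 j * V j w) z
        = ∑ j, (ρ z.1 j * poisson H (V j) z - V j z * fderiv ℝ ρ z.1
          (∑ i, (ε i * ∑ s : Fin n, v i z.1 s * z.2 s) • v i z.1) j) := by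
    intro ρ hρ z hz
    rw [poisson_expand (fun j => hVd j z hz)
      ((hρ.differentiableOn (by simp) z.1 hz).differentiableAt (hUopen.mem_nhds hz)), hW z hz]
  have hρd : ∀ ρ : (Fin n → ℝ) → (Fin m → ℝ), ContDiffOn ℝ (⊤ : ℕ∞) ρ U →
      ∀ x ∈ U, DifferentiableAt ℝ ρ x := fun ρ hρ x hx =>
    (hρ.differentiableOn (by simp) x hx).differentiableAt (hUopen.mem_nhds hx)
  -- continuity of the brackets
  have hBc : ∀ j, ContinuousOn (poisson H (V j)) (U ×ˢ Set.univ) := by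
    intro j
    have c1 := hHsm.continuousOn_fderiv_of_isOpen hopen (by simp)
    have c2 := (hVsm j).continuousOn_fderiv_of_isOpen hopen (by simp)
    unfold poisson
    exact continuousOn_finsetSum _ fun i _ =>
      ((c1.clm_apply continuousOn_const).mul (c2.clm_apply continuousOn_const)).sub
        ((c1.clm_apply continuousOn_const).mul (c2.clm_apply continuousOn_const))
  -- the inverse matrix
  let M : (Fin n → ℝ) → Matrix (Fin n) (Fin n) ℝ := fun x => Matrix.of (fun i => v i x)
  have hMu : ∀ x ∈ U, IsUnit (M x).det := by
    intro x hx
    rw [← Matrix.isUnit_iff_isUnit_det, ← Matrix.linearIndependent_rows_iff_isUnit]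
    exact hvindep x hx
  have hMc : ContinuousOn M U :=
    continuousOn_pi.2 fun i => (hvsmooth i).continuousOn
  have hNc : ContinuousOn (fun x => (M x)⁻¹) U := by
    have e : (fun x => (M x)⁻¹) = fun x => ((M x).det)⁻¹ • (M x).adjugate := by
      funext x
      rw [Matrix.inv_def, Ring.inverse_eq_inv']
    rw [e]
    refine ContinuousOn.smul (ContinuousOn.inv₀ ?_ fun x hx => (hMu x hx).ne_zero) ?_
    · exact (continuous_id.matrix_det).comp_continuousOn hMc
    · exact (continuous_id.matrix_adjugate).comp_continuousOn hMc
  let P : (Fin n → ℝ) → (Fin n → ℝ) → (Fin n → ℝ) := fun q x => (M x)⁻¹.mulVec q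
  have hPc : ∀ q, ContinuousOn (P q) U := by
    intro q
    have : Continuous (fun A : Matrix (Fin n) (Fin n) ℝ => A.mulVec q) :=
      continuous_id.matrix_mulVec continuous_const
    exact this.comp_continuousOn hNc
  have hP : ∀ q, ∀ x ∈ U, ∀ i, ∑ s, v i x s * P q x s = q i := by
    intro q x hx i
    have : (M x).mulVec (P q x) = q := by
      simp only [P]
      rw [Matrix.mulVec_mulVec, Matrix.mul_nonsing_inv _ (hMu x hx), Matrix.one_mulVec]
    exact congrFun this i
  have hBP : ∀ q l, ContinuousOn (fun x => poisson H (V l) (x, P q x)) U := fun q l =>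
    (hBc l).comp (continuousOn_id.prodMk (hPc q)) (fun x hx => ⟨hx, trivial⟩)
  choose k hk using hb
  let A : Fin n → Fin n → Fin m → (Fin n → ℝ) → ℝ := fun i k l x =>
    (if i = k then 1/3 else ε i * ε k) *
      ((poisson H (V l) (x, P (Pi.single i 1 + Pi.single k 1) x)
        + poisson H (V l) (x, P (Pi.single i 1 - Pi.single k 1) x))/2
        - poisson H (V l) (x, P (Pi.single i 1) x))
  have hA : ∀ i k l, ContinuousOn (A i k l) U := fun i k l =>
    continuousOn_const.mul ((((hBP _ l).add (hBP _ l)).div_const 2).sub (hBP _ l))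
  let a : Fin m → Fin n → Fin m → (Fin n → ℝ) → ℝ := fun j s l x =>
    ∑ i, (M x)⁻¹ s i * A i (k j) l x
  have ha : ∀ j s l, ContinuousOn (a j s l) U := fun j s l =>
    continuousOn_finsetSum _ fun i _ =>
      (continuousOn_pi.1 (continuousOn_pi.1 hNc s) i).mul (hA i (k j) l)
  have hmain : ∀ ρ : (Fin n → ℝ) → (Fin m → ℝ), ContDiffOn ℝ (⊤ : ℕ∞) ρ U →
      (∀ z : (Fin n → ℝ) × (Fin n → ℝ), z.1 ∈ U →
        poisson H (fun w => ∑ j : Fin m, ρ w.1 j * V j w) z = 0) →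
      ∀ x ∈ U, ∀ j s, fderiv ℝ ρ x (Pi.single s 1) j = ∑ l, a j s l x * ρ x l := by
    intro ρ hρ hsol x hx j s
    have hD := alg_id ε hε b (fun j i => fderiv ℝ ρ x (v i x) j)
      (fun q => ∑ l, ρ x l * poisson H (V l) (x, P q x)) (by
        intro q
        have h1 := hsol (x, P q x) hx
        rw [hexp ρ hρ _ hx, Finset.sum_sub_distrib, sub_eq_zero] at h1
        simp only at h1
        rw [h1]
        refine Finset.sum_congr rfl fun j _ => ?_
        rw [hV j]
        simp only [hP q x hx, map_sum, map_smul, Finset.sum_apply, Pi.smul_apply, smul_eq_mul])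
    have hs : (Pi.single s 1 : Fin n → ℝ) = ∑ i, (M x)⁻¹ s i • v i x := by
      have h1 := Matrix.nonsing_inv_mul _ (hMu x hx)
      ext t
      have h2 := congrFun (congrFun h1 s) t
      rw [Matrix.mul_apply, Matrix.one_apply] at h2
      rw [Finset.sum_apply, Pi.single_apply]
      simp only [Pi.smul_apply, smul_eq_mul, eq_comm (a := t)]
      exact h2.symm
    rw [hs, map_sum, Finset.sum_apply]
    simp only [a, Finset.sum_mul]
    rw [Finset.sum_comm]
    refine Finset.sum_congr rfl fun i _ => ?_
    rw [map_smul, Pi.smul_apply, smul_eq_mul]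
    have h3 := hD i (k j)
    simp only [hk] at h3
    rw [h3, ← Finset.sum_add_distrib, Finset.sum_div, ← Finset.sum_sub_distrib, Finset.mul_sum,
      Finset.mul_sum]
    refine Finset.sum_congr rfl fun l _ => ?_
    simp only [A]
    ring
  let Sol : Submodule ℝ (↥U → (Fin m → ℝ)) :=
    { carrier := {f | ∃ ρ : (Fin n → ℝ) → (Fin m → ℝ), ContDiffOn ℝ (⊤ : ℕ∞) ρ U ∧
            (∀ z : (Fin n → ℝ) × (Fin n → ℝ), z.1 ∈ U →
              poisson H (fun w => ∑ j : Fin m, ρ w.1 j * V j w) z = 0) ∧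
            ∀ x : U, f x = ρ ↑x}
      add_mem' := by
        rintro f g ⟨ρ, h1, h2, h3⟩ ⟨σ, h4, h5, h6⟩
        refine ⟨ρ + σ, h1.add h4, fun z hz => ?_, fun x => by simp [h3, h6]⟩
        have e1 := h2 z hz
        have e2 := h5 z hz
        rw [hexp _ h1 z hz] at e1
        rw [hexp _ h4 z hz] at e2
        rw [hexp (ρ + σ) (h1.add h4) z hz, fderiv_add (hρd _ h1 _ hz) (hρd _ h4 _ hz)]
        refine Eq.trans ?_ ((congrArg₂ (· + ·) e1 e2).trans (add_zero 0))
        simp only [← Finset.sum_add_distrib]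
        refine Finset.sum_congr rfl fun j _ => ?_
        simp only [Pi.add_apply, ContinuousLinearMap.add_apply]
        ring
      zero_mem' := by
        refine ⟨0, contDiffOn_const, fun z hz => ?_, fun x => rfl⟩
        rw [hexp 0 contDiffOn_const z hz]
        simp
      smul_mem' := by
        rintro c f ⟨ρ, h1, h2, h3⟩
        refine ⟨c • ρ, h1.const_smul c, fun z hz => ?_, fun x => by simp [h3]⟩
        have e1 := h2 z hz
        rw [hexp _ h1 z hz] at e1
        rw [hexp (c • ρ) (h1.const_smul c) z hz, fderiv_const_smul (hρd _ h1 _ hz), ← mul_zero c, ← e1,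
          Finset.mul_sum]
        refine Finset.sum_congr rfl fun j _ => ?_
        simp only [Pi.smul_apply, _root_.smul_apply, smul_eq_mul]
        ring }
  refine ⟨Sol, rfl, ?_⟩
  obtain ⟨x0, hx0⟩ := hUconn.nonempty
  let T : Sol →ₗ[ℝ] (Fin m → ℝ) := (LinearMap.proj (⟨x0, hx0⟩ : U)).comp Sol.subtype
  have hT : Function.Injective T := by
    rw [← LinearMap.ker_eq_bot, LinearMap.ker_eq_bot']
    rintro ⟨f, ρ, h1, h2, h3⟩ hf
    have hf' : ρ x0 = 0 := by
      rw [← h3 ⟨x0, hx0⟩]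
      exact hf
    have := uniq hUopen hUconn a ha ρ (h1.differentiableOn (by simp)) (hmain ρ h1 h2) x0 hx0 hf'
    apply Subtype.ext
    funext x
    change f x = 0
    rw [h3 x, this x x.2]
  have := LinearMap.rank_le_of_injective T hT
  simpa using this
end
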